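/- Let g̃ be a geodesic line (or geodesic ray) in the universal cover S̃ of an e.s.c.s. S which does not contain any conical point and which projects to a non-closed geodesic in S. Then both the distance d_L from the image of g̃ to the set of conical points lying in the open half-plane to the left of g̃, and the corresponding distance d_R to the right, are equal to 0. -/

import Mathlib

/-!
Suppose that on one side `Ω` of `g` the conical points stay at distance at least `ε` from `g`.
The projection of `g` is then shown to be periodic, as follows.

*Flat half-strip.* A local isometry of the plane that develops `g` along the real axis, with `Ω`
above it, extends by a definite amount upwards and to the right (`Geo.extend`): away from the
conical points compactness gives charts of uniform size, and near a conical point the punctured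
cone is developed (`cone_develop`). A developed conical point above the axis would have a lift in
`Ω` close to `g`, one on the axis ahead would be hit by `g`, and one behind or below does no harm.
Iterating gives a flat half-strip immersed along `g` (`Geo.half_strip`).

*Periodicity of half-strips.* A half-strip `F` immersed in the regular part of `S` is periodic
(`strip_periodic`). By compactness its translates to the right converge, along an ultrafilter, to
a full strip, and far translates of `F` differ from the limit by motions `z ↦ u z + c` close to the
identity. If `u` is not real, `F` drifts slowly across the limit strip, and limits taken further
along live on a strip that is wider by a definite amount (`SubLimit.widen`); this cannot go on, as
immersed flat discs have bounded radius when there is a conical point (`no_big_disc`). If `u` is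
real, two translates of `F` differ by a translation, which has to be horizontal
(`no_skew_period`), so `F` is periodic.

*Existence of a conical point.* Without conical points, developing gives a covering of `S` by the
plane whose deck transformations act freely by motions; squares of such motions are translations
and commute, while `π₁ S` contains a free group of rank two (`conical_nonempty`).

Finally, periodicity passes from the half-strip to its boundary `g` by continuity, and then to all
of `g` by uniqueness of local isometries (`LI.uniq`).
-/

open Metric Filter Topology Set

noncomputable section

namespace ESCSPaper

/-! ### The standard cone -/

/-- Angular distance between `a b : ℝ` regarded as angles modulo `θ`. -/
def angDist (θ a b : ℝ) : ℝ := sInf {d : ℝ | ∃ k : ℤ, d = |a - b + θ * k|}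

/-- The distance on the standard cone `C(v, θ)` of cone angle `θ`, written in polar
coordinates `(r, t)` around the vertex `v = (0, _)`; it is induced by the length
element `ds² = dr² + r² dt²`. -/
def coneDist (θ : ℝ) (x y : ℝ × ℝ) : ℝ :=
  if angDist θ x.2 y.2 ≤ Real.pi then
    Real.sqrt (x.1 ^ 2 + y.1 ^ 2 - 2 * x.1 * y.1 * Real.cos (angDist θ x.2 y.2))
  else x.1 + y.1

/-! ### Euclidean surfaces with conical singularities -/

/-- A Euclidean surface with conical singularities (e.s.c.s.): a closed (compact,
connected) surface of genus `≥ 2` (encoded by the fundamental group containing a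
free group of rank two, which for closed surfaces characterises negative Euler
characteristic, i.e. genus `≥ 2` in the orientable case), equipped with a length
metric which is locally Euclidean away from a finite set of conical points, each of
cone angle `> 2π`. -/
structure ESCS (S : Type) [MetricSpace S] : Type where
  compact : CompactSpace S
  connected : ConnectedSpace S
  /-- `S` is a surface: every point has a neighborhood homeomorphic to an open planar set. -/
  surface : ∀ x : S, ∃ U : Set S, U ∈ nhds x ∧ ∃ V : Set (ℝ × ℝ), IsOpen V ∧
    Nonempty (↥U ≃ₜ ↥V)
  /-- genus at least two: the fundamental group contains a free group of rank two. -/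
  genus_ge_two : ∃ x : S, ∃ ι : FreeGroup Bool →* FundamentalGroup S x, Function.Injective ι
  /-- the metric of `S` is a length metric. -/
  length_metric : ∀ x y : S, ∀ ε > (0:ℝ), ∃ γ : ℝ → S, Continuous γ ∧ γ 0 = x ∧ γ 1 = y ∧
    eVariationOn γ (Set.Icc 0 1) ≤ ENNReal.ofReal (dist x y + ε)
  /-- the (finitely many) conical points. -/
  conical : Finset S
  /-- the cone angle at each conical point. -/
  angle : S → ℝ
  angle_gt : ∀ s ∈ conical, 2 * Real.pi < angle s
  /-- every regular point has a neighborhood isometric to a Euclidean disk. -/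
  euclidean_at : ∀ x : S, x ∉ conical → ∃ ε > (0:ℝ), ∃ f : S → EuclideanSpace ℝ (Fin 2),
    (∀ y ∈ ball x ε, ∀ z ∈ ball x ε, dist (f y) (f z) = dist y z) ∧
    f '' ball x ε = ball (f x) ε
  /-- every conical point `s` has a neighborhood isometric to a neighborhood of the
  vertex of the standard cone `C(v, angle s)`. -/
  cone_at : ∀ s ∈ conical, ∃ ε > (0:ℝ), ∃ f : S → ℝ × ℝ,
    f s = (0, 0) ∧
    (∀ y ∈ ball s ε, ∀ z ∈ ball s ε, coneDist (angle s) (f y) (f z) = dist y z) ∧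
    f '' ball s ε = insert ((0:ℝ), (0:ℝ)) (Set.Ioo 0 ε ×ˢ Set.Ico 0 (angle s))

/-! ### Geodesics -/

/-- A local isometric map `ℝ → S`, i.e. a (unit speed, bi-infinite) geodesic of `S`. -/
def IsLocalGeodesic {S : Type} [MetricSpace S] (g : ℝ → S) : Prop :=
  ∀ t : ℝ, ∃ ε > (0:ℝ), ∀ s u : ℝ, |s - t| < ε → |u - t| < ε → dist (g s) (g u) = |s - u|

/-- Two periodic maps (closed curves) `ℝ → S` are freely homotopic: for suitable
periods, the corresponding loops (parametrized with period `1`) are homotopic through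
closed loops. -/
def FreelyHomotopic {S : Type} [TopologicalSpace S] (g h : ℝ → S) : Prop :=
  ∃ T₁ > (0:ℝ), ∃ T₂ > (0:ℝ), Function.Periodic g T₁ ∧ Function.Periodic h T₂ ∧
    ∃ F : ℝ → ℝ → S, Continuous (Function.uncurry F) ∧
      (∀ s : ℝ, F 0 s = g (T₁ * s)) ∧ (∀ s : ℝ, F 1 s = h (T₂ * s)) ∧
      ∀ u s : ℝ, F u (s + 1) = F u s

/-- `g` is a closed geodesic of `S` which is the unique closed geodesic in its free
homotopy class (up to re-parametrization). -/
def UniqueClosedGeodesic {S : Type} [MetricSpace S] (g : ℝ → S) : Prop :=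
  IsLocalGeodesic g ∧ (∃ T > (0:ℝ), Function.Periodic g T) ∧
    ∀ h : ℝ → S, IsLocalGeodesic h → (∃ T > (0:ℝ), Function.Periodic h T) →
      FreelyHomotopic g h → ∃ a : ℝ, ∀ t : ℝ, h t = g (t + a)

/-- `c'` is a parallel translate of the geodesic line `c` (the two lines bound a flat
strip): `c'` is a geodesic line which stays at constant distance from `c`. -/
def ParallelTranslate {X : Type} [MetricSpace X] (c c' : ℝ → X) : Prop :=
  Isometry c' ∧ ∃ d : ℝ, ∀ t : ℝ, dist (c' t) (c t) = d

/-! ### The universal cover and its deck group -/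

/-- The universal cover `X` of `S`, with the lifted metric: a simply connected space
together with a covering projection `p : X → S` which is a local isometry. -/
structure UnivCover (S X : Type) [MetricSpace S] [MetricSpace X] : Type where
  p : X → S
  covering : IsCoveringMap p
  localIsom : ∀ x : X, ∃ ε > (0:ℝ), ∀ y ∈ ball x ε, ∀ z ∈ ball x ε,
    dist (p y) (p z) = dist y z
  simplyConnected : SimplyConnectedSpace X

/-- The deck (covering) group `Γ ≅ π₁(S)` of the universal cover: the group of
isometries of `X` commuting with the projection. -/
def deck {S X : Type} [MetricSpace S] [MetricSpace X] (cov : UnivCover S X) :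
    Subgroup (X ≃ᵢ X) where
  carrier := {φ : X ≃ᵢ X | ∀ x : X, cov.p (φ x) = cov.p x}
  one_mem' := fun _ => rfl
  mul_mem' := by
    intro φ ψ hφ hψ x
    exact (hφ (ψ x)).trans (hψ x)
  inv_mem' := by
    intro φ hφ x
    have h := hφ (φ⁻¹ x)
    have h2 : φ (φ⁻¹ x) = x := by simp
    rw [h2] at h
    exact h.symm

/-! ### The visual boundary -/

/-- A geodesic ray: a map `ℝ → X` which is isometric on `[0, ∞)`. -/
def IsRay {X : Type} [MetricSpace X] (r : ℝ → X) : Prop :=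
  ∀ s t : ℝ, 0 ≤ s → 0 ≤ t → dist (r s) (r t) = |s - t|

/-- The space of geodesic rays of `X`, with the topology of pointwise convergence
(which on rays agrees with uniform convergence on compact sets). -/
abbrev RaySp (X : Type) [MetricSpace X] : Type := {r : ℝ → X // IsRay r}

/-- Two rays are asymptotic if they stay at bounded distance. -/
instance raySetoid (X : Type) [MetricSpace X] : Setoid (RaySp X) where
  r r₁ r₂ := ∃ C : ℝ, ∀ t : ℝ, 0 ≤ t → dist (r₁.1 t) (r₂.1 t) ≤ C
  iseqv := by
    refine ⟨fun r => ⟨0, fun t _ => by simp⟩, ?_, ?_⟩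
    · rintro a b ⟨C, h⟩
      exact ⟨C, fun t ht => by rw [dist_comm]; exact h t ht⟩
    · rintro a b c ⟨C₁, h₁⟩ ⟨C₂, h₂⟩
      exact ⟨C₁ + C₂, fun t ht =>
        (dist_triangle (a.1 t) (b.1 t) (c.1 t)).trans (add_le_add (h₁ t ht) (h₂ t ht))⟩

/-- The visual boundary `∂X̃`: asymptoty classes of geodesic rays, with the quotient
topology. -/
abbrev Bdry (X : Type) [MetricSpace X] : Type := Quotient (raySetoid X)

/-- The point of the visual boundary determined by the positive end of a geodesic
line `g`, i.e. `g(+∞)`. -/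
def endPlus {X : Type} [MetricSpace X] (g : ℝ → X) (hg : Isometry g) : Bdry X :=
  ⟦⟨g, fun s t _ _ => by rw [hg.dist_eq, Real.dist_eq]⟩⟧

/-- The point of the visual boundary determined by the negative end of a geodesic
line `g`, i.e. `g(−∞)`. -/
def endMinus {X : Type} [MetricSpace X] (g : ℝ → X) (hg : Isometry g) : Bdry X :=
  ⟦⟨fun t => g (-t), fun s t _ _ => by
      rw [hg.dist_eq, Real.dist_eq, show -s - -t = -(s - t) by ring, abs_neg]⟩⟧

/-- The induced action of an isometry of `X` on the visual boundary. -/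
def bdryMap {X : Type} [MetricSpace X] (φ : X ≃ᵢ X) : Bdry X → Bdry X :=
  Quotient.map
    (fun r => ⟨fun t => φ (r.1 t), fun s t hs ht => by
      rw [φ.dist_eq]; exact r.2 s t hs ht⟩)
    (by
      rintro r₁ r₂ ⟨C, h⟩
      exact ⟨C, fun t ht => by
        simpa only [φ.dist_eq] using h t ht⟩)

/-- A sequence of points of `X` converges to the boundary point `ξ` (in the cone
topology): the geodesic segments from a fixed origin to the points converge (uniformly
on compacta, equivalently pointwise) to a ray representing `ξ`, while their lengths
tend to infinity. -/
def TendstoBdry {X : Type} [MetricSpace X] (x : ℕ → X) (ξ : Bdry X) : Prop :=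
  ∃ r : RaySp X, ⟦r⟧ = ξ ∧
    ∃ (σ : ℕ → ℝ → X) (d : ℕ → ℝ),
      (∀ n : ℕ, 0 ≤ d n ∧ σ n 0 = r.1 0 ∧ σ n (d n) = x n ∧
        ∀ s t : ℝ, s ∈ Set.Icc 0 (d n) → t ∈ Set.Icc 0 (d n) →
          dist (σ n s) (σ n t) = |s - t|) ∧
      Tendsto d atTop atTop ∧
      ∀ t : ℝ, 0 ≤ t → Tendsto (fun n => σ n t) atTop (nhds (r.1 t))

/-- The set `F_h` of boundary points fixed by some nontrivial (hyperbolic) deck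
transformation. -/
def Fh {S X : Type} [MetricSpace S] [MetricSpace X] (cov : UnivCover S X) :
    Set (Bdry X) :=
  {ξ : Bdry X | ∃ φ ∈ deck cov, φ ≠ 1 ∧ bdryMap φ ξ = ξ}

/-! ### Busemann functions -/

/-- The Busemann function of a geodesic ray: `b_r(y) = lim_{t→∞} (d(y, r t) − t)`
(the function is nonincreasing in `t` and bounded below, so the limit is the inf). -/
def busemannFun {X : Type} [MetricSpace X] (r : RaySp X) (y : X) : ℝ :=
  ⨅ t : Set.Ici (0:ℝ), (dist y (r.1 t.1) - t.1)

/-- The generalized Busemann function `α(ξ, x, x') = "d(x',ξ) − d(x,ξ)"` for a boundary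
point `ξ`: the difference of Busemann functions of a ray representing `ξ` (in a Hadamard
space this does not depend on the chosen representative). -/
def genBusemann {X : Type} [MetricSpace X] (ξ : Bdry X) (x y : X) : ℝ :=
  busemannFun (Quotient.out ξ) y - busemannFun (Quotient.out ξ) x

/-! ### The space of geodesics and the geodesic flow -/

/-- `GS`: the space of (bi-infinite, locally isometric) geodesics of `S`, topologized
as a subspace of `C(ℝ, S)` with the compact-open topology. -/
abbrev GeodSp (S : Type) [MetricSpace S] : Type := {g : C(ℝ, S) // IsLocalGeodesic ⇑g}

/-- The geodesic flow: `(t · g)(s) = g(s + t)`. -/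
def geodFlow {S : Type} [MetricSpace S] (t : ℝ) (g : GeodSp S) : GeodSp S :=
  ⟨⟨fun s => g.1 (s + t), g.1.continuous.comp (continuous_id.add continuous_const)⟩, by
    intro u
    obtain ⟨ε, hε, h⟩ := g.2 (u + t)
    refine ⟨ε, hε, fun s v hs hv => ?_⟩
    have h1 : |s + t - (u + t)| < ε := by rwa [show s + t - (u + t) = s - u by ring]
    have h2 : |v + t - (u + t)| < ε := by rwa [show v + t - (u + t) = v - u by ring]
    have h3 := h (s + t) (v + t) h1 h2
    rwa [show s + t - (v + t) = s - v by ring] at h3⟩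

/-- The stable set `W^s(g)` of `g ∈ GS`: geodesics `h` admitting lifts to the universal
cover asymptotic to a lift of `g` (same point at `+∞`). -/
def WsGS {S X : Type} [MetricSpace S] [MetricSpace X] (cov : UnivCover S X)
    (g : GeodSp S) : Set (GeodSp S) :=
  {h : GeodSp S | ∃ (g' h' : ℝ → X) (hg : Isometry g') (hh : Isometry h'),
    (∀ t : ℝ, cov.p (g' t) = g.1 t) ∧ (∀ t : ℝ, cov.p (h' t) = h.1 t) ∧
    endPlus h' hh = endPlus g' hg}

/-- The strong stable set `W^ss(g)` of `g ∈ GS`: geodesics `h` admitting lifts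
asymptotic to a lift of `g` whose time-`0` points are equidistant from the common
point at infinity (the generalized Busemann function vanishes). -/
def WssGS {S X : Type} [MetricSpace S] [MetricSpace X] (cov : UnivCover S X)
    (g : GeodSp S) : Set (GeodSp S) :=
  {h : GeodSp S | ∃ (g' h' : ℝ → X) (hg : Isometry g') (hh : Isometry h'),
    (∀ t : ℝ, cov.p (g' t) = g.1 t) ∧ (∀ t : ℝ, cov.p (h' t) = h.1 t) ∧
    endPlus h' hh = endPlus g' hg ∧
    genBusemann (endPlus g' hg) (g' 0) (h' 0) = 0}

/-- `h` is `s_n`-mixing with `f`: for all neighborhoods `O ∋ h`, `U ∋ f`, eventually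
`s_n · O ∩ U ≠ ∅`. -/
def SnMixing {S : Type} [MetricSpace S] (s : ℕ → ℝ) (h f : GeodSp S) : Prop :=
  ∀ O U : Set (GeodSp S), IsOpen O → IsOpen U → h ∈ O → f ∈ U →
    ∀ᶠ n in atTop, (geodFlow (s n) '' O ∩ U).Nonempty

/-! ### Motions of the plane -/

section

/-- `f` preserves distances on `A`. -/
def IsoOn {Y Z : Type*} [MetricSpace Y] [MetricSpace Z] (f : Y → Z) (A : Set Y) : Prop :=
  ∀ a ∈ A, ∀ b ∈ A, dist (f a) (f b) = dist a b

lemma motion_form (Φ : ℂ ≃ᵢ ℂ) : ∃ a : ℂ, ‖a‖ = 1 ∧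
    ((∀ z, Φ z = a * z + Φ 0) ∨ (∀ z, Φ z = a * (starRingEnd ℂ) z + Φ 0)) := by
  obtain ⟨c, hc⟩ := linear_isometry_complex Φ.toRealLinearIsometryEquiv
  refine ⟨c, Circle.norm_coe c, ?_⟩
  rcases hc with hc | hc
  · left
    intro z
    have h := congrArg (fun f => f z) hc
    simp only [IsometryEquiv.toRealLinearIsometryEquiv_apply, rotation_apply] at h
    rw [← h]; ring
  · right
    intro z
    have h := congrArg (fun f => f z) hc
    simp only [IsometryEquiv.toRealLinearIsometryEquiv_apply, LinearIsometryEquiv.trans_apply,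
      rotation_apply, Complex.conjLIE_apply] at h
    rw [← h]; ring

/-- The orientation preserving motion `z ↦ a z + b`. -/
def rotMotion (a b : ℂ) (ha : ‖a‖ = 1) : ℂ ≃ᵢ ℂ :=
  ((rotation (⟨a, by simp [Submonoid.unitSphere, ha]⟩ : Circle)).toIsometryEquiv).trans
    (IsometryEquiv.addRight b)

@[simp] lemma rotMotion_apply (a b : ℂ) (ha : ‖a‖ = 1) (z : ℂ) :
    rotMotion a b ha z = a * z + b := rfl

/-- The translation by `b` of the plane. -/
abbrev tr (b : ℂ) : ℂ ≃ᵢ ℂ := IsometryEquiv.addRight b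

/-- Complex conjugation as a motion of the plane. -/
abbrev cj : ℂ ≃ᵢ ℂ := Complex.conjLIE.toIsometryEquiv

lemma cj_apply (z : ℂ) : cj z = (starRingEnd ℂ) z := rfl

lemma motion_ext {Φ Ψ : ℂ ≃ᵢ ℂ} {u : ℂ} (h : (Φ : ℂ → ℂ) =ᶠ[𝓝 u] Ψ) : Φ = Ψ := by
  obtain ⟨r, hr, hb⟩ := Metric.eventually_nhds_iff.1 h
  have key : ∀ (Φ : ℂ ≃ᵢ ℂ) (w : ℂ) (t : ℝ), Φ (u + t * w) = Φ u + t * (Φ w - Φ 0) := by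
    intro Φ w t
    obtain ⟨a, ha, h | h⟩ := motion_form Φ
    · rw [h, h u, h w]; ring
    · rw [h, h u, h w]; simp; ring
  have hu : Φ u = Ψ u := hb (by simpa using hr)
  have hlin : ∀ w, Φ w - Φ 0 = Ψ w - Ψ 0 := by
    intro w
    set t : ℝ := r / 2 / (‖w‖ + 1)
    have hw : 0 < ‖w‖ + 1 := by positivity
    have ht : 0 < t := by positivity
    have h1 : Φ (u + t * w) = Ψ (u + t * w) := by
      apply hb
      rw [dist_eq_norm]
      simp only [add_sub_cancel_left, norm_mul, Complex.norm_real, Real.norm_eq_abs,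
        abs_of_pos ht]
      have : t * (‖w‖ + 1) = r / 2 := by simp only [t]; field_simp
      nlinarith
    rw [key, key, hu] at h1
    have h2 := add_left_cancel h1
    exact mul_left_cancel₀ (by exact_mod_cast ht.ne') h2
  ext w : 1
  have h1 := hlin w
  have h2 := hlin u
  rw [hu] at h2
  have h3 : Φ 0 = Ψ 0 := by simpa using h2
  rw [h3] at h1
  simpa using h1

lemma norm_sub_sq_form (a b : ℂ) :
    ‖a - b‖ ^ 2 = (a.re - b.re) ^ 2 + (a.im - b.im) ^ 2 := by
  rw [← Complex.normSq_eq_norm_sq, Complex.normSq_apply]; simp; ring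

/-- A distance preserving map on a disc is the restriction of a motion of the plane. -/
lemma isoOn_ball_motion {f : ℂ → ℂ} {u : ℂ} {r : ℝ} (hr : 0 < r) (hf : IsoOn f (ball u r)) :
    ∃ Φ : ℂ ≃ᵢ ℂ, EqOn f Φ (ball u r) := by
  set s : ℝ := r / 2 with hs
  have hs0 : 0 < s := by positivity
  have hmem : ∀ z : ℂ, ‖z‖ < r → u + z ∈ ball u r := by
    intro z hz; simpa [dist_eq_norm] using hz
  have h0 : ‖(0:ℂ)‖ < r := by simpa using hr
  have h1 : ‖(s : ℂ)‖ < r := by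
    rw [Complex.norm_real, Real.norm_eq_abs, abs_of_pos hs0]; linarith
  have h2 : ‖(s * Complex.I : ℂ)‖ < r := by simpa using h1
  set φ : ℂ → ℂ := fun z => f (u + z) - f u with hφ
  have hiso : ∀ z w : ℂ, ‖z‖ < r → ‖w‖ < r → ‖φ z - φ w‖ = ‖z - w‖ := by
    intro z w hz hw
    have := hf _ (hmem z hz) _ (hmem w hw)
    rw [dist_eq_norm, dist_eq_norm] at this
    simpa [hφ] using this
  have hφ0 : φ 0 = 0 := by simp [hφ]
  have hn : ∀ z : ℂ, ‖z‖ < r → ‖φ z‖ = ‖z‖ := by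
    intro z hz; simpa [hφ0] using hiso z 0 hz h0
  set a : ℂ := φ s / s with ha
  have hsC : (s : ℂ) ≠ 0 := by exact_mod_cast hs0.ne'
  have ha1 : ‖a‖ = 1 := by
    rw [ha, norm_div, hn _ h1, div_self]; simpa using hs0.ne'
  have haa : (starRingEnd ℂ) a * a = 1 := by
    rw [mul_comm, Complex.mul_conj, Complex.normSq_eq_norm_sq, ha1]; simp
  set ψ : ℂ → ℂ := fun z => (starRingEnd ℂ) a * φ z with hψ
  have hψiso : ∀ z w : ℂ, ‖z‖ < r → ‖w‖ < r → ‖ψ z - ψ w‖ = ‖z - w‖ := by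
    intro z w hz hw
    rw [← hiso z w hz hw, hψ]
    simp only [← mul_sub, norm_mul, RCLike.norm_conj, ha1, one_mul]
  have hψs : ψ s = s := by
    have : φ s = a * s := by rw [ha]; field_simp
    rw [hψ]; simp only [this, ← mul_assoc, haa, one_mul]
  have hψ0 : ψ 0 = 0 := by simp [hψ, hφ0]
  have hφψ : ∀ z, φ z = a * ψ z := by
    intro z
    change φ z = a * ((starRingEnd ℂ) a * φ z)
    rw [← mul_assoc, mul_comm a, haa, one_mul]
  have hre : ∀ z : ℂ, ‖z‖ < r → (ψ z).re = z.re ∧ (ψ z).im ^ 2 = z.im ^ 2 := by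
    intro z hz
    have e1 := hψiso z 0 hz h0
    have e2 := hψiso z s hz h1
    rw [hψ0] at e1; rw [hψs] at e2
    have e1' := norm_sub_sq_form (ψ z) 0
    have e2' := norm_sub_sq_form (ψ z) s
    rw [e1, norm_sub_sq_form] at e1'
    rw [e2, norm_sub_sq_form] at e2'
    simp at e1' e2'
    have : s * ((ψ z).re - z.re) = 0 := by nlinarith
    have h3 : (ψ z).re - z.re = 0 := by
      rcases mul_eq_zero.1 this with h | h
      · exact absurd h hs0.ne'
      · exact h
    have h4 : (ψ z).re = z.re := by linarith
    exact ⟨h4, by rw [h4] at e1'; linarith⟩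
  have him : ∀ z : ℂ, ‖z‖ < r → (ψ z).im * (ψ (s * Complex.I)).im = z.im * s := by
    intro z hz
    have e3 := hψiso z (s * Complex.I) hz h2
    have e3' := norm_sub_sq_form (ψ z) (ψ (s * Complex.I))
    rw [e3, norm_sub_sq_form] at e3'
    obtain ⟨p1, p2⟩ := hre z hz
    obtain ⟨q1, q2⟩ := hre _ h2
    rw [p1, q1] at e3'
    simp at e3' q2
    nlinarith
  obtain ⟨q1, q2⟩ := hre _ h2
  have q3 : (ψ (s * Complex.I)).im = s ∨ (ψ (s * Complex.I)).im = -s := by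
    apply sq_eq_sq_iff_eq_or_eq_neg.1; simpa using q2
  have hfz : ∀ z ∈ ball u r, ‖z - u‖ < r ∧ f z = a * ψ (z - u) + f u := by
    intro z hz
    have hz' : ‖z - u‖ < r := by simpa [dist_eq_norm] using hz
    refine ⟨hz', ?_⟩
    rw [← hφψ]; simp [hφ]
  rcases q3 with q3 | q3
  · refine ⟨rotMotion a (f u - a * u) ha1, fun z hz => ?_⟩
    obtain ⟨hz', hz2⟩ := hfz z hz
    have : ψ (z - u) = z - u := by
      apply Complex.ext
      · exact (hre _ hz').1
      · have := him _ hz'; rw [q3] at this; exact mul_right_cancel₀ hs0.ne' this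
    rw [hz2, this, rotMotion_apply]; ring
  · refine ⟨cj.trans (rotMotion a (f u - a * (starRingEnd ℂ) u) ha1), fun z hz => ?_⟩
    obtain ⟨hz', hz2⟩ := hfz z hz
    have : ψ (z - u) = (starRingEnd ℂ) (z - u) := by
      apply Complex.ext
      · rw [(hre _ hz').1]; simp
      · have := him _ hz'; rw [q3] at this
        have h5 : s * ((ψ (z-u)).im + (z-u).im) = 0 := by linarith
        have h6 : (ψ (z-u)).im + (z-u).im = 0 := by
          rcases mul_eq_zero.1 h5 with h | h
          · exact absurd h hs0.ne'
          · exact h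
        rw [Complex.conj_im]; linarith
    rw [hz2, this, IsometryEquiv.trans_apply, rotMotion_apply, cj_apply, map_sub]; ring

end

/-! ### Local isometries into flat sets -/

section

/-- `G` is a local isometry at the points of `U`, with values there in the set `R` of regular
points. Only germs of `G` at points of `U` matter. -/
def LI {M Y : Type*} [MetricSpace M] [MetricSpace Y] (R : Set Y) (G : M → Y) (U : Set M) : Prop :=
  ∀ u ∈ U, G u ∈ R ∧ ∃ r > 0, IsoOn G (ball u r)

/-- Every point of `R` has a ball that embeds isometrically in the plane. -/
def Flat {Y : Type*} [MetricSpace Y] (R : Set Y) : Prop :=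
  ∀ y ∈ R, ∃ ε > 0, ∃ f : Y → ℂ, IsoOn f (ball y ε)

/-- Distance preserving maps from a ball of `M` to the plane are determined by a germ. -/
def Rigid (M : Type*) [MetricSpace M] : Prop :=
  ∀ (t : M) (r : ℝ) (φ ψ : M → ℂ), IsoOn φ (ball t r) → IsoOn ψ (ball t r) →
    ∀ z ∈ ball t r, φ =ᶠ[𝓝 z] ψ → EqOn φ ψ (ball t r)

section basic

variable {M N Y : Type*} [MetricSpace M] [MetricSpace N] [MetricSpace Y] {R : Set Y}

lemma IsoOn.mono {f : M → Y} {A B : Set M} (h : IsoOn f B) (hAB : A ⊆ B) : IsoOn f A :=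
  fun a ha b hb => h a (hAB ha) b (hAB hb)

lemma IsoOn.congr {f g : M → Y} {A : Set M} (h : IsoOn f A) (hfg : EqOn g f A) : IsoOn g A :=
  fun a ha b hb => by rw [hfg ha, hfg hb]; exact h a ha b hb

lemma IsoOn.comp {f : N → Y} {g : M → N} {A : Set M} {B : Set N} (hf : IsoOn f B)
    (hg : IsoOn g A) (hAB : MapsTo g A B) : IsoOn (f ∘ g) A :=
  fun a ha b hb => (hf _ (hAB ha) _ (hAB hb)).trans (hg a ha b hb)

lemma IsoOn.injOn {f : M → Y} {A : Set M} (h : IsoOn f A) : InjOn f A := by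
  intro a ha b hb hab
  rw [← dist_eq_zero, ← h a ha b hb, hab, dist_self]

lemma IsoOn.mapsTo_ball {f : M → Y} {u : M} {r : ℝ} (h : IsoOn f (ball u r)) (hr : 0 < r) :
    MapsTo f (ball u r) (ball (f u) r) := by
  intro a ha
  rw [mem_ball, h a ha u (mem_ball_self hr)]
  exact ha

lemma IsoOn.continuousAt {f : M → Y} {u : M} {r : ℝ} (h : IsoOn f (ball u r)) (hr : 0 < r) :
    ContinuousAt f u := by
  rw [Metric.continuousAt_iff]
  intro ε hε
  refine ⟨min ε r, lt_min hε hr, fun {x} hx => ?_⟩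
  rw [h x (hx.trans_le (min_le_right _ _)) u (mem_ball_self hr)]
  exact hx.trans_le (min_le_left _ _)

lemma LI.mono {G : M → Y} {U V : Set M} (h : LI R G V) (hUV : U ⊆ V) : LI R G U :=
  fun u hu => h u (hUV hu)

lemma LI.mono_range {R' : Set Y} {G : M → Y} {U : Set M} (h : LI R G U)
    (hR : ∀ u ∈ U, G u ∈ R') : LI R' G U :=
  fun u hu => ⟨hR u hu, (h u hu).2⟩

lemma LI.congr {G G' : M → Y} {U : Set M} (h : LI R G U) (hG : ∀ u ∈ U, G' =ᶠ[𝓝 u] G) :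
    LI R G' U := by
  intro u hu
  obtain ⟨h1, r, hr, h2⟩ := h u hu
  obtain ⟨s, hs, h3⟩ := Metric.eventually_nhds_iff_ball.1 (hG u hu)
  refine ⟨by rw [(hG u hu).eq_of_nhds]; exact h1, min r s, lt_min hr hs, ?_⟩
  refine (h2.mono (ball_subset_ball (min_le_left _ _))).congr fun z hz => ?_
  exact h3 z (ball_subset_ball (min_le_right _ _) hz)

lemma LI.congr_open {G G' : M → Y} {U : Set M} (hU : IsOpen U) (h : LI R G U)
    (hG : EqOn G' G U) : LI R G' U :=
  h.congr fun _ hu => hG.eventuallyEq_of_mem (hU.mem_nhds hu)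

lemma LI.continuousAt {G : M → Y} {U : Set M} (h : LI R G U) {u : M} (hu : u ∈ U) :
    ContinuousAt G u := by
  obtain ⟨_, r, hr, h2⟩ := h u hu
  exact h2.continuousAt hr

lemma LI.continuousOn {G : M → Y} {U : Set M} (h : LI R G U) : ContinuousOn G U :=
  fun _ hu => (h.continuousAt hu).continuousWithinAt

lemma LI.comp {G : M → Y} {U : Set M} {V : Set N} (h : LI R G U) {φ : N → M} {W : Set M}
    (hφ : LI W φ V) (hVU : MapsTo φ V U) : LI R (G ∘ φ) V := by
  intro v hv
  obtain ⟨h1, r, hr, h2⟩ := h _ (hVU hv)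
  obtain ⟨_, s, hs, h4⟩ := hφ v hv
  refine ⟨h1, min r s, lt_min hr hs, h2.comp (h4.mono (ball_subset_ball (min_le_right _ _))) ?_⟩
  intro z hz
  have := (h4.mono (ball_subset_ball (min_le_right r s))).mapsTo_ball (lt_min hr hs) hz
  exact ball_subset_ball (min_le_left _ _) this

lemma LI.of_isometry {φ : M → Y} (h : Isometry φ) (U : Set M) : LI univ φ U :=
  fun _ _ => ⟨mem_univ _, 1, one_pos, fun a _ b _ => h.dist_eq a b⟩

lemma LI.comp_isometry {G : M → Y} {U : Set M} {V : Set N} (h : LI R G U) {φ : N → M}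
    (hφ : Isometry φ) (hVU : MapsTo φ V U) : LI R (G ∘ φ) V :=
  h.comp (LI.of_isometry hφ V) hVU

lemma LI.comp_motion {G : ℂ → Y} {U V : Set ℂ} (h : LI R G U) (Φ : ℂ ≃ᵢ ℂ)
    (hVU : MapsTo Φ V U) : LI R (fun z => G (Φ z)) V :=
  h.comp_isometry Φ.isometry hVU

/-- Two local isometries into a flat set agree once they agree near one point. -/
lemma LI.uniq (hM : Rigid M) (hR : Flat R) {G H : M → Y} {U : Set M}
    (hc : IsPreconnected U) (hG : LI R G U) (hH : LI R H U) {z : M} (hz : z ∈ U)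
    (h : G =ᶠ[𝓝 z] H) : EqOn G H U := by
  set A : Set M := {w | G =ᶠ[𝓝 w] H} with hA
  have hAo : IsOpen A := by
    rw [isOpen_iff_mem_nhds]
    intro w hw
    exact eventually_eventually_nhds.2 hw
  have hsub : U ⊆ A := by
    refine hc.subset_of_closure_inter_subset hAo ⟨z, hz, h⟩ ?_
    rintro w ⟨hwc, hw⟩
    have heq : G w = H w := by
      have h1 : (𝓝[A] w).NeBot := mem_closure_iff_nhdsWithin_neBot.1 hwc
      have h2 : Tendsto G (𝓝[A] w) (𝓝 (G w)) := (hG.continuousAt hw).mono_left inf_le_left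
      have h3 : Tendsto H (𝓝[A] w) (𝓝 (H w)) := (hH.continuousAt hw).mono_left inf_le_left
      refine tendsto_nhds_unique (h2.congr' ?_) h3
      filter_upwards [self_mem_nhdsWithin] with v hv
      exact Filter.EventuallyEq.eq_of_nhds hv
    obtain ⟨hg1, r, hr, hg2⟩ := hG w hw
    obtain ⟨_, s, hs, hh2⟩ := hH w hw
    obtain ⟨ε, hε, f, hf⟩ := hR _ hg1
    set ρ := min ε (min r s) with hρ
    have hρ0 : 0 < ρ := lt_min hε (lt_min hr hs)
    have hρε : ρ ≤ ε := min_le_left _ _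
    have hρr : ρ ≤ r := (min_le_right _ _).trans (min_le_left _ _)
    have hρs : ρ ≤ s := (min_le_right _ _).trans (min_le_right _ _)
    have g3 := hg2.mono (ball_subset_ball hρr)
    have h3 := hh2.mono (ball_subset_ball hρs)
    have mg : MapsTo G (ball w ρ) (ball (G w) ε) := fun a ha =>
      ball_subset_ball hρε (g3.mapsTo_ball hρ0 ha)
    have mh : MapsTo H (ball w ρ) (ball (G w) ε) := fun a ha => by
      rw [heq]; exact ball_subset_ball hρε (h3.mapsTo_ball hρ0 ha)
    obtain ⟨v, hvb, hv⟩ := mem_closure_iff_nhds.1 hwc _ (ball_mem_nhds w hρ0)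
    have := hM w ρ (f ∘ G) (f ∘ H) (hf.comp g3 mg) (hf.comp h3 mh) v hvb (hv.fun_comp f)
    have : EqOn G H (ball w ρ) := fun a ha => hf.injOn (mg ha) (mh ha) (this ha)
    exact this.eventuallyEq_of_mem (ball_mem_nhds w hρ0)
  exact fun w hw => Filter.EventuallyEq.eq_of_nhds (hsub hw)

end basic

lemma rigid_complex : Rigid ℂ := by
  intro t r φ ψ hφ hψ z hz h
  have hr : 0 < r := pos_of_mem_ball hz
  obtain ⟨Φ, hΦ⟩ := isoOn_ball_motion hr hφ
  obtain ⟨Ψ, hΨ⟩ := isoOn_ball_motion hr hψ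
  have hn : ball t r ∈ 𝓝 z := isOpen_ball.mem_nhds hz
  have : Φ = Ψ := motion_ext ((hΦ.symm.eventuallyEq_of_mem hn).trans
    (h.trans (hΨ.eventuallyEq_of_mem hn)))
  intro w hw
  rw [hΦ hw, hΨ hw, this]

lemma iso_line_formula {a b s : ℝ} {A B w : ℂ} (hab : a ≠ b) (h1 : dist A B = dist a b)
    (h2 : dist w A = dist s a) (h3 : dist w B = dist s b) :
    w = A + (((s - a) / (b - a) : ℝ) : ℂ) * (B - A) := by
  rw [dist_eq_norm, Real.dist_eq] at h1 h2 h3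
  have e1 := norm_sub_sq_form A B
  have e2 := norm_sub_sq_form w A
  have e3 := norm_sub_sq_form w B
  rw [h1, sq_abs] at e1
  rw [h2, sq_abs] at e2
  rw [h3, sq_abs] at e3
  have hba : b - a ≠ 0 := sub_ne_zero.2 hab.symm
  set c := (s - a) / (b - a) with hc
  have hcs : s - a = c * (b - a) := by rw [hc]; field_simp
  have key : (w.re - A.re - c * (B.re - A.re)) ^ 2 + (w.im - A.im - c * (B.im - A.im)) ^ 2 = 0 := by
    have hs : s = a + c * (b - a) := by linarith
    rw [hs] at e2 e3
    linear_combination (c - c ^ 2) * e1 + (c - 1) * e2 - c * e3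
  have hx : w.re - A.re - c * (B.re - A.re) = 0 := by nlinarith [sq_nonneg (w.re - A.re - c * (B.re - A.re)), sq_nonneg (w.im - A.im - c * (B.im - A.im))]
  have hy : w.im - A.im - c * (B.im - A.im) = 0 := by nlinarith [sq_nonneg (w.re - A.re - c * (B.re - A.re)), sq_nonneg (w.im - A.im - c * (B.im - A.im))]
  apply Complex.ext
  · simp; linarith
  · simp; linarith

lemma rigid_real : Rigid ℝ := by
  intro t r φ ψ hφ hψ z hz h
  obtain ⟨ρ, hρ, h1⟩ := Metric.eventually_nhds_iff_ball.1 (h.and (isOpen_ball.mem_nhds hz))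
  have hb : z + ρ / 2 ∈ ball z ρ := by
    rw [mem_ball, Real.dist_eq, add_sub_cancel_left, abs_of_pos (by positivity)]; linarith
  obtain ⟨e1, m1⟩ := h1 z (mem_ball_self hρ)
  obtain ⟨e2, m2⟩ := h1 _ hb
  have hne : z ≠ z + ρ / 2 := by linarith
  intro s hs
  rw [iso_line_formula hne (hφ z m1 _ m2) (hφ s hs z m1) (hφ s hs _ m2),
    iso_line_formula hne (hψ z m1 _ m2) (hψ s hs z m1) (hψ s hs _ m2), e1, e2]

section plane

variable {Y : Type*} [MetricSpace Y] {R : Set Y}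

lemma LI.lip {G : ℂ → Y} {U : Set ℂ} (hU : Convex ℝ U) (hG : LI R G U) {a b : ℂ} (ha : a ∈ U)
    (hb : b ∈ U) : dist (G a) (G b) ≤ dist a b := by
  set c : ℝ → ℂ := fun t => AffineMap.lineMap a b t with hc
  have hcc : Continuous c := AffineMap.lineMap_continuous
  have hcU : ∀ t ∈ Icc (0:ℝ) 1, c t ∈ U := fun t ht => hU.lineMap_mem ha hb ht
  have hcd : ∀ s t, dist (c s) (c t) = |s - t| * dist a b := by
    intro s t; rw [hc]; simp only; rw [dist_lineMap_lineMap, Real.dist_eq]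
  set A : Set ℝ := {t | dist (G a) (G (c t)) ≤ t * dist a b} with hA
  have hsub : Icc (0:ℝ) 1 ⊆ A := by
    apply IsClosed.Icc_subset_of_forall_mem_nhdsWithin
    · have hcont : ContinuousOn (fun t => dist (G a) (G (c t)) - t * dist a b) (Icc 0 1) := by
        apply ContinuousOn.sub
        · exact (continuous_const.dist continuous_id).comp_continuousOn (hG.continuousOn.comp hcc.continuousOn hcU)
        · exact (continuous_id.mul continuous_const).continuousOn
      have := hcont.preimage_isClosed_of_isClosed isClosed_Icc (isClosed_Iic (a := (0:ℝ)))
      convert this using 1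
      ext t; simp [hA, and_comm]
    · simp [hA, hc]
    · rintro t ⟨htA, ht⟩
      obtain ⟨_, r, hr, h2⟩ := hG (c t) (hcU t ⟨ht.1, ht.2.le⟩)
      have : ∀ᶠ s in 𝓝[>] t, c s ∈ ball (c t) r :=
        (hcc.continuousAt.mono_left inf_le_left) (ball_mem_nhds _ hr)
      filter_upwards [this, self_mem_nhdsWithin] with s hs hst
      have h3 := h2 _ (mem_ball_self hr) _ hs
      rw [hcd, abs_sub_comm, abs_of_pos (sub_pos.2 hst)] at h3
      simp only [hA, mem_ofPred_eq] at htA ⊢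
      calc dist (G a) (G (c s)) ≤ dist (G a) (G (c t)) + dist (G (c t)) (G (c s)) :=
            dist_triangle _ _ _
        _ ≤ t * dist a b + (s - t) * dist a b := by rw [h3]; gcongr
        _ = s * dist a b := by ring
  have := hsub (right_mem_Icc.2 zero_le_one)
  simpa [hA, hc] using this

/-- Local isometries on convex open sets whose germs agree somewhere on each nonempty overlap
glue to a local isometry on the union. -/
lemma LI.glue {ι : Type*} [Nonempty ι] (hR : Flat R) {U : ι → Set ℂ} {G : ι → ℂ → Y}
    (hUo : ∀ i, IsOpen (U i)) (hUc : ∀ i, Convex ℝ (U i)) (hG : ∀ i, LI R (G i) (U i))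
    (hag : ∀ i j, (U i ∩ U j).Nonempty → ∃ z ∈ U i ∩ U j, G i =ᶠ[𝓝 z] G j) :
    ∃ H : ℂ → Y, LI R H (⋃ i, U i) ∧ ∀ i, EqOn H (G i) (U i) := by
  classical
  set H : ℂ → Y := fun z => if h : ∃ i, z ∈ U i then G h.choose z else
    G (Classical.arbitrary ι) z with hH
  have hEq : ∀ i, EqOn H (G i) (U i) := by
    intro i z hz
    have hex : ∃ i, z ∈ U i := ⟨i, hz⟩
    have : H z = G hex.choose z := by simp only [hH, dif_pos hex]
    rw [this]
    obtain ⟨w, hw, hag'⟩ := hag hex.choose i ⟨z, hex.choose_spec, hz⟩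
    exact LI.uniq rigid_complex hR
      ((hUc _).inter (hUc i)).isPreconnected ((hG _).mono inter_subset_left)
      ((hG i).mono inter_subset_right) hw hag' ⟨hex.choose_spec, hz⟩
  refine ⟨H, ?_, hEq⟩
  intro z hz
  obtain ⟨i, hi⟩ := mem_iUnion.1 hz
  exact LI.congr_open (hUo i) (hG i) (hEq i) z hi

/-- A local isometry on a convex open set whose germs extend to discs extends to the union of
these discs. -/
lemma LI.ext_balls (hR : Flat R) {V : Set ℂ} {G : ℂ → Y} (hVo : IsOpen V) (hVc : Convex ℝ V)
    (hVn : V.Nonempty) (hG : LI R G V) (ρ : ℂ → ℝ)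
    (hext : ∀ u ∈ V, 0 < ρ u ∧ ∃ H, LI R H (ball u (ρ u)) ∧ H =ᶠ[𝓝 u] G) :
    ∃ H : ℂ → Y, LI R H (⋃ u ∈ V, ball u (ρ u)) ∧ EqOn H G V := by
  have hpos : ∀ u ∈ V, 0 < ρ u := fun u hu => (hext u hu).1
  have : Nonempty Y := ⟨G 0⟩
  choose! K hK1 hK2 using fun u hu => (hext u hu).2
  have : Nonempty V := hVn.to_subtype
  obtain ⟨H, hH1, hH2⟩ := LI.glue (ι := V) (R := R) (U := fun u => ball (u:ℂ) (ρ u))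
    (G := fun u => K u) hR (fun _ => isOpen_ball) (fun _ => convex_ball _ _)
    (fun u => hK1 u u.2) (by
      rintro ⟨u, hu⟩ ⟨v, hv⟩ ⟨x, hx1, hx2⟩
      have hu0 := hpos u hu
      have hv0 := hpos v hv
      have hlt : dist u v < ρ u + ρ v := by
        simp only [mem_ball] at hx1 hx2
        have := dist_triangle_left u v x
        linarith
      -- the point dividing the segment in the ratio of the radii lies in both discs
      set t : ℝ := ρ u / (ρ u + ρ v) with ht
      have hs0 : 0 < ρ u + ρ v := by linarith
      have ht0 : 0 < t := by positivity
      have ht1 : t < 1 := by rw [ht, div_lt_one hs0]; linarith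
      set z : ℂ := AffineMap.lineMap u v t with hz
      have hzV : z ∈ V := hVc.lineMap_mem hu hv ⟨ht0.le, ht1.le⟩
      have hz1 : z ∈ ball u (ρ u) := by
        rw [mem_ball, hz, dist_lineMap_left, Real.norm_eq_abs, abs_of_pos ht0]
        have : t * (ρ u + ρ v) = ρ u := by rw [ht]; field_simp
        nlinarith
      have hz2 : z ∈ ball v (ρ v) := by
        rw [mem_ball, hz, dist_lineMap_right, Real.norm_eq_abs, abs_of_pos (by linarith)]
        have : (1 - t) * (ρ u + ρ v) = ρ v := by rw [ht]; field_simp; ring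
        nlinarith
      have loc : ∀ w ∈ V, z ∈ ball w (ρ w) → K w =ᶠ[𝓝 z] G := by
        intro w hw hzw
        have hoo : IsOpen (ball w (ρ w) ∩ V) := isOpen_ball.inter hVo
        refine EqOn.eventuallyEq_of_mem ?_ (hoo.mem_nhds ⟨hzw, hzV⟩)
        exact LI.uniq rigid_complex hR ((convex_ball _ _).inter hVc).isPreconnected
          ((hK1 w hw).mono inter_subset_left) (hG.mono inter_subset_right)
          ⟨mem_ball_self (hpos w hw), hw⟩ (hK2 w hw)
      exact ⟨z, ⟨hz1, hz2⟩, (loc u hu hz1).trans (loc v hv hz2).symm⟩)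
  refine ⟨H, ?_, ?_⟩
  · intro z hz
    simp only [mem_iUnion] at hz
    obtain ⟨u, hu, hz⟩ := hz
    exact hH1 z (mem_iUnion.2 ⟨⟨u, hu⟩, hz⟩)
  · intro u hu
    rw [hH2 ⟨u, hu⟩ (mem_ball_self (hpos u hu))]
    exact (hK2 u hu).eq_of_nhds

end plane

end

/-! ### Charts and immersed flat discs -/

section

lemma unif_radius {M : Type*} [MetricSpace M] {C : Set M} (hC : IsCompact C) {Q : M → ℝ → Prop}
    (hanti : ∀ v r s, 0 < s → s ≤ r → Q v r → Q v s)
    (hloc : ∀ u ∈ C, ∃ r > 0, ∀ v ∈ C, dist v u < r → Q v r) : ∃ r > 0, ∀ v ∈ C, Q v r := by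
  have := hC.induction_on (p := fun s => ∃ r > 0, ∀ v ∈ s, v ∈ C → Q v r)
    ⟨1, one_pos, by simp⟩
    (by rintro s t hst ⟨r, hr, h⟩; exact ⟨r, hr, fun v hv => h v (hst hv)⟩)
    (by
      rintro s t ⟨r, hr, h⟩ ⟨r', hr', h'⟩
      refine ⟨min r r', lt_min hr hr', ?_⟩
      rintro v (hv | hv) hvC
      · exact hanti v r _ (lt_min hr hr') (min_le_left _ _) (h v hv hvC)
      · exact hanti v r' _ (lt_min hr hr') (min_le_right _ _) (h' v hv hvC))
    (by
      intro u hu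
      obtain ⟨r, hr, h⟩ := hloc u hu
      exact ⟨ball u r, mem_nhdsWithin_of_mem_nhds (ball_mem_nhds u hr), r, hr,
        fun v hv hvC => h v hvC hv⟩)
  obtain ⟨r, hr, h⟩ := this
  exact ⟨r, hr, fun v hv => h v hv hv⟩

variable {S : Type} [MetricSpace S] (hS : ESCS S)

/-- The regular (non-conical) points of the surface. -/
def Reg : Set S := {x | x ∉ hS.conical}

/-- `K` is a chart of radius `ρ` at `q`: it maps the disc of radius `ρ` about the origin
isometrically onto the ball of radius `ρ` about `q`, which has no conical point. -/
structure IsChart (K : ℂ → S) (q : S) (ρ : ℝ) : Prop where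
  pos : 0 < ρ
  zero : K 0 = q
  iso : IsoOn K (ball 0 ρ)
  surj : SurjOn K (ball 0 ρ) (ball q ρ)
  reg : ball q ρ ⊆ Reg hS

variable {hS}

lemma isOpen_Reg : IsOpen (Reg hS) := by
  have : Reg hS = ((hS.conical : Set S))ᶜ := by ext; simp [Reg]
  rw [this]
  exact hS.conical.finite_toSet.isClosed.isOpen_compl

lemma mem_Reg {x : S} : x ∈ Reg hS ↔ x ∉ hS.conical := Iff.rfl

lemma IsChart.mono {K : ℂ → S} {q : S} {ρ σ : ℝ} (h : IsChart hS K q ρ) (h0 : 0 < σ)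
    (hσ : σ ≤ ρ) : IsChart hS K q σ where
  pos := h0
  zero := h.zero
  iso := h.iso.mono (ball_subset_ball hσ)
  surj := by
    intro y hy
    obtain ⟨w, hw, rfl⟩ := h.surj (ball_subset_ball hσ hy)
    refine ⟨w, ?_, rfl⟩
    rw [mem_ball, ← h.iso w hw 0 (mem_ball_self h.pos), h.zero]
    exact hy
  reg := (ball_subset_ball hσ).trans h.reg

lemma IsChart.mapsTo {K : ℂ → S} {q : S} {ρ : ℝ} (h : IsChart hS K q ρ) :
    MapsTo K (ball 0 ρ) (ball q ρ) := by
  rw [← h.zero]; exact h.iso.mapsTo_ball h.pos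

lemma IsChart.li {K : ℂ → S} {q : S} {ρ : ℝ} (h : IsChart hS K q ρ) :
    LI (Reg hS) K (ball 0 ρ) := by
  intro u hu
  refine ⟨h.reg (h.mapsTo hu), ρ - dist u 0, by simpa [mem_ball] using hu, h.iso.mono ?_⟩
  exact ball_subset_ball' (by linarith)

lemma IsChart.recenter {K : ℂ → S} {q : S} {ρ : ℝ} (h : IsChart hS K q ρ) {v : S}
    (hv : dist v q < ρ / 2) : ∃ K', IsChart hS K' v (ρ / 2) := by
  have hρ := h.pos
  obtain ⟨w, hw, rfl⟩ := h.surj (show v ∈ ball q ρ by rw [mem_ball]; linarith)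
  have hw2 : dist w 0 < ρ / 2 := by
    rw [← h.iso w hw 0 (mem_ball_self h.pos), h.zero]; exact hv
  have hm : MapsTo (fun z : ℂ => z + w) (ball 0 (ρ / 2)) (ball 0 ρ) := by
    intro z hz
    simp only [mem_ball, dist_zero_right] at hz hw2 ⊢
    exact (norm_add_le _ _).trans_lt (by linarith)
  have hsub : ball (K w) (ρ / 2) ⊆ ball q ρ := ball_subset_ball' (by linarith)
  refine ⟨fun z => K (z + w), by linarith, by simp, ?_, ?_, hsub.trans h.reg⟩
  · intro a ha b hb
    rw [h.iso _ (hm ha) _ (hm hb)]; simp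
  · intro y hy
    obtain ⟨x, hx, rfl⟩ := h.surj (hsub hy)
    refine ⟨x - w, ?_, by simp⟩
    rw [mem_ball, dist_zero_right, ← dist_eq_norm, ← h.iso x hx w hw]
    exact hy

lemma exists_chart {q : S} (hq : q ∈ Reg hS) : ∃ ρ K, IsChart hS K q ρ := by
  obtain ⟨ε, hε, f, hf, hfi⟩ := hS.euclidean_at q hq
  obtain ⟨δ, hδ, hδR⟩ := Metric.isOpen_iff.1 (isOpen_Reg (hS := hS)) q hq
  set e := Complex.orthonormalBasisOneI.repr
  set h : S → ℂ := fun y => e.symm (f y) - e.symm (f q) with hh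
  have hhi : IsoOn h (ball q ε) := by
    intro a ha b hb
    rw [← hf a ha b hb, hh]
    simp [e.symm.dist_map]
  have hsurj : SurjOn h (ball q ε) (ball 0 ε) := by
    intro w hw
    have h1 : e w + f q ∈ ball (f q) ε := by
      simpa [mem_ball, dist_eq_norm] using hw
    rw [← hfi] at h1
    obtain ⟨y, hy, hyw⟩ := h1
    exact ⟨y, hy, by simp [hh, hyw]⟩
  have hq0 : h q = 0 := by simp [hh]
  have : Nonempty S := ⟨q⟩
  set K : ℂ → S := Function.invFunOn h (ball q ε) with hK
  have hK1 : ∀ w ∈ ball (0:ℂ) ε, K w ∈ ball q ε ∧ h (K w) = w := fun w hw =>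
    ⟨Function.invFunOn_mem (hsurj hw), Function.invFunOn_eq (hsurj hw)⟩
  have hK2 : ∀ y ∈ ball q ε, h y ∈ ball 0 ε ∧ K (h y) = y := by
    intro y hy
    have : h y ∈ ball (0:ℂ) ε := by
      rw [← hq0, mem_ball, hhi y hy q (mem_ball_self hε)]; exact hy
    exact ⟨this, hhi.injOn (hK1 _ this).1 hy (hK1 _ this).2⟩
  refine ⟨min ε δ, K, lt_min hε hδ, ?_, ?_, ?_, ?_⟩
  · have := (hK2 q (mem_ball_self hε)).2
    rwa [hq0] at this
  · intro a ha b hb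
    have ha' := hK1 a (ball_subset_ball (min_le_left _ _) ha)
    have hb' := hK1 b (ball_subset_ball (min_le_left _ _) hb)
    rw [← hhi _ ha'.1 _ hb'.1, ha'.2, hb'.2]
  · intro y hy
    have hy' := hK2 y (ball_subset_ball (min_le_left _ _) hy)
    refine ⟨h y, ?_, hy'.2⟩
    rw [← hq0, mem_ball, hhi y (ball_subset_ball (min_le_left _ _) hy) q (mem_ball_self hε)]
    exact hy
  · exact (ball_subset_ball (min_le_right _ _)).trans hδR

variable (hS) in
/-- Charts have uniform radius at points that stay away from the conical points. -/
lemma uniform_chart {s : ℝ} (hs : 0 < s) :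
    ∃ ρ > 0, ∀ q : S, (∀ c ∈ hS.conical, s ≤ dist q c) → ∃ K, IsChart hS K q ρ := by
  have := hS.compact
  set C : Set S := {q | ∀ c ∈ hS.conical, s ≤ dist q c} with hC
  have hCc : IsCompact C := by
    apply IsClosed.isCompact
    have : C = ⋂ c ∈ hS.conical, {q | s ≤ dist q c} := by ext; simp [hC]
    rw [this]
    exact isClosed_biInter fun c _ => isClosed_le continuous_const (continuous_id.dist continuous_const)
  obtain ⟨ρ, hρ, h⟩ := unif_radius (Q := fun q ρ => ∃ K, IsChart hS K q ρ) hCc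
    (fun v r s hs hsr ⟨K, hK⟩ => ⟨K, hK.mono hs hsr⟩)
    (by
      intro u hu
      have hur : u ∈ Reg hS := fun hc => by
        have := hu u hc
        rw [dist_self] at this; linarith
      obtain ⟨ρ, K, hK⟩ := exists_chart hur
      exact ⟨ρ / 2, half_pos hK.pos, fun v _ hv => hK.recenter hv⟩)
  exact ⟨ρ, hρ, h⟩

lemma flat_Reg : Flat (Reg hS) := by
  intro q hq
  obtain ⟨ρ, K, hK⟩ := exists_chart hq
  refine ⟨ρ, hK.pos, Function.invFunOn K (ball 0 ρ), fun a ha b hb => ?_⟩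
  rw [← hK.iso _ (Function.invFunOn_mem (hK.surj ha)) _ (Function.invFunOn_mem (hK.surj hb)),
    Function.invFunOn_eq (hK.surj ha), Function.invFunOn_eq (hK.surj hb)]

lemma LI.nhds {M : Type*} [MetricSpace M] {Y : Type*} [MetricSpace Y] {R : Set Y}
    (hR : IsOpen R) {G : M → Y} {u : M} (h : LI R G {u}) :
    ∃ r > 0, LI R G (ball u r) ∧ IsoOn G (ball u r) := by
  obtain ⟨h1, r, hr, h2⟩ := h u rfl
  obtain ⟨δ, hδ, hδ'⟩ := Metric.isOpen_iff.1 hR _ h1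
  set ρ := min r δ
  have hρ : 0 < ρ := lt_min hr hδ
  have h3 := h2.mono (ball_subset_ball (min_le_left r δ))
  refine ⟨ρ, hρ, fun v hv => ⟨hδ' (ball_subset_ball (min_le_right r δ) (h3.mapsTo_ball hρ hv)),
    ρ - dist v u, by simpa using hv, h3.mono (ball_subset_ball' (by linarith))⟩, h3⟩

lemma motion_mapsTo_ball (Φ : ℂ ≃ᵢ ℂ) {u v : ℂ} (h : Φ u = v) (r : ℝ) :
    MapsTo Φ (ball u r) (ball v r) := by
  intro z hz
  rw [← h, mem_ball, Φ.dist_eq]; exact hz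

/-- A local isometry on a disc is a chart precomposed with a motion, on the part of the disc
no larger than the chart. -/
lemma LI.chart {G : ℂ → S} {u : ℂ} {s ρ : ℝ} {K : ℂ → S} (hs : 0 < s)
    (hG : LI (Reg hS) G (ball u s)) (hK : IsChart hS K (G u) ρ) :
    ∃ Φ : ℂ ≃ᵢ ℂ, Φ u = 0 ∧ ∀ z ∈ ball u (min s ρ), G z = K (Φ z) := by
  obtain ⟨_, r, hr, hGr⟩ := hG u (mem_ball_self hs)
  set σ := min r ρ
  have hσ : 0 < σ := lt_min hr hK.pos
  have hGσ := hGr.mono (ball_subset_ball (min_le_left r ρ))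
  have hmt : MapsTo G (ball u σ) (ball (G u) ρ) := fun z hz =>
    ball_subset_ball (min_le_right r ρ) (hGσ.mapsTo_ball hσ hz)
  set κ := Function.invFunOn K (ball 0 ρ)
  have hκ : IsoOn κ (ball (G u) ρ) := fun a ha b hb => by
    rw [← hK.iso _ (Function.invFunOn_mem (hK.surj ha)) _ (Function.invFunOn_mem (hK.surj hb)),
      Function.invFunOn_eq (hK.surj ha), Function.invFunOn_eq (hK.surj hb)]
  obtain ⟨Φ, hΦ⟩ := isoOn_ball_motion hσ (hκ.comp hGσ hmt)
  have heq : ∀ z ∈ ball u σ, G z = K (Φ z) := by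
    intro z hz
    rw [← hΦ hz]
    exact (Function.invFunOn_eq (hK.surj (hmt hz))).symm
  have hu0 : Φ u = 0 := by
    rw [← hΦ (mem_ball_self hσ)]
    have h1 : K (κ (G u)) = G u := Function.invFunOn_eq (hK.surj (hmt (mem_ball_self hσ)))
    refine hK.iso.injOn (Function.invFunOn_mem (hK.surj (hmt (mem_ball_self hσ))))
      (mem_ball_self hK.pos) ?_
    rw [hK.zero]; exact h1
  refine ⟨Φ, hu0, ?_⟩
  have hsρ : 0 < min s ρ := lt_min hs hK.pos
  refine LI.uniq rigid_complex flat_Reg (convex_ball _ _).isPreconnected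
    (hG.mono (ball_subset_ball (min_le_left _ _)))
    (hK.li.comp_motion Φ ((motion_mapsTo_ball Φ hu0 _).mono_right
      (ball_subset_ball (min_le_right s ρ)))) (mem_ball_self hsρ) ?_
  exact EqOn.eventuallyEq_of_mem heq (ball_mem_nhds u hσ)

lemma LI.isoOn_ball {G : ℂ → S} {u : ℂ} {s ρ : ℝ} {K : ℂ → S} (hs : 0 < s)
    (hG : LI (Reg hS) G (ball u s)) (hK : IsChart hS K (G u) ρ) :
    IsoOn G (ball u (min s ρ)) ∧ SurjOn G (ball u (min s ρ)) (ball (G u) (min s ρ)) := by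
  obtain ⟨Φ, hΦ, h⟩ := hG.chart hs hK
  have hK' := hK.mono (lt_min hs hK.pos) (min_le_right s ρ)
  have hmt := motion_mapsTo_ball Φ hΦ (min s ρ)
  constructor
  · intro a ha b hb
    rw [h a ha, h b hb, hK'.iso _ (hmt ha) _ (hmt hb), Φ.dist_eq]
  · intro y hy
    obtain ⟨w, hw, rfl⟩ := hK'.surj hy
    have : Φ.symm w ∈ ball u (min s ρ) := by
      rw [mem_ball, ← Φ.dist_eq, Φ.apply_symm_apply, hΦ]; exact hw
    exact ⟨Φ.symm w, this, by rw [h _ this, Φ.apply_symm_apply]⟩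

/-- Path lifting: the image of an immersed flat disc contains the metric ball of the same
radius. -/
lemma LI.ball_subset_image {G : ℂ → S} {z : ℂ} {r : ℝ} (hG : LI (Reg hS) G (ball z r)) :
    ball (G z) r ⊆ G '' ball z r := by
  intro y hy
  have hr : 0 < r := pos_of_mem_ball hy
  rw [mem_ball, dist_comm] at hy
  set ε := (r - dist (G z) y) / 2 with hε
  have hε0 : 0 < ε := by rw [hε]; linarith
  obtain ⟨γ, hγc, hγ0, hγ1, hγv⟩ := hS.length_metric (G z) y ε hε0
  set L := dist (G z) y + ε with hL
  have hLr : L < r := by rw [hL, hε]; linarith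
  have hL0 : 0 ≤ L := by positivity
  obtain ⟨ρ, hρ, hloc⟩ := unif_radius (C := closedBall z L) (isCompact_closedBall z L)
    (Q := fun u ρ => ∀ y ∈ ball (G u) ρ, ∃ w, dist w u = dist y (G u) ∧ G w = y)
    (fun v r s _ hsr h y hy => h y (ball_subset_ball hsr hy))
    (by
      intro u hu
      have hu' : u ∈ ball z r := (mem_closedBall.1 hu).trans_lt hLr
      obtain ⟨a, ha, h1, _⟩ := LI.nhds isOpen_Reg (hG.mono (singleton_subset_iff.2 hu'))
      obtain ⟨b, K, hK⟩ := exists_chart (hG u hu').1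
      obtain ⟨hi, hs⟩ := h1.isoOn_ball ha hK
      have hm : 0 < min a b := lt_min ha hK.pos
      refine ⟨min a b / 2, by positivity, fun v _ hv y hy => ?_⟩
      have hv' : v ∈ ball u (min a b) := by rw [mem_ball]; linarith
      have hy' : y ∈ ball (G u) (min a b) := by
        rw [mem_ball] at hy ⊢
        have := dist_triangle y (G v) (G u)
        rw [hi v hv' u (mem_ball_self hm)] at this
        linarith
      obtain ⟨w, hw, rfl⟩ := hs hy'
      exact ⟨w, (hi w hw v hv').symm, rfl⟩)
  have huc : UniformContinuousOn γ (Icc 0 1) :=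
    isCompact_Icc.uniformContinuousOn_of_continuous hγc.continuousOn
  obtain ⟨δ, hδ, hδ'⟩ := Metric.uniformContinuousOn_iff.1 huc ρ hρ
  obtain ⟨n, hn⟩ := exists_nat_one_div_lt hδ
  set τ : ℕ → ℝ := fun k => min 1 (k / (n + 1)) with hτ
  have hn0 : (0:ℝ) < n + 1 := by positivity
  have hτm : Monotone τ := by
    intro a b hab
    simp only [hτ]
    gcongr
  have hτI : ∀ k, τ k ∈ Icc (0:ℝ) 1 := fun k => ⟨le_min zero_le_one (by positivity), min_le_left _ _⟩
  have hτd : ∀ k, dist (τ (k+1)) (τ k) < δ := by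
    intro k
    rw [Real.dist_eq, abs_of_nonneg (sub_nonneg.2 (hτm (Nat.le_succ k)))]
    have h1 : ((k + 1 : ℕ) : ℝ) / (n + 1) = k / (n+1) + 1 / (n+1) := by push_cast; ring
    have : τ (k+1) ≤ τ k + 1 / (n+1) := by
      simp only [hτ, h1]
      have : (0:ℝ) < 1 / (n + 1) := by positivity
      rcases le_total 1 ((k:ℝ) / (n+1)) with h | h
      · rw [min_eq_left h, min_eq_left (by linarith)]; linarith
      · rw [min_eq_right h]; exact min_le_right _ _
    linarith
  have hsum : ∀ k, ∑ i ∈ Finset.range k, dist (γ (τ (i+1))) (γ (τ i)) ≤ L := by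
    intro k
    have h1 := eVariationOn.sum_le (f := γ) (n := k) hτm (fun i => hτI i)
    have h2 := h1.trans hγv
    simp only [edist_dist] at h2
    rw [← ENNReal.ofReal_sum_of_nonneg (fun _ _ => dist_nonneg)] at h2
    exact (ENNReal.ofReal_le_ofReal_iff hL0).1 h2
  have hlift : ∀ k, ∃ w, G w = γ (τ k) ∧
      dist w z ≤ ∑ i ∈ Finset.range k, dist (γ (τ (i+1))) (γ (τ i)) := by
    intro k
    induction k with
    | zero => exact ⟨z, by simp [hτ, hγ0], by simp⟩
    | succ k ih =>
      obtain ⟨w, hw1, hw2⟩ := ih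
      have hwL : w ∈ closedBall z L := hw2.trans (hsum k)
      obtain ⟨w', h1, h2⟩ := hloc w hwL (γ (τ (k+1))) (by
        rw [mem_ball, hw1]; exact hδ' _ (hτI _) _ (hτI _) (hτd k))
      refine ⟨w', h2, ?_⟩
      rw [Finset.sum_range_succ]
      have := dist_triangle w' w z
      rw [h1, hw1] at this
      linarith
  obtain ⟨w, hw1, hw2⟩ := hlift (n + 1)
  refine ⟨w, (hw2.trans (hsum _)).trans_lt hLr, ?_⟩
  rw [hw1]
  have : τ (n + 1) = 1 := by simp only [hτ]; push_cast; rw [div_self hn0.ne', min_self]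
  rw [this, hγ1]

lemma LI.dist_conical {G : ℂ → S} {z : ℂ} {r : ℝ} (hG : LI (Reg hS) G (ball z r)) {c : S}
    (hc : c ∈ hS.conical) : r ≤ dist (G z) c := by
  by_contra h
  push Not at h
  obtain ⟨w, hw, rfl⟩ := hG.ball_subset_image (show c ∈ ball (G z) r by
    rw [mem_ball, dist_comm]; exact h)
  exact (hG w hw).1 hc

/-- Immersed flat discs have bounded radius as soon as there is a conical point. -/
lemma no_big_disc (hne : hS.conical.Nonempty) : ∃ B : ℝ, ∀ (G : ℂ → S) (z : ℂ) (r : ℝ),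
    LI (Reg hS) G (ball z r) → r ≤ B := by
  have := hS.compact
  obtain ⟨c, hc⟩ := hne
  exact ⟨diam (univ : Set S), fun G z r hG => (hG.dist_conical hc).trans
    (dist_le_diam_of_mem isCompact_univ.isBounded (mem_univ _) (mem_univ _))⟩

variable (hS) in
/-- An immersed flat disc of radius `s` restricts to an isometry on a disc whose radius depends
only on `s`. -/
lemma uniform_iso {s : ℝ} (hs : 0 < s) : ∃ ρ > 0, ρ ≤ s ∧ ∀ (G : ℂ → S) (z : ℂ),
    LI (Reg hS) G (ball z s) → IsoOn G (ball z ρ) := by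
  obtain ⟨ρ, hρ, h⟩ := uniform_chart hS hs
  refine ⟨min s ρ, lt_min hs hρ, min_le_left _ _, fun G z hG => ?_⟩
  obtain ⟨K, hK⟩ := h (G z) fun c hc => hG.dist_conical hc
  exact (hG.isoOn_ball hs hK).1

end

/-! ### Limits of translates of a half-strip -/

section

/-- The horizontal strip `-a < Im z < b`. -/
def strip (a b : ℝ) : Set ℂ := {z | -a < z.im ∧ z.im < b}

/-- The half-strip `Re z > 0`, `|Im z| < δ`. -/
def hstrip (δ : ℝ) : Set ℂ := {z | 0 < z.re ∧ -δ < z.im ∧ z.im < δ}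

lemma motion_convex (Φ : ℂ ≃ᵢ ℂ) {C : Set ℂ} (hC : Convex ℝ C) : Convex ℝ (Φ ⁻¹' C) := by
  intro x hx y hy s t hs ht hst
  have hst' : (s : ℂ) + t = 1 := by exact_mod_cast hst
  have : Φ (s • x + t • y) = s • Φ x + t • Φ y := by
    simp only [Complex.real_smul]
    obtain ⟨a, -, h | h⟩ := motion_form Φ
    · rw [h, h x, h y]; linear_combination (-Φ 0) * hst'
    · rw [h, h x, h y]; simp only [map_add, map_mul, Complex.conj_ofReal]
      linear_combination (-Φ 0) * hst'
  rw [mem_preimage, this]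
  exact hC hx hy hs ht hst

lemma convex_strip (a b : ℝ) : Convex ℝ (strip a b) :=
  (convex_halfSpace_im_gt (-a)).inter (convex_halfSpace_im_lt b)

lemma isOpen_strip (a b : ℝ) : IsOpen (strip a b) :=
  (isOpen_lt continuous_const Complex.continuous_im).inter
    (isOpen_lt Complex.continuous_im continuous_const)

lemma hstrip_eq (δ : ℝ) : hstrip δ = {z : ℂ | 0 < z.re} ∩ strip δ δ := rfl

lemma convex_hstrip (δ : ℝ) : Convex ℝ (hstrip δ) :=
  (convex_halfSpace_re_gt 0).inter (convex_strip δ δ)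

lemma isOpen_hstrip (δ : ℝ) : IsOpen (hstrip δ) :=
  (isOpen_lt continuous_const Complex.continuous_re).inter (isOpen_strip δ δ)

lemma abs_re_sub_lt {z w : ℂ} {s : ℝ} (h : w ∈ ball z s) : |w.re - z.re| < s := by
  rw [mem_ball, dist_eq_norm] at h
  have := (Complex.abs_re_le_norm (w - z)).trans_lt h
  simpa using this

lemma abs_im_sub_lt {z w : ℂ} {s : ℝ} (h : w ∈ ball z s) : |w.im - z.im| < s := by
  rw [mem_ball, dist_eq_norm] at h
  have := (Complex.abs_im_le_norm (w - z)).trans_lt h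
  simpa using this

variable {S : Type} [MetricSpace S] {hS : ESCS S}

/-- The ultrafilter along which all limits in the strip argument are taken. -/
abbrev 𝒰 : Ultrafilter ℕ := Filter.hyperfilter ℕ

lemma exists_ulim (hS : ESCS S) (f : ℕ → S) : ∃ x, Tendsto f 𝒰 (𝓝 x) := by
  have := hS.compact
  obtain ⟨x, -, hx⟩ := isCompact_univ.ultrafilter_le_nhds (𝒰.map f) (by simp)
  exact ⟨x, hx⟩

/-- Ultralimits of immersed flat discs are immersed flat discs. -/
lemma ulim_li {G : ℕ → ℂ → S} {U : Set ℂ}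
    (h : ∀ z ∈ U, ∃ s > 0, ∀ᶠ n in (𝒰 : Filter ℕ), LI (Reg hS) (G n) (ball z s)) :
    ∃ H : ℂ → S, LI (Reg hS) H U ∧ ∀ z, Tendsto (fun n => G n z) 𝒰 (𝓝 (H z)) := by
  choose H hH using fun z => exists_ulim hS (fun n => G n z)
  refine ⟨H, fun z hz => ?_, hH⟩
  obtain ⟨s, hs, hn⟩ := h z hz
  obtain ⟨ρ, hρ, -, hiso⟩ := uniform_iso hS hs
  refine ⟨fun hc => ?_, ρ, hρ, fun a ha b hb => ?_⟩
  · have h1 : Tendsto (fun n => dist (G n z) (H z)) 𝒰 (𝓝 (dist (H z) (H z))) :=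
      (hH z).dist tendsto_const_nhds
    rw [dist_self] at h1
    have h2 : s ≤ 0 := ge_of_tendsto h1 (hn.mono fun n hn => hn.dist_conical hc)
    linarith
  · refine tendsto_nhds_unique ((hH a).dist (hH b)) ?_
    refine tendsto_const_nhds.congr' ?_
    filter_upwards [hn] with n hn
    exact (hiso _ _ hn a ha b hb).symm

/-- A variant of `LI.chart` for a chart centred at a nearby point. -/
lemma LI.chart_near {G : ℂ → S} {u : ℂ} {s ρ : ℝ} {K : ℂ → S} {q : S} (hs : 0 < s)
    (hG : LI (Reg hS) G (ball u s)) (hK : IsChart hS K q ρ) (hq : dist (G u) q < ρ / 2) :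
    ∃ Φ : ℂ ≃ᵢ ℂ, ‖Φ u‖ < ρ / 2 ∧ ∀ z ∈ ball u (min s (ρ / 2)), G z = K (Φ z) := by
  have hρ := hK.pos
  obtain ⟨w, hw, hwG⟩ := hK.surj (show G u ∈ ball q ρ by rw [mem_ball]; linarith)
  have hw2 : ‖w‖ < ρ / 2 := by
    rw [← dist_zero_right, ← hK.iso w hw 0 (mem_ball_self hρ), hK.zero, hwG]; exact hq
  have hm : ∀ z ∈ ball (0:ℂ) (ρ / 2), z + w ∈ ball (0:ℂ) ρ := by
    intro z hz
    simp only [mem_ball, dist_zero_right] at hz ⊢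
    exact (norm_add_le _ _).trans_lt (by linarith)
  have hsub : ball (G u) (ρ / 2) ⊆ ball q ρ := ball_subset_ball' (by linarith)
  have hK' : IsChart hS (fun z => K (z + w)) (G u) (ρ / 2) := by
    refine ⟨by linarith, by simp [hwG], ?_, ?_, hsub.trans hK.reg⟩
    · intro a ha b hb
      rw [hK.iso _ (hm a ha) _ (hm b hb)]; simp
    · intro y hy
      obtain ⟨x, hx, rfl⟩ := hK.surj (hsub hy)
      refine ⟨x - w, ?_, by simp⟩
      rw [mem_ball, dist_zero_right, ← dist_eq_norm, ← hK.iso x hx w hw, hwG]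
      exact hy
  obtain ⟨Φ, hΦ, h⟩ := hG.chart hs hK'
  refine ⟨Φ.trans (tr w), by simp [hΦ, hw2], fun z hz => ?_⟩
  rw [h z hz]; rfl

/-- The translates `F (t n + ·)` of a map on a half-strip, with `t n → ∞`, converge on
`|Im z| < δ` to the restriction of a local isometry defined on the strip `-a < Im z < b`. -/
structure SubLimit (hS : ESCS S) (F : ℂ → S) (δ a b : ℝ) (t : ℕ → ℝ) (G : ℂ → S) : Prop where
  ha : δ ≤ a
  hb : δ ≤ b
  ht : Tendsto t 𝒰 atTop
  li : LI (Reg hS) G (strip a b)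
  lim : ∀ z ∈ strip δ δ, Tendsto (fun n => F (t n + z)) 𝒰 (𝓝 (G z))

lemma hstrip_shift {F : ℂ → S} {δ : ℝ} (hF : LI (Reg hS) F (hstrip δ)) {z : ℂ}
    (hz : z ∈ strip δ δ) {t : ℕ → ℝ} (ht : Tendsto t 𝒰 atTop) :
    ∃ s > 0, ∀ᶠ n in (𝒰 : Filter ℕ), LI (Reg hS) (fun w => F (t n + w)) (ball z s) := by
  refine ⟨min (z.im + δ) (δ - z.im), lt_min (by linarith [hz.1]) (by linarith [hz.2]), ?_⟩
  filter_upwards [ht.eventually_gt_atTop (min (z.im + δ) (δ - z.im) - z.re)] with n hn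
  have := hF.comp_motion (tr (t n)) (V := ball z (min (z.im + δ) (δ - z.im))) (by
    intro w hw
    have h1 := abs_lt.1 (abs_re_sub_lt hw)
    have h2 := abs_lt.1 (abs_im_sub_lt hw)
    have h3 := min_le_left (z.im + δ) (δ - z.im)
    have h4 := min_le_right (z.im + δ) (δ - z.im)
    simp only [IsometryEquiv.addRight_apply, hstrip, mem_ofPred_eq, Complex.add_re,
      Complex.ofReal_re, Complex.add_im, Complex.ofReal_im]
    refine ⟨by linarith, by linarith, by linarith⟩)
  simpa [add_comm] using this

lemma tendsto_hyper_atTop : Tendsto (fun n : ℕ => (n : ℝ)) 𝒰 atTop := by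
  refine tendsto_natCast_atTop_atTop.mono_left ?_
  rw [← Nat.cofinite_eq_atTop]
  exact hyperfilter_le_cofinite

lemma SubLimit.base {F : ℂ → S} {δ : ℝ} (hF : LI (Reg hS) F (hstrip δ)) :
    ∃ t G, SubLimit hS F δ δ δ t G := by
  obtain ⟨G, hG, hl⟩ := ulim_li (hS := hS) (G := fun n (w : ℂ) => F (((n : ℝ) : ℂ) + w)) (U := strip δ δ)
    (fun z hz => hstrip_shift hF hz tendsto_hyper_atTop)
  exact ⟨fun n => (n : ℝ), G, le_rfl, le_rfl, tendsto_hyper_atTop, hG, fun z _ => hl z⟩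

lemma ball_subset_strip {δ a b : ℝ} (ha : δ ≤ a) (hb : δ ≤ b) : ball (0:ℂ) δ ⊆ strip a b := by
  intro z hz
  have h2 := abs_lt.1 (abs_im_sub_lt hz)
  simp only [Complex.zero_im, sub_zero] at h2
  exact ⟨by linarith, by linarith⟩

/-- Far translates of `F` are obtained from the limit map by motions that tend to the
identity. -/
lemma SubLimit.near {F : ℂ → S} {δ a b : ℝ} {t : ℕ → ℝ} {G : ℂ → S} (hδ : 0 < δ)
    (hF : LI (Reg hS) F (hstrip δ)) (h : SubLimit hS F δ a b t G) :
    ∃ (u c : ℕ → ℂ), (∀ n, ‖u n‖ = 1) ∧ Tendsto u 𝒰 (𝓝 1) ∧ Tendsto c 𝒰 (𝓝 0) ∧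
      ∀ᶠ n in (𝒰 : Filter ℕ), ∀ z : ℂ, t n + z ∈ hstrip δ → u n * z + c n ∈ strip a b →
        F (t n + z) = G (u n * z + c n) := by
  have hsub : ball (0:ℂ) δ ⊆ strip a b := ball_subset_strip h.ha h.hb
  have h0δ : (0:ℂ) ∈ strip δ δ := ⟨by simpa using hδ, by simpa using hδ⟩
  have h0s : (0:ℂ) ∈ strip a b := hsub (mem_ball_self hδ)
  obtain ⟨ρ, K, hK⟩ := exists_chart (h.li 0 h0s).1
  have hρ := hK.pos
  obtain ⟨Φ, hΦ0, hΦ⟩ := (h.li.mono hsub).chart hδ hK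
  set σ := min δ (ρ / 2) with hσ
  have hσ0 : 0 < σ := lt_min hδ (by linarith)
  have hσδ : σ ≤ δ := min_le_left _ _
  have hσρ : σ ≤ ρ / 2 := min_le_right _ _
  have hex : ∀ n, ∃ Ψ : ℂ ≃ᵢ ℂ, δ < t n → dist (F (t n + 0)) (G 0) < ρ / 2 →
      ‖Φ (Ψ 0)‖ < ρ / 2 ∧ ∀ z ∈ ball (0:ℂ) σ, F (t n + z) = K (Φ (Ψ z)) := by
    intro n
    by_cases hn : δ < t n ∧ dist (F (t n + 0)) (G 0) < ρ / 2
    · have hl : LI (Reg hS) (fun w => F (t n + w)) (ball 0 δ) := by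
        have := hF.comp_motion (tr (t n)) (V := ball 0 δ) (by
          intro w hw
          have h1 := abs_lt.1 (abs_re_sub_lt hw)
          have h2 := abs_lt.1 (abs_im_sub_lt hw)
          simp only [Complex.zero_im, Complex.zero_re, sub_zero] at h1 h2
          have := hn.1
          simp only [IsometryEquiv.addRight_apply, hstrip, mem_ofPred_eq, Complex.add_re,
            Complex.ofReal_re, Complex.add_im, Complex.ofReal_im]
          refine ⟨by linarith, by linarith, by linarith⟩)
        simpa [add_comm] using this
      obtain ⟨Φ', h1, h2⟩ := hl.chart_near hδ hK hn.2
      exact ⟨Φ'.trans Φ.symm, fun _ _ => ⟨by simpa using h1, fun z hz => by simpa using h2 z hz⟩⟩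
    · exact ⟨IsometryEquiv.refl _, fun h1 h2 => absurd ⟨h1, h2⟩ hn⟩
  choose Ψ hΨ using hex
  have hev : ∀ᶠ n in (𝒰 : Filter ℕ), ‖Φ (Ψ n 0)‖ < ρ / 2 ∧
      ∀ z ∈ ball (0:ℂ) σ, F (t n + z) = K (Φ (Ψ n z)) := by
    have h2 := (tendsto_iff_dist_tendsto_zero.1 (h.lim 0 h0δ)).eventually_lt_const
      (show 0 < ρ / 2 by linarith)
    filter_upwards [h.ht.eventually_gt_atTop δ, h2] with n h1 h2
    exact hΨ n h1 h2
  have hlim : ∀ z ∈ ball (0:ℂ) σ, Tendsto (fun n => Ψ n z) 𝒰 (𝓝 z) := by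
    intro z hz
    have hzδ : z ∈ strip δ δ := ball_subset_strip le_rfl le_rfl (ball_subset_ball hσδ hz)
    have hGz : G z = K (Φ z) := hΦ z (ball_subset_ball (min_le_min_left _ (by linarith)) hz)
    rw [tendsto_iff_dist_tendsto_zero]
    refine (tendsto_iff_dist_tendsto_zero.1 (h.lim z hzδ)).congr' ?_
    filter_upwards [hev] with n hn
    have hz' : dist z 0 < σ := hz
    rw [hn.2 z hz, hGz, hK.iso, Φ.dist_eq]
    · have h1 : dist (Φ (Ψ n z)) (Φ (Ψ n 0)) = dist z 0 := by rw [Φ.dist_eq, (Ψ n).dist_eq]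
      have h2 := dist_triangle (Φ (Ψ n z)) (Φ (Ψ n 0)) 0
      rw [dist_zero_right (Φ (Ψ n 0)), h1] at h2
      rw [mem_ball]; linarith [hn.1]
    · rw [mem_ball, ← hΦ0, Φ.dist_eq]; linarith
  choose u hu hform using fun n => motion_form (Ψ n)
  set c : ℕ → ℂ := fun n => Ψ n 0 with hc
  have hσ2 : ((σ / 2 : ℝ) : ℂ) ∈ ball (0:ℂ) σ := by
    rw [mem_ball, dist_zero_right, Complex.norm_real, Real.norm_eq_abs, abs_of_pos (by linarith)]
    linarith
  have hσI : ((σ / 2 : ℝ) : ℂ) * Complex.I ∈ ball (0:ℂ) σ := by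
    rw [mem_ball, dist_zero_right] at hσ2 ⊢
    simpa using hσ2
  have hc0 : Tendsto c 𝒰 (𝓝 0) := hlim 0 (mem_ball_self hσ0)
  have hσC : ((σ / 2 : ℝ) : ℂ) ≠ 0 := by exact_mod_cast (half_pos hσ0).ne'
  have hu1 : Tendsto u 𝒰 (𝓝 1) := by
    have h1 := ((hlim _ hσ2).sub hc0).div_const ((σ / 2 : ℝ) : ℂ)
    rw [sub_zero, div_self hσC] at h1
    refine h1.congr fun n => ?_
    rcases hform n with h | h
    · rw [h]; field_simp; simp [hc]
    · rw [h, Complex.conj_ofReal]; field_simp; simp [hc]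
  have hor : ∀ᶠ n in (𝒰 : Filter ℕ), ∀ z, Ψ n z = u n * z + c n := by
    by_contra hcon
    rw [← Ultrafilter.eventually_not] at hcon
    have h1 : Tendsto (fun n => u n * (starRingEnd ℂ) (((σ / 2 : ℝ) : ℂ) * Complex.I) + c n) 𝒰
        (𝓝 (1 * (starRingEnd ℂ) (((σ / 2 : ℝ) : ℂ) * Complex.I) + 0)) :=
      (hu1.mul_const _).add hc0
    have h2 := tendsto_nhds_unique (h1.congr' (by
      filter_upwards [hcon] with n hn
      exact ((hform n).resolve_left hn _).symm)) (hlim _ hσI)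
    have h3 := congrArg Complex.im h2
    rw [map_mul, Complex.conj_ofReal, Complex.conj_I] at h3
    simp only [one_mul, add_zero, Complex.mul_im, Complex.ofReal_re, Complex.ofReal_im,
      Complex.neg_im, Complex.neg_re, Complex.I_im, Complex.I_re] at h3
    linarith
  refine ⟨u, c, hu, hu1, hc0, ?_⟩
  have hcs := (tendsto_iff_dist_tendsto_zero.1 hc0).eventually_lt_const (half_pos hσ0)
  filter_upwards [hev, hor, hcs, h.ht.eventually_gt_atTop 0] with n hn hor hcs htn
  have key := LI.uniq (R := Reg hS) rigid_complex flat_Reg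
    (G := fun z => F (tr (t n) z)) (H := fun z => G (rotMotion (u n) (c n) (hu n) z))
    (U := tr (t n) ⁻¹' hstrip δ ∩ rotMotion (u n) (c n) (hu n) ⁻¹' strip a b)
    ((motion_convex _ (convex_hstrip δ)).inter (motion_convex _ (convex_strip a b))).isPreconnected
    (hF.comp_motion _ fun z hz => hz.1) (h.li.comp_motion _ fun z hz => hz.2) (z := 0) ?_ ?_
  · intro z h1 h2
    have := key (x := z) ⟨by simpa [add_comm] using h1, by simpa using h2⟩
    simpa [add_comm] using this
  · refine ⟨by simp [hstrip, htn, hδ], ?_⟩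
    have : c n ∈ strip a b := hsub (by rw [mem_ball]; linarith)
    simpa using this
  · filter_upwards [ball_mem_nhds (0:ℂ) (half_pos hσ0)] with z hz
    have h1 := hn.2 z (ball_subset_ball (by linarith) hz)
    rw [hor z] at h1
    simp only [IsometryEquiv.addRight_apply, rotMotion_apply]
    rw [add_comm, h1, hΦ]
    rw [dist_zero_right] at hcs
    rw [mem_ball, dist_zero_right] at hz ⊢
    calc ‖u n * z + c n‖ ≤ ‖u n * z‖ + ‖c n‖ := norm_add_le _ _
      _ = ‖z‖ + ‖c n‖ := by rw [norm_mul, hu, one_mul]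
      _ < σ := by linarith
      _ ≤ min δ ρ := min_le_min_left _ (by linarith)

end

/-! ### Periodicity of flat half-strips -/

section

variable {S : Type} [MetricSpace S] {hS : ESCS S}

/-- If the comparison motions rotate counterclockwise, following `F` until it has drifted by
`b - δ / 2` inside the limit strip produces a wider limit strip. -/
lemma SubLimit.widen {F : ℂ → S} {δ a b : ℝ} {t : ℕ → ℝ} {G : ℂ → S} (hδ : 0 < δ)
    (hF : LI (Reg hS) F (hstrip δ)) (h : SubLimit hS F δ a b t G) {u c : ℕ → ℂ}
    (hu1 : Tendsto u 𝒰 (𝓝 1)) (hc0 : Tendsto c 𝒰 (𝓝 0))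
    (hnear : ∀ᶠ n in (𝒰 : Filter ℕ), ∀ z : ℂ, t n + z ∈ hstrip δ → u n * z + c n ∈ strip a b →
        F (t n + z) = G (u n * z + c n))
    (hpos : ∀ᶠ n in (𝒰 : Filter ℕ), 0 < (u n).im) :
    ∃ t' G', SubLimit hS F δ (a + b - δ / 2) δ t' G' := by
  have ha := h.ha
  have hb := h.hb
  set k := b - δ / 2 with hk
  have hk0 : 0 < k := by linarith
  set x : ℕ → ℝ := fun n => k / (u n).im with hx
  set y : ℕ → ℝ := fun n => (u n).re * x n with hy
  have him : Tendsto (fun n => (u n).im) 𝒰 (𝓝 0) := by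
    have := (Complex.continuous_im.tendsto 1).comp hu1
    rw [Complex.one_im] at this; exact this
  have hxt : Tendsto x 𝒰 atTop := by
    have : Tendsto (fun n => (u n).im) 𝒰 (𝓝[>] 0) :=
      tendsto_nhdsWithin_iff.2 ⟨him, hpos⟩
    simpa [hx, div_eq_mul_inv] using this.inv_tendsto_nhdsGT_zero.const_mul_atTop hk0
  have htx : Tendsto (fun n => t n + x n) 𝒰 atTop := h.ht.atTop_add_atTop hxt
  obtain ⟨G₁, hG₁, hl₁⟩ := ulim_li (hS := hS) (G := fun n w => G ((y n : ℂ) + w)) (U := strip a b)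
    (by
      intro z hz
      obtain ⟨s, hs, hb⟩ := Metric.isOpen_iff.1 (isOpen_strip a b) z hz
      refine ⟨s, hs, Eventually.of_forall fun n => ?_⟩
      have := h.li.comp_motion (tr (y n)) (V := ball z s) (by
        intro w hw
        have := hb hw
        simpa [strip] using this)
      simpa [add_comm] using this)
  obtain ⟨H, hH, hl₂⟩ := ulim_li (hS := hS) (G := fun n w => F (((t n + x n : ℝ) : ℂ) + w))
    (U := strip δ δ) (fun z hz => hstrip_shift hF hz htx)
  have hagree : ∀ z ∈ strip (δ / 2) (δ / 2), G₁ (z + k * Complex.I) = H z := by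
    intro z hz
    have hz1 := hz.1
    have hz2 := hz.2
    have hzk : z + k * Complex.I ∈ strip a b := by
      simp only [strip, mem_ofPred_eq, Complex.add_im, Complex.mul_im, Complex.ofReal_re,
        Complex.I_im, Complex.ofReal_im, Complex.I_re]
      constructor <;> linarith
    have hp : Tendsto (fun n => u n * z + c n + k * Complex.I) 𝒰 (𝓝 (z + k * Complex.I)) := by
      have := ((hu1.mul_const z).add hc0).add_const (k * Complex.I)
      simpa using this
    have hpe : ∀ᶠ n in (𝒰 : Filter ℕ), u n * z + c n + k * Complex.I ∈ strip a b :=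
      hp.eventually ((isOpen_strip a b).mem_nhds hzk)
    have hd : Tendsto (fun n => dist (u n * z + c n + k * Complex.I) (z + k * Complex.I)) 𝒰 (𝓝 0) :=
      tendsto_iff_dist_tendsto_zero.1 hp
    have h1 : Tendsto (fun n => dist (F (((t n + x n : ℝ) : ℂ) + z))
        (G ((y n : ℂ) + (z + k * Complex.I)))) 𝒰 (𝓝 0) := by
      refine squeeze_zero' (Eventually.of_forall fun _ => dist_nonneg) ?_ hd
      filter_upwards [hnear, hpe, hpos, htx.eventually_gt_atTop (-z.re)] with n hn hpn hposn htn
      have e1 : u n * (x n + z) + c n = y n + (u n * z + c n + k * Complex.I) := by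
        have : u n * x n = y n + k * Complex.I := by
          apply Complex.ext
          · simp [hy]
          · simp [hx]; field_simp
        linear_combination this
      have m1 : ∀ w ∈ strip a b, (y n : ℂ) + w ∈ strip a b := by
        intro w hw; simpa [strip] using hw
      have e2 : F (((t n + x n : ℝ) : ℂ) + z) = G (y n + (u n * z + c n + k * Complex.I)) := by
        rw [← e1, ← hn]
        · push_cast; rw [add_assoc]
        · simp only [hstrip, mem_ofPred_eq, Complex.add_re, Complex.ofReal_re, Complex.add_im,
            Complex.ofReal_im]
          refine ⟨by linarith, by linarith, by linarith⟩
        · rw [e1]; exact m1 _ hpn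
      rw [e2]
      refine (h.li.lip (convex_strip a b) (m1 _ hpn) (m1 _ hzk)).trans ?_
      rw [dist_add_left]
    have h2 := ((hl₂ z).dist (hl₁ (z + k * Complex.I)))
    exact (dist_eq_zero.1 (tendsto_nhds_unique h2 h1)).symm
  have hG₂ : LI (Reg hS) (fun z => G₁ (z + k * Complex.I)) (strip (a + k) (δ / 2)) := by
    refine hG₁.comp_motion (tr (k * Complex.I)) fun z hz => ?_
    have hz1 := hz.1
    have hz2 := hz.2
    simp only [strip, mem_ofPred_eq, IsometryEquiv.addRight_apply, Complex.add_im, Complex.mul_im,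
      Complex.ofReal_re, Complex.I_im, Complex.ofReal_im, Complex.I_re]
    constructor <;> linarith
  have h00 : (0 : ℂ) ∈ strip (δ / 2) (δ / 2) := by simp [strip, hδ]
  have hag0 : (fun z => G₁ (z + k * Complex.I)) =ᶠ[𝓝 0] H :=
    EqOn.eventuallyEq_of_mem hagree ((isOpen_strip _ _).mem_nhds h00)
  have h01 : (0 : ℂ) ∈ strip (a + k) (δ / 2) := by simp [strip, hδ]; linarith
  have h02 : (0 : ℂ) ∈ strip δ δ := by simp [strip, hδ]
  obtain ⟨G', hG', hE⟩ := LI.glue (ι := Bool) (R := Reg hS) flat_Reg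
    (U := fun i => if i then strip (a + k) (δ / 2) else strip δ δ)
    (G := fun i => if i then (fun z => G₁ (z + k * Complex.I)) else H)
    (by rintro (_ | _) <;> exact isOpen_strip _ _)
    (by rintro (_ | _) <;> exact convex_strip _ _)
    (by rintro (_ | _); exacts [hH, hG₂])
    (by
      rintro (_ | _) (_ | _) -
      · exact ⟨0, ⟨h02, h02⟩, EventuallyEq.rfl⟩
      · exact ⟨0, ⟨h02, h01⟩, hag0.symm⟩
      · exact ⟨0, ⟨h01, h02⟩, hag0⟩
      · exact ⟨0, ⟨h01, h01⟩, EventuallyEq.rfl⟩)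
  refine ⟨fun n => t n + x n, G', by linarith, le_rfl, htx, hG'.mono ?_, ?_⟩
  · intro z hz
    have hz1 := hz.1
    have hz2 := hz.2
    rcases lt_or_ge z.im (δ / 2) with h | h
    · exact mem_iUnion.2 ⟨true, by simp only [if_true]; exact ⟨by linarith, h⟩⟩
    · exact mem_iUnion.2 ⟨false, show z ∈ strip δ δ from ⟨by linarith, by linarith⟩⟩
  · intro z hz
    have := hE false hz
    rw [this]
    exact hl₂ z

lemma SubLimit.conj {F : ℂ → S} {δ a b : ℝ} {t : ℕ → ℝ} {G : ℂ → S}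
    (h : SubLimit hS F δ a b t G) :
    SubLimit hS (fun z => F (cj z)) δ b a t (fun z => G (cj z)) where
  ha := h.hb
  hb := h.ha
  ht := h.ht
  li := h.li.comp_motion cj fun z hz => by
    have hz1 := hz.1
    have hz2 := hz.2
    simp only [cj_apply, strip, mem_ofPred_eq, Complex.conj_im]
    constructor <;> linarith
  lim := fun z hz => by
    have hz1 := hz.1
    have hz2 := hz.2
    have := h.lim (cj z) (by
      simp only [cj_apply, strip, mem_ofPred_eq, Complex.conj_im]
      constructor <;> linarith)
    refine this.congr fun n => ?_
    simp [cj_apply]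

lemma hstrip_conj {F : ℂ → S} {δ : ℝ} (hF : LI (Reg hS) F (hstrip δ)) :
    LI (Reg hS) (fun z => F (cj z)) (hstrip δ) := by
  refine hF.comp_motion cj fun z hz => ?_
  obtain ⟨h1, h2, h3⟩ := hz
  simp only [cj_apply, hstrip, mem_ofPred_eq, Complex.conj_im, Complex.conj_re]
  refine ⟨h1, by linarith, by linarith⟩

/-- A half-strip that is invariant under a translation transverse to it would develop to
arbitrarily large flat discs. -/
lemma no_skew_period (hne : hS.conical.Nonempty) {F : ℂ → S} {δ : ℝ}
    (hF : LI (Reg hS) F (hstrip δ)) {τ : ℂ} (hτ : 0 < τ.re) (hτi : τ.im ≠ 0)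
    (hτδ : |τ.im| < δ / 2)
    (hper : ∀ w ∈ hstrip δ, w + τ ∈ hstrip δ → F (w + τ) = F w) : False := by
  obtain ⟨B, hB⟩ := no_big_disc hne
  set σ := |τ.im| with hσ
  have hσ0 : 0 < σ := abs_pos.2 hτi
  obtain ⟨N, hN⟩ := exists_nat_gt ((|B| + 1) / σ)
  have hN' : |B| + 1 < N * σ := by rwa [div_lt_iff₀ hσ0] at hN
  set M : ℝ := (N + 1) * τ.re with hM
  have hM0 : 0 < M := by positivity
  set ι := {k : ℤ // |(k:ℝ)| ≤ N}
  let U : ι → Set ℂ := fun k => {z | M < z.re} ∩ {z | |z.im - k.1 * τ.im| < 3 / 4 * σ}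
  have hUeq : ∀ k : ι, U k = {z : ℂ | M < z.re} ∩
      strip (3 / 4 * σ - k.1 * τ.im) (3 / 4 * σ + k.1 * τ.im) := by
    intro k
    ext z
    simp only [U, strip, mem_inter_iff, mem_ofPred_eq, abs_lt]
    constructor <;> rintro ⟨h1, h2, h3⟩ <;> refine ⟨h1, ?_, ?_⟩ <;> linarith
  have hUmem : ∀ k : ι, ∀ z ∈ U k, z - k.1 * τ ∈ hstrip δ := by
    rintro ⟨k, hk⟩ z ⟨h1, h2⟩
    simp only [mem_ofPred_eq] at h1 h2
    simp only [hstrip, mem_ofPred_eq, Complex.sub_re, Complex.mul_re, Complex.intCast_re,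
      Complex.intCast_im, zero_mul, sub_zero, Complex.sub_im, Complex.mul_im, add_zero]
    have hk' : (k:ℝ) ≤ N := (le_abs_self _).trans hk
    have h3 := abs_lt.1 h2
    refine ⟨by nlinarith, by linarith, by linarith⟩
  have : Nonempty ι := ⟨⟨0, by simp⟩⟩
  have hopen : ∀ k : ι, IsOpen (U k) := fun k => by
    rw [hUeq]
    exact (isOpen_lt continuous_const Complex.continuous_re).inter (isOpen_strip _ _)
  have hstep : ∀ i j : ι, j.1 = i.1 + 1 → ∀ z ∈ U i ∩ U j, F (z - i.1 * τ) = F (z - j.1 * τ) := by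
    rintro i j hij z ⟨h1, h2⟩
    have h3 := hUmem i z h1
    have h4 := hUmem j z h2
    have e : z - i.1 * τ = z - j.1 * τ + τ := by rw [hij]; push_cast; ring
    rw [e] at h3 ⊢
    exact hper _ h4 h3
  obtain ⟨H, hH, -⟩ := LI.glue (ι := ι) (R := Reg hS) flat_Reg (U := U)
    (G := fun k z => F (z - k.1 * τ)) hopen
    (fun k => by
      rw [hUeq]; exact (convex_halfSpace_re_gt M).inter (convex_strip _ _))
    (fun k => by
      have := hF.comp_motion (tr (-(k.1 * τ))) (V := U k) (fun z hz => by
        simpa [sub_eq_add_neg] using hUmem k z hz)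
      simpa [sub_eq_add_neg] using this)
    (by
      rintro i j ⟨z, h1, h2⟩
      refine ⟨z, ⟨h1, h2⟩, ?_⟩
      have hn : U i ∩ U j ∈ 𝓝 z := ((hopen i).inter (hopen j)).mem_nhds ⟨h1, h2⟩
      have hij : |((i.1 - j.1 : ℤ) : ℝ)| < 2 := by
        have h3 := h1.2
        have h4 := h2.2
        simp only [mem_ofPred_eq] at h3 h4
        have h5 : |((i.1 - j.1 : ℤ) : ℝ)| * σ < 2 * σ := by
          rw [hσ, ← abs_mul]
          have : ((i.1 - j.1 : ℤ) : ℝ) * τ.im =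
              (z.im - j.1 * τ.im) - (z.im - i.1 * τ.im) := by push_cast; ring
          rw [this]
          have := abs_sub (z.im - j.1 * τ.im) (z.im - i.1 * τ.im)
          linarith
        exact lt_of_mul_lt_mul_right h5 hσ0.le
      have hij' : |i.1 - j.1| < 2 := by exact_mod_cast hij
      rw [abs_lt] at hij'
      have : i.1 = j.1 ∨ j.1 = i.1 + 1 ∨ i.1 = j.1 + 1 := by omega
      rcases this with h | h | h
      · simp [h]
      · exact EqOn.eventuallyEq_of_mem (hstep i j h) hn
      · refine (EqOn.eventuallyEq_of_mem (hstep j i h) ?_).symm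
        rwa [inter_comm])
  have hcov : ball ((M + |B| + 1 : ℝ) : ℂ) (|B| + 1) ⊆ ⋃ k, U k := by
    intro z hz
    have h1 := abs_lt.1 (abs_re_sub_lt hz)
    have h2 := abs_im_sub_lt hz
    simp only [Complex.ofReal_re, Complex.ofReal_im, sub_zero] at h1 h2
    have hr := abs_sub_round (z.im / τ.im)
    have hm : |z.im - round (z.im / τ.im) * τ.im| ≤ σ / 2 := by
      have : z.im - round (z.im / τ.im) * τ.im = (z.im / τ.im - round (z.im / τ.im)) * τ.im := by
        field_simp
      rw [this, abs_mul]; nlinarith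
    have hk : |((round (z.im / τ.im) : ℤ) : ℝ)| ≤ N := by
      have h3 : |z.im / τ.im| < N := by
        rw [abs_div, div_lt_iff₀ hσ0]; linarith
      have h4 : |((round (z.im / τ.im) : ℤ) : ℝ)| < N + 1 := by
        have := abs_sub_abs_le_abs_sub ((round (z.im / τ.im) : ℤ) : ℝ) (z.im / τ.im)
        rw [abs_sub_comm] at this
        linarith
      have h5 : |round (z.im / τ.im)| < (N : ℤ) + 1 := by exact_mod_cast h4
      have h6 : |round (z.im / τ.im)| ≤ (N : ℤ) := by omega
      exact_mod_cast h6
    refine mem_iUnion.2 ⟨⟨round (z.im / τ.im), hk⟩, ?_, ?_⟩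
    · simp only [mem_ofPred_eq]; linarith
    · simp only [mem_ofPred_eq]; linarith
  have := hB H _ _ (hH.mono hcov)
  linarith [le_abs_self B]

/-- If no rotation occurs in the comparison motions, the half-strip is periodic. -/
lemma SubLimit.periodic (hne : hS.conical.Nonempty) {F : ℂ → S} {δ a b : ℝ} {t : ℕ → ℝ}
    {G : ℂ → S} (hδ : 0 < δ)
    (hF : LI (Reg hS) F (hstrip δ)) (h : SubLimit hS F δ a b t G) {u c : ℕ → ℂ}
    (hun : ∀ n, ‖u n‖ = 1)
    (hu1 : Tendsto u 𝒰 (𝓝 1)) (hc0 : Tendsto c 𝒰 (𝓝 0))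
    (hnear : ∀ᶠ n in (𝒰 : Filter ℕ), ∀ z : ℂ, t n + z ∈ hstrip δ → u n * z + c n ∈ strip a b →
        F (t n + z) = G (u n * z + c n))
    (hzero : ∀ᶠ n in (𝒰 : Filter ℕ), (u n).im = 0) :
    ∃ T > 0, ∀ z ∈ hstrip δ, F (z + (T : ℝ)) = F z := by
  have ha := h.ha
  have hb := h.hb
  have hre : Tendsto (fun n => (u n).re) 𝒰 (𝓝 1) := by
    have := (Complex.continuous_re.tendsto 1).comp hu1
    rw [Complex.one_re] at this; exact this
  set η := min (δ / 4) (1 / 4) with hη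
  have hη0 : 0 < η := lt_min (by linarith) (by norm_num)
  have hη1 : η ≤ δ / 4 := min_le_left _ _
  have hη2 : η ≤ 1 / 4 := min_le_right _ _
  have hcs := (tendsto_iff_dist_tendsto_zero.1 hc0).eventually_lt_const hη0
  have hgood : ∀ᶠ n in (𝒰 : Filter ℕ), u n = 1 ∧ ‖c n‖ < η ∧ 1 < t n ∧
      ∀ z : ℂ, t n + z ∈ hstrip δ → u n * z + c n ∈ strip a b →
        F (t n + z) = G (u n * z + c n) := by
    filter_upwards [hnear, hzero, hcs, hre.eventually_const_lt (show (0:ℝ) < 1 by norm_num),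
      h.ht.eventually_gt_atTop 1] with n h1 h2 h3 h4 h5
    refine ⟨?_, by simpa using h3, h5, h1⟩
    have h6 := Complex.sq_norm (u n)
    rw [hun, Complex.normSq_apply, h2] at h6
    apply Complex.ext
    · rw [Complex.one_re]; nlinarith
    · rw [h2, Complex.one_im]
  obtain ⟨n, hun1, hcn, htn, hnn⟩ := hgood.exists
  obtain ⟨m, ⟨hum1, hcm, htm, hmm⟩, htmn⟩ := (hgood.and (h.ht.eventually_gt_atTop (t n + 1))).exists
  rw [hun1] at hnn
  rw [hum1] at hmm
  simp only [one_mul] at hnn hmm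
  set τ : ℂ := ((t m - t n : ℝ) : ℂ) + (c n - c m) with hτ
  have hcn1 := abs_lt.1 ((Complex.abs_re_le_norm _).trans_lt hcn)
  have hcn2 := abs_lt.1 ((Complex.abs_im_le_norm _).trans_lt hcn)
  have hcm1 := abs_lt.1 ((Complex.abs_re_le_norm _).trans_lt hcm)
  have hcm2 := abs_lt.1 ((Complex.abs_im_le_norm _).trans_lt hcm)
  have hτre : τ.re = t m - t n + ((c n).re - (c m).re) := by simp [hτ]
  have hτim : τ.im = (c n).im - (c m).im := by simp [hτ]
  have hτpos : 0 < τ.re := by rw [hτre]; linarith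
  have hper : ∀ w ∈ hstrip δ, w + τ ∈ hstrip δ → F (w + τ) = F w := by
    intro w hw hw2
    refine LI.uniq (R := Reg hS) rigid_complex flat_Reg (G := fun w => F (tr τ w)) (H := F)
      (U := hstrip δ ∩ tr τ ⁻¹' hstrip δ)
      ((convex_hstrip δ).inter (motion_convex _ (convex_hstrip δ))).isPreconnected
      (hF.comp_motion _ fun z hz => hz.2) (hF.mono inter_subset_left) (z := t n) ?_ ?_
      ⟨hw, by simpa using hw2⟩
    · simp only [mem_inter_iff, hstrip, mem_ofPred_eq, mem_preimage, IsometryEquiv.addRight_apply,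
        Complex.add_re, Complex.add_im, Complex.ofReal_re, Complex.ofReal_im, hτre, hτim]
      refine ⟨⟨by linarith, by linarith, by linarith⟩, by linarith, by linarith, by linarith⟩
    · filter_upwards [ball_mem_nhds (t n : ℂ) hη0] with v hv
      have h1 := abs_lt.1 (abs_re_sub_lt hv)
      have h2 := abs_lt.1 (abs_im_sub_lt hv)
      simp only [Complex.ofReal_re, Complex.ofReal_im, sub_zero] at h1 h2
      have e1 := hnn (v - t n) (by
        simp only [add_sub_cancel, hstrip, mem_ofPred_eq]
        refine ⟨by linarith, by linarith, by linarith⟩) (by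
        simp only [strip, mem_ofPred_eq, Complex.add_im, Complex.sub_im, Complex.ofReal_im]
        constructor <;> linarith)
      have e2 := hmm (v - t n + c n - c m) (by
        simp only [hstrip, mem_ofPred_eq, Complex.add_re, Complex.sub_re, Complex.add_im,
          Complex.sub_im, Complex.ofReal_im, Complex.ofReal_re]
        refine ⟨by linarith, by linarith, by linarith⟩) (by
        simp only [strip, mem_ofPred_eq, Complex.add_im, Complex.sub_im, Complex.ofReal_im]
        constructor <;> linarith)
      rw [sub_add_cancel, ← e1, add_sub_cancel] at e2
      rw [← e2, IsometryEquiv.addRight_apply, hτ]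
      congr 1
      push_cast
      ring
  by_cases hτ0 : τ.im = 0
  · refine ⟨τ.re, hτpos, fun z hz => ?_⟩
    have e : ((τ.re : ℝ) : ℂ) = τ := Complex.ext (by simp) (by simp [hτ0])
    rw [e]
    refine hper z hz ?_
    obtain ⟨h1, h2, h3⟩ := hz
    simp only [hstrip, mem_ofPred_eq, Complex.add_re, Complex.add_im, hτ0, add_zero]
    exact ⟨by linarith, h2, h3⟩
  · refine (no_skew_period hne hF hτpos hτ0 ?_ hper).elim
    rw [hτim, abs_lt]
    constructor <;> linarith

/-- A flat half-strip immersed in a closed surface with at least one conical point is periodic. -/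
theorem strip_periodic (hne : hS.conical.Nonempty) {F : ℂ → S} {δ : ℝ} (hδ : 0 < δ)
    (hF : LI (Reg hS) F (hstrip δ)) : ∃ T > 0, ∀ z ∈ hstrip δ, F (z + (T : ℝ)) = F z := by
  by_contra hcon
  have hwide : ∀ k : ℕ, ∃ a b t G, SubLimit hS F δ a b t G ∧ k * (δ / 2) ≤ a + b := by
    intro k
    induction k with
    | zero =>
      obtain ⟨t, G, h⟩ := SubLimit.base hF
      exact ⟨δ, δ, t, G, h, by simp; linarith⟩
    | succ k ih =>
      obtain ⟨a, b, t, G, h, hab⟩ := ih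
      obtain ⟨u, c, hun, hu1, hc0, hnear⟩ := h.near hδ hF
      have htri : (∀ᶠ n in (𝒰 : Filter ℕ), 0 < (u n).im) ∨
          ((∀ᶠ n in (𝒰 : Filter ℕ), (u n).im = 0) ∨ ∀ᶠ n in (𝒰 : Filter ℕ), (u n).im < 0) := by
        rw [← Ultrafilter.eventually_or, ← Ultrafilter.eventually_or]
        refine Eventually.of_forall fun n => ?_
        rcases lt_trichotomy (u n).im 0 with h | h | h <;> tauto
      rcases htri with hp | hz | hm
      · obtain ⟨t', G', h'⟩ := h.widen hδ hF hu1 hc0 hnear hp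
        exact ⟨_, _, t', G', h', by push_cast; linarith⟩
      · exact (hcon (h.periodic hne hδ hF hun hu1 hc0 hnear hz)).elim
      · obtain ⟨t', G', h'⟩ := h.conj.widen hδ (hstrip_conj hF) (u := fun n => cj (u n))
          (c := fun n => cj (c n))
          (by have := (cj.continuous.tendsto 1).comp hu1; rw [cj_apply, map_one] at this; exact this)
          (by have := (cj.continuous.tendsto 0).comp hc0; rw [cj_apply, map_zero] at this; exact this)
          (by
            filter_upwards [hnear] with n hn z hz1 hz2
            have := hn (cj z) (by
              obtain ⟨h1, h2, h3⟩ := hz1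
              simp only [Complex.add_re, Complex.add_im, Complex.ofReal_re, Complex.ofReal_im,
                zero_add] at h1 h2 h3
              simp only [cj_apply, hstrip, mem_ofPred_eq, Complex.add_re, Complex.add_im,
                Complex.ofReal_re, Complex.ofReal_im, Complex.conj_re, Complex.conj_im]
              exact ⟨h1, by linarith, by linarith⟩) (by
              obtain ⟨h1, h2⟩ := hz2
              simp only [cj_apply, Complex.add_im, Complex.mul_im, Complex.conj_re,
                Complex.conj_im] at h1 h2
              simp only [cj_apply, strip, mem_ofPred_eq, Complex.add_im, Complex.mul_im,
                Complex.conj_re, Complex.conj_im]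
              constructor <;> linarith)
            simpa [cj_apply] using this)
          (by filter_upwards [hm] with n hn; simpa [cj_apply] using hn)
        have h2 := h'.conj
        simp only [cj_apply, Complex.conj_conj] at h2
        exact ⟨_, _, t', _, h2, by push_cast; linarith⟩
  obtain ⟨B, hB⟩ := no_big_disc hne
  obtain ⟨k, hk⟩ := exists_nat_gt (2 * B / (δ / 2))
  rw [div_lt_iff₀ (by linarith)] at hk
  obtain ⟨a, b, t, G, h, hab⟩ := hwide k
  have := hB G (((b - a) / 2 : ℝ) * Complex.I) ((a + b) / 2) (h.li.mono (by
    intro z hz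
    have h1 := abs_lt.1 (abs_im_sub_lt hz)
    simp only [Complex.mul_im, Complex.ofReal_re, Complex.I_im, Complex.ofReal_im,
      Complex.I_re, mul_one, mul_zero, add_zero] at h1
    exact ⟨by linarith, by linarith⟩))
  linarith

end

/-! ### Existence of conical points -/

section

variable {S : Type} [MetricSpace S] {hS : ESCS S}

/-- Without conical points the chart at a point extends to a local isometry of the whole plane. -/
lemma exists_develop {ε : ℝ} (hε : 0 < ε) (hch : ∀ q : S, ∃ K, IsChart hS K q ε) :
    ∃ E : ℂ → S, LI (Reg hS) E univ := by
  have hne : Nonempty S := hS.connected.toNonempty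
  obtain ⟨K0, hK0⟩ := hch hne.some
  have key : ∀ n : ℕ, ∃ G : ℂ → S, LI (Reg hS) G (ball 0 (ε * (n + 1))) ∧ G =ᶠ[𝓝 0] K0 := by
    intro n
    induction n with
    | zero => exact ⟨K0, by simpa using hK0.li, EventuallyEq.rfl⟩
    | succ n ih =>
      obtain ⟨G, hG, hG0⟩ := ih
      set R := ε * ((n : ℝ) + 1) with hR
      have hR0 : 0 < R := by positivity
      obtain ⟨H, hH, hHG⟩ := hG.ext_balls flat_Reg isOpen_ball (convex_ball _ _)
        (nonempty_ball.2 hR0) (fun _ => ε) (by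
          intro u hu
          refine ⟨hε, ?_⟩
          obtain ⟨K, hK⟩ := hch (G u)
          obtain ⟨s, hs, hsR⟩ := Metric.isOpen_iff.1 isOpen_ball u hu
          obtain ⟨Φ, hΦ, hΦG⟩ := (hG.mono hsR).chart hs hK
          refine ⟨_, hK.li.comp_motion Φ (motion_mapsTo_ball Φ hΦ ε), ?_⟩
          filter_upwards [ball_mem_nhds u (lt_min hs hε)] with z hz
          exact (hΦG z hz).symm)
      refine ⟨H, hH.mono ?_, (hHG.eventuallyEq_of_mem (ball_mem_nhds 0 hR0)).trans hG0⟩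
      intro z hz
      have hz' : ‖z‖ < R + ε := by
        have := mem_ball_zero_iff.1 hz
        push_cast at this; linarith
      rw [mem_iUnion₂]
      refine ⟨((R / (R + ε) : ℝ) : ℂ) * z, ?_, ?_⟩
      · rw [mem_ball_zero_iff, norm_mul, Complex.norm_real, Real.norm_of_nonneg (by positivity),
          div_mul_eq_mul_div, div_lt_iff₀ (by positivity)]
        exact mul_lt_mul_of_pos_left hz' hR0
      · have e : z - ((R / (R + ε) : ℝ) : ℂ) * z = ((ε / (R + ε) : ℝ) : ℂ) * z := by
          have : (ε / (R + ε) : ℝ) = 1 - R / (R + ε) := by field_simp; ring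
          rw [this]; push_cast; ring
        rw [mem_ball, dist_eq_norm, e, norm_mul, Complex.norm_real,
          Real.norm_of_nonneg (by positivity), div_mul_eq_mul_div, div_lt_iff₀ (by positivity)]
        exact mul_lt_mul_of_pos_left hz' hε
  choose G hG hG0 using key
  obtain ⟨H, hH, _⟩ := LI.glue (flat_Reg (hS := hS)) (U := fun n : ℕ => ball (0:ℂ) (ε * (n + 1)))
    (fun _ => isOpen_ball) (fun _ => convex_ball _ _) hG
    (fun i j _ => ⟨0, ⟨mem_ball_self (by positivity), mem_ball_self (by positivity)⟩,
      (hG0 i).trans (hG0 j).symm⟩)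
  refine ⟨H, hH.mono fun z _ => ?_⟩
  obtain ⟨n, hn⟩ := exists_nat_gt (‖z‖ / ε)
  rw [mem_iUnion]
  refine ⟨n, mem_ball_zero_iff.2 ?_⟩
  rw [div_lt_iff₀ hε] at hn
  nlinarith

/-- The motions of the plane preserving a map `E`. -/
def invGroup (E : ℂ → S) : Subgroup (ℂ ≃ᵢ ℂ) where
  carrier := {Φ | ∀ z, E (Φ z) = E z}
  one_mem' := fun _ => rfl
  mul_mem' := fun {Φ Ψ} h1 h2 z => (h1 (Ψ z)).trans (h2 z)
  inv_mem' := fun {Φ} h z => by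
    have := h (Φ⁻¹ z)
    rw [← this, show Φ (Φ⁻¹ z) = z by simp]

instance (E : ℂ → S) : MulAction (invGroup E) ℂ where
  smul Φ z := Φ.1 z
  one_smul _ := rfl
  mul_smul _ _ _ := rfl

/-- `a² b² ≠ b² a²` in the free group on two generators. -/
lemma freeGroup_sq_ne : (FreeGroup.of true : FreeGroup Bool) ^ 2 * FreeGroup.of false ^ 2 ≠
    FreeGroup.of false ^ 2 * FreeGroup.of true ^ 2 := by
  intro h
  have := congrArg (FreeGroup.lift (fun b : Bool =>
    if b then (c[0, 1, 2] : Equiv.Perm (Fin 4)) else c[1, 2, 3])) h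
  simp only [map_mul, map_pow, FreeGroup.lift_apply_of] at this
  revert this
  decide

/-- Without conical points `S` would be covered by the plane with deck transformations acting
freely by motions. The squares of such motions are translations, so they commute, which is
impossible in a group containing a free group of rank two. -/
theorem conical_nonempty (hS : ESCS S) : hS.conical.Nonempty := by
  by_contra hemp
  rw [Finset.not_nonempty_iff_eq_empty] at hemp
  obtain ⟨ε, hε, hch⟩ := uniform_chart hS one_pos
  replace hch : ∀ q : S, ∃ K, IsChart hS K q ε := fun q => hch q (by simp [hemp])
  obtain ⟨E, hE⟩ := exists_develop hε hch
  have hiso : ∀ u, IsoOn E (ball u ε) := by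
    intro u
    obtain ⟨K, hK⟩ := hch (E u)
    have := ((hE.mono (subset_univ (ball u ε))).isoOn_ball hε hK).1
    rwa [min_self] at this
  have hfix : ∀ Φ : invGroup E, ∀ w, Φ.1 w = w → Φ = 1 := by
    intro Φ w hw
    apply Subtype.ext
    apply motion_ext (u := w)
    filter_upwards [ball_mem_nhds w hε] with z hz
    exact (hiso w).injOn (motion_mapsTo_ball Φ.1 hw ε hz) hz (Φ.2 z)
  have hcont : Continuous E := continuous_iff_continuousAt.2 fun u => hE.continuousAt (mem_univ u)
  have hsurj : Function.Surjective E := by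
    intro y
    obtain ⟨w, _, h⟩ := (hE.mono (subset_univ (ball 0 (dist y (E 0) + 1)))).ball_subset_image
      (show y ∈ ball (E 0) _ by rw [mem_ball]; linarith)
    exact ⟨w, h⟩
  have hopen : IsOpenMap E := by
    rw [isOpenMap_iff_nhds_le]
    intro u A hA
    obtain ⟨r, hr, hrA⟩ := Metric.mem_nhds_iff.1 (mem_map.1 hA)
    refine Filter.mem_of_superset (ball_mem_nhds (E u) hr) ?_
    exact (hE.mono (subset_univ _)).ball_subset_image.trans (image_subset_iff.2 hrA)
  have hq : IsQuotientCoveringMap E (invGroup E) :=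
    { toIsQuotientMap := hopen.isQuotientMap hcont hsurj
      continuous_const_smul := fun Φ => Φ.1.continuous
      apply_eq_iff_mem_orbit := by
        intro e1 e2
        constructor
        · intro h
          obtain ⟨K, hK⟩ := hch (E e1)
          obtain ⟨Φ1, h1, h1'⟩ := (hE.mono (subset_univ (ball e1 ε))).chart hε hK
          rw [h] at hK
          obtain ⟨Φ2, h2, h2'⟩ := (hE.mono (subset_univ (ball e2 ε))).chart hε hK
          rw [min_self] at h1' h2'
          set Φ := Φ2.trans Φ1.symm with hΦ
          have hΦe : Φ e2 = e1 := by simp [hΦ, h2, ← h1]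
          have := LI.uniq rigid_complex flat_Reg isPreconnected_univ
            (hE.comp_motion Φ (V := univ) (mapsTo_univ _ _)) hE (mem_univ e2) (by
              filter_upwards [ball_mem_nhds e2 hε] with z hz
              rw [h1' _ (motion_mapsTo_ball Φ hΦe ε hz), h2' z hz]
              simp [hΦ])
          exact ⟨⟨Φ, fun z => this (mem_univ z)⟩, hΦe⟩
        · rintro ⟨Φ, rfl⟩
          exact Φ.2 e2
      disjoint := by
        intro e
        refine ⟨ball e ε, ball_mem_nhds e hε, ?_⟩
        rintro Φ ⟨_, ⟨w, hw, rfl⟩, hw'⟩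
        exact hfix Φ w ((hiso e).injOn hw' hw (Φ.2 w)) }
  have htr : ∀ Φ : invGroup E, ∃ c : ℂ, ∀ z, (Φ ^ 2).1 z = z + c := by
    intro Φ
    obtain ⟨a, ha, h | h⟩ := motion_form Φ.1
    · refine ⟨2 * Φ.1 0, fun z => ?_⟩
      have ha1 : a = 1 := by
        by_contra hne
        have hne' : 1 - a ≠ 0 := sub_ne_zero.2 (Ne.symm hne)
        have := hfix Φ (Φ.1 0 / (1 - a)) (by rw [h (Φ.1 0 / (1 - a))]; field_simp; ring)
        subst this
        have h1 := h 1
        have h0 : ((1 : invGroup E).1 0 : ℂ) = 0 := rfl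
        rw [h0] at h1
        apply hne
        have h2 : ((1 : invGroup E).1 1 : ℂ) = 1 := rfl
        rw [h2] at h1
        simpa using h1.symm
      rw [pow_two]
      change Φ.1 (Φ.1 z) = _
      rw [h (Φ.1 z), h z, ha1]; ring
    · refine ⟨a * (starRingEnd ℂ) (Φ.1 0) + Φ.1 0, fun z => ?_⟩
      rw [pow_two]
      change Φ.1 (Φ.1 z) = _
      rw [h (Φ.1 z), h z]
      simp only [map_add, map_mul, Complex.conj_conj]
      have : a * (starRingEnd ℂ) a = 1 := by rw [Complex.mul_conj']; simp [ha]
      linear_combination z * this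
  obtain ⟨x, ι, hι⟩ := hS.genus_ge_two
  obtain ⟨e, he⟩ := hsurj x
  set j := (hq.fundamentalGroupToMulOpposite ⟨e, he⟩).comp ι with hj
  have hjinj : Function.Injective j :=
    (hq.fundamentalGroupToMulOpposite_injective ⟨e, he⟩).comp hι
  apply freeGroup_sq_ne
  apply hjinj
  rw [map_mul, map_mul, map_pow, map_pow]
  apply MulOpposite.unop_injective
  rw [MulOpposite.unop_mul, MulOpposite.unop_mul, MulOpposite.unop_pow, MulOpposite.unop_pow]
  obtain ⟨c1, h1⟩ := htr (j (FreeGroup.of true)).unop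
  obtain ⟨c2, h2⟩ := htr (j (FreeGroup.of false)).unop
  apply Subtype.ext
  apply IsometryEquiv.ext
  intro z
  change (_ ^ 2 : invGroup E).1 ((_ ^ 2 : invGroup E).1 z) =
    (_ ^ 2 : invGroup E).1 ((_ ^ 2 : invGroup E).1 z)
  rw [h1, h2, h2, h1]; ring

end

/-! ### Development around a conical point -/

section

/-- Two germs of local isometries of the plane with the same value differ by a motion. -/
lemma LI.germ_motion {S : Type} [MetricSpace S] {hS : ESCS S} {G H : ℂ → S} {t u : ℂ}
    (hG : LI (Reg hS) G {t}) (hH : LI (Reg hS) H {u})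
    (h : G t = H u) : ∃ Φ : ℂ ≃ᵢ ℂ, Φ t = u ∧ ∀ᶠ z in 𝓝 t, H (Φ z) = G z := by
  obtain ⟨s, hs, hGs, _⟩ := hG.nhds isOpen_Reg
  obtain ⟨s', hs', hHs, _⟩ := hH.nhds isOpen_Reg
  obtain ⟨ρ, K, hK⟩ := exists_chart (hG t rfl).1
  obtain ⟨Φ1, h1, h1'⟩ := hGs.chart hs hK
  rw [h] at hK
  obtain ⟨Φ2, h2, h2'⟩ := hHs.chart hs' hK
  have hΦe : (Φ1.trans Φ2.symm) t = u := by simp [h1, ← h2]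
  refine ⟨Φ1.trans Φ2.symm, hΦe, ?_⟩
  filter_upwards [ball_mem_nhds t (lt_min hs hK.pos), ball_mem_nhds t (lt_min hs' hK.pos)]
    with z hz hz'
  rw [h1' z hz, h2' _ (motion_mapsTo_ball _ hΦe _ hz')]
  simp

lemma angDist_eq {θ a b : ℝ} (h : |a - b| ≤ θ / 2) : angDist θ a b = |a - b| := by
  unfold angDist
  apply le_antisymm
  · have hb : BddBelow {d : ℝ | ∃ k : ℤ, d = |a - b + θ * k|} :=
      ⟨0, by rintro _ ⟨k, rfl⟩; positivity⟩
    exact csInf_le hb ⟨0, by simp⟩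
  · refine le_csInf (show Set.Nonempty {d : ℝ | ∃ k : ℤ, d = |a - b + θ * k|} from ⟨_, 0, rfl⟩) ?_
    rintro _ ⟨k, rfl⟩
    rcases eq_or_ne k 0 with rfl | hk
    · simp
    have hk1 : (1:ℝ) ≤ |(k:ℝ)| := by
      have := Int.one_le_abs hk
      exact_mod_cast this
    have hθ : 0 ≤ θ := by linarith [abs_nonneg (a - b)]
    have h1 : θ ≤ |θ * k| := by rw [abs_mul, abs_of_nonneg hθ]; nlinarith
    have h2 : |θ * k| ≤ |a - b + θ * k| + |a - b| := by
      have := abs_sub (a - b + θ * k) (a - b)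
      rwa [add_sub_cancel_left] at this
    linarith

lemma angDist_add (θ a b : ℝ) (m n : ℤ) : angDist θ (a - m • θ) (b - n • θ) = angDist θ a b := by
  unfold angDist
  congr 1
  ext d
  simp only [mem_ofPred_eq, zsmul_eq_mul]
  constructor
  · rintro ⟨k, rfl⟩
    exact ⟨k - m + n, by push_cast; congr 1; ring⟩
  · rintro ⟨k, rfl⟩
    exact ⟨k + m - n, by push_cast; congr 1; ring⟩

lemma coneDist_zero {θ r ϑ : ℝ} (hr : 0 ≤ r) : coneDist θ (0, 0) (r, ϑ) = r := by
  unfold coneDist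
  split_ifs <;> simp [Real.sqrt_sq hr]

lemma coneDist_self {θ : ℝ} (hθ : 0 ≤ θ) (x : ℝ × ℝ) : coneDist θ x x = 0 := by
  unfold coneDist
  rw [angDist_eq (by simpa using by linarith), sub_self, abs_zero, if_pos Real.pi_pos.le]
  simp; ring_nf; simp

section polar

variable {θ : ℝ} (hθ : 0 < θ) (β : ℝ)

/-- Polar coordinates on the cone of angle `θ`, with the angle shifted by `β`. -/
def pol (z : ℂ) : ℝ × ℝ := (‖z‖, toIcoMod hθ 0 (β + z.arg))

lemma coneDist_pol (h2 : 2 * Real.pi < θ) {z w : ℂ} (h : |z.arg - w.arg| ≤ Real.pi) :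
    coneDist θ (pol hθ β z) (pol hθ β w) = dist z w := by
  have e : angDist θ (pol hθ β z).2 (pol hθ β w).2 = |z.arg - w.arg| := by
    simp only [pol, toIcoMod]
    rw [angDist_add, angDist_eq] <;> rw [add_sub_add_left_eq_sub]
    linarith
  unfold coneDist
  rw [e, if_pos h, Real.cos_abs, dist_eq_norm]
  rw [← Real.sqrt_sq (norm_nonneg (z - w)), norm_sub_sq_form, Real.cos_sub]
  simp only [pol]
  congr 1
  have hz := Complex.norm_mul_cos_arg z
  have hz' := Complex.norm_mul_sin_arg z
  have hw := Complex.norm_mul_cos_arg w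
  have hw' := Complex.norm_mul_sin_arg w
  have ez : ‖z‖ ^ 2 = z.re ^ 2 + z.im ^ 2 := by simpa using norm_sub_sq_form z 0
  have ew : ‖w‖ ^ 2 = w.re ^ 2 + w.im ^ 2 := by simpa using norm_sub_sq_form w 0
  rw [ez, ew, ← hz, ← hz', ← hw, ← hw']
  ring

lemma pol_inj (h2 : 2 * Real.pi < θ) {z w : ℂ} (h : pol hθ β z = pol hθ β w) : z = w := by
  simp only [pol, Prod.mk.injEq] at h
  obtain ⟨h1, h3⟩ := h
  have : z.arg = w.arg := by
    rw [toIcoMod, toIcoMod] at h3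
    set m := toIcoDiv hθ 0 (β + z.arg)
    set n := toIcoDiv hθ 0 (β + w.arg)
    have h4 : z.arg - w.arg = ((m - n : ℤ) : ℝ) * θ := by
      simp only [zsmul_eq_mul] at h3; push_cast; linarith
    rcases eq_or_ne (m - n) 0 with h0 | h0
    · rw [h0] at h4; simp at h4; linarith
    · have hk1 : (1:ℝ) ≤ |((m - n : ℤ):ℝ)| := by
        have := Int.one_le_abs h0
        exact_mod_cast this
      have h5 : |z.arg - w.arg| < 2 * Real.pi := by
        rw [abs_lt]
        constructor <;> linarith [z.arg_le_pi, w.arg_le_pi, z.neg_pi_lt_arg, w.neg_pi_lt_arg]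
      rw [h4, abs_mul, abs_of_pos hθ] at h5
      nlinarith
  exact Complex.ext_norm_arg h1 this

end polar

variable {S : Type} [MetricSpace S] {hS : ESCS S}

/-- Near a conical point `c`, a germ of local isometry `G` at `t` extends to the development `K`
of the punctured cone, along every convex set avoiding the point `z₀` that develops `c`. -/
theorem cone_develop {c : S} (hc : c ∈ hS.conical) : ∃ r > 0, ∀ (G : ℂ → S) (t : ℂ),
    LI (Reg hS) G {t} → dist (G t) c < r → ∃ (z₀ : ℂ) (K : ℂ → S), dist t z₀ = dist (G t) c ∧
      K =ᶠ[𝓝 t] G ∧ ∀ V : Set ℂ, Convex ℝ V → V ⊆ ball z₀ r → t ∈ V → z₀ ∉ V →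
        LI (Reg hS) K V ∧ InjOn K V ∧ ∀ z ∈ V, dist (K z) c = dist z z₀ := by
  classical
  have : Nonempty S := ⟨c⟩
  have h2 := hS.angle_gt c hc
  obtain ⟨ε, hε, f, hfc, hfd, hfi⟩ := hS.cone_at c hc
  set θ := hS.angle c with hθdef
  have hθ : 0 < θ := by linarith [Real.pi_pos]
  obtain ⟨δ, hδ, hδc⟩ : ∃ δ > 0, ∀ y ∈ ball c δ, y ≠ c → y ∈ Reg hS := by
    have hcl : IsClosed ((hS.conical.erase c : Finset S) : Set S) := Finset.isClosed _
    obtain ⟨δ, hδ, h⟩ := Metric.isOpen_iff.1 hcl.isOpen_compl c (by simp)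
    exact ⟨δ, hδ, fun y hy hyc hy' => h hy (by simp [hyc, hy'])⟩
  have hcε : c ∈ ball c ε := mem_ball_self hε
  refine ⟨min ε δ, lt_min hε hδ, fun G t hG hGt => ?_⟩
  set q := G t with hq
  have hqε : q ∈ ball c ε := hGt.trans_le (min_le_left _ _)
  have hqc : q ≠ c := fun h => (hG t rfl).1 (by rw [← hq, h]; exact hc)
  obtain ⟨hρ, hϑ⟩ : f q ∈ Ioo 0 ε ×ˢ Ico 0 θ := by
    have := hfi ▸ mem_image_of_mem f hqε
    rcases this with h | h
    · have := hfd q hqε c hcε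
      rw [h, hfc, coneDist_self hθ.le] at this
      exact (hqc (dist_eq_zero.1 this.symm)).elim
    · exact h
  have hρq : dist q c = (f q).1 := by
    rw [dist_comm, ← hfd c hcε q hqε, hfc]
    exact coneDist_zero (ϑ := (f q).2) hρ.1.le
  set ρ := (f q).1
  set β := (f q).2
  set P := pol hθ β with hP
  set K0 : ℂ → S := fun z => Function.invFunOn f (ball c ε) (P z) with hK0
  have hPm : ∀ z : ℂ, z ≠ 0 → ‖z‖ < ε → P z ∈ f '' ball c ε := by
    intro z hz hzε
    rw [hfi]
    right
    refine ⟨⟨norm_pos_iff.2 hz, hzε⟩, ?_⟩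
    have := toIcoMod_mem_Ico hθ 0 (β + z.arg)
    rwa [zero_add] at this
  have hK1 : ∀ z : ℂ, z ≠ 0 → ‖z‖ < ε → K0 z ∈ ball c ε := fun z hz hzε =>
    Function.invFunOn_mem (hPm z hz hzε)
  have hK2 : ∀ z : ℂ, z ≠ 0 → ‖z‖ < ε → f (K0 z) = P z := fun z hz hzε =>
    Function.invFunOn_eq (hPm z hz hzε)
  have hK3 : ∀ z : ℂ, z ≠ 0 → ‖z‖ < ε → dist (K0 z) c = ‖z‖ := by
    intro z hz hzε
    rw [dist_comm, ← hfd c hcε _ (hK1 z hz hzε), hfc, hK2 z hz hzε]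
    exact coneDist_zero (norm_nonneg z)
  have hK4 : LI (Reg hS) K0 (Complex.slitPlane ∩ ball 0 (min ε δ)) := by
    rintro u ⟨hu, hu'⟩
    rw [mem_ball_zero_iff, lt_min_iff] at hu'
    have hu0 := Complex.slitPlane_ne_zero hu
    constructor
    · apply hδc
      · rw [mem_ball, hK3 u hu0 hu'.1]; exact hu'.2
      · intro h
        have := hK3 u hu0 hu'.1
        rw [h, dist_self] at this
        exact hu0 (norm_eq_zero.1 this.symm)
    · have hca := Metric.tendsto_nhds.1 (Complex.continuousAt_arg hu).tendsto (Real.pi / 2)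
        (by positivity)
      have hn : ∀ᶠ z : ℂ in 𝓝 u, ‖z‖ < ε := continuous_norm.continuousAt.eventually_lt_const hu'.1
      have h0 : ∀ᶠ z : ℂ in 𝓝 u, z ≠ 0 := isOpen_ne.mem_nhds hu0
      obtain ⟨r, hr, h⟩ := Metric.eventually_nhds_iff_ball.1 (hca.and (hn.and h0))
      refine ⟨r, hr, fun z hz w hw => ?_⟩
      obtain ⟨z1, z2, z3⟩ := h z hz
      obtain ⟨w1, w2, w3⟩ := h w hw
      rw [← hfd _ (hK1 z z3 z2) _ (hK1 w w3 w2), hK2 z z3 z2, hK2 w w3 w2]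
      apply coneDist_pol hθ β h2
      rw [← Real.dist_eq]
      linarith [dist_triangle_right z.arg w.arg u.arg]
  have hρn : ‖(ρ : ℂ)‖ = ρ := by rw [Complex.norm_real, Real.norm_of_nonneg hρ.1.le]
  have hρ0 : (ρ : ℂ) ≠ 0 := by simpa using hρ.1.ne'
  have hKq : K0 ρ = q := by
    have hPρ : P ρ = f q := by
      simp only [hP, pol, hρn, Complex.arg_ofReal_of_nonneg hρ.1.le, add_zero]
      rw [(toIcoMod_eq_self hθ).2 (by simpa using hϑ)]
    rw [← dist_eq_zero, ← hfd _ (hK1 _ hρ0 (by rw [hρn]; exact hρ.2)) q hqε,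
      hK2 _ hρ0 (by rw [hρn]; exact hρ.2), hPρ, coneDist_self hθ.le]
  have hρs : (ρ : ℂ) ∈ Complex.slitPlane ∩ ball 0 (min ε δ) := by
    refine ⟨by simp [Complex.slitPlane, hρ.1], ?_⟩
    rw [mem_ball_zero_iff, hρn, ← hρq]; exact hGt
  obtain ⟨Φ, hΦ, hΦG⟩ := hG.germ_motion (u := (ρ:ℂ)) (hK4.mono (by simpa using hρs)) hKq.symm
  have hΦz : ∀ z, dist z (Φ.symm 0) = ‖Φ z‖ := by
    intro z
    rw [← Φ.dist_eq]; simp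
  refine ⟨Φ.symm 0, fun z => K0 (Φ z), ?_, hΦG, ?_⟩
  · rw [hΦz, hΦ, hρn, hρq]
  · intro V hVc hVb htV hzV
    have hmt : MapsTo Φ V (Complex.slitPlane ∩ ball 0 (min ε δ)) := by
      intro z hz
      refine ⟨?_, by rw [mem_ball_zero_iff, ← hΦz]; exact hVb hz⟩
      by_contra hns
      rw [Complex.mem_slitPlane_iff_not_le_zero, not_not] at hns
      obtain ⟨x, hx, hxz⟩ : ∃ x : ℝ, x ≤ 0 ∧ Φ z = x := by
        rw [Complex.le_def] at hns
        exact ⟨(Φ z).re, by simpa using hns.1, Complex.ext (by simp) (by simpa using hns.2)⟩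
      have h0 : (0 : ℂ) ∈ Φ.symm ⁻¹' V := by
        have hd : 0 < ρ - x := by linarith [hρ.1]
        have := motion_convex Φ.symm hVc (x := Φ z) (y := (ρ : ℂ)) (by simpa using hz)
          (by rw [mem_preimage, ← hΦ]; simpa using htV)
          (a := ρ / (ρ - x)) (b := -x / (ρ - x)) (div_nonneg hρ.1.le hd.le)
          (div_nonneg (by linarith) hd.le) (by rw [← add_div]; field_simp; ring)
        rw [hxz] at this
        convert this using 1
        rw [Complex.real_smul, Complex.real_smul, ← Complex.ofReal_mul, ← Complex.ofReal_mul,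
          ← Complex.ofReal_add, ← Complex.ofReal_zero]
        congr 1
        field_simp; ring
      exact hzV h0
    refine ⟨hK4.comp_motion Φ hmt, ?_, ?_⟩
    · intro z hz w hw hzw
      have hz' := hmt hz
      have hw' := hmt hw
      have z0 := Complex.slitPlane_ne_zero hz'.1
      have w0 := Complex.slitPlane_ne_zero hw'.1
      have z1 := (mem_ball_zero_iff.1 hz'.2).trans_le (min_le_left _ _)
      have w1 := (mem_ball_zero_iff.1 hw'.2).trans_le (min_le_left _ _)
      apply Φ.injective
      apply pol_inj hθ β h2
      rw [← hP, ← hK2 _ z0 z1, ← hK2 _ w0 w1]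
      exact congrArg f hzw
    · intro z hz
      have hz' := hmt hz
      rw [hΦz]
      exact hK3 _ (Complex.slitPlane_ne_zero hz'.1)
        ((mem_ball_zero_iff.1 hz'.2).trans_le (min_le_left _ _))

end

/-! ### Developments along a geodesic of the universal cover -/

section

variable {S X : Type} [MetricSpace S] [MetricSpace X] {hS : ESCS S} {cov : UnivCover S X}

variable (hS cov) in
/-- The regular points of the universal cover. -/
def RegX : Set X := cov.p ⁻¹' Reg hS

lemma isOpen_RegX : IsOpen (RegX hS cov) := isOpen_Reg.preimage cov.covering.continuous

lemma LI.proj {M : Type*} [MetricSpace M] {G : M → X} {V : Set M} (h : LI (RegX hS cov) G V) :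
    LI (Reg hS) (fun z => cov.p (G z)) V := by
  intro u hu
  obtain ⟨h1, r, hr, h2⟩ := h u hu
  obtain ⟨ε, hε, h3⟩ := cov.localIsom (G u)
  refine ⟨h1, min r ε, lt_min hr hε, ?_⟩
  refine IsoOn.comp (f := cov.p) (g := G) (B := ball (G u) ε) (fun a ha b hb => h3 a ha b hb)
    (h2.mono (ball_subset_ball (min_le_left _ _))) ?_
  exact ((h2.mono (ball_subset_ball (min_le_left r ε))).mapsTo_ball (lt_min hr hε)).mono_right
    (ball_subset_ball (min_le_right _ _))

lemma flat_RegX : Flat (RegX hS cov) := by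
  intro x hx
  obtain ⟨ε, hε, f, hf⟩ := flat_Reg (hS := hS) _ hx
  obtain ⟨δ, hδ, hp⟩ := cov.localIsom x
  refine ⟨min ε δ, lt_min hε hδ, f ∘ cov.p, IsoOn.comp hf (B := ball (cov.p x) ε)
    (fun a ha b hb => hp a (ball_subset_ball (min_le_right _ _) ha) b
      (ball_subset_ball (min_le_right _ _) hb)) ?_⟩
  intro y hy
  rw [mem_ball, hp y (ball_subset_ball (min_le_right _ _) hy) x (mem_ball_self hδ)]
  exact ball_subset_ball (min_le_left _ _) hy

/-- Local isometries defined on convex open sets lift to the universal cover. -/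
lemma exists_lift {V : Set ℂ} (hVo : IsOpen V) (hVc : Convex ℝ V) {K : ℂ → S}
    (hK : LI (Reg hS) K V) {t : ℂ} (ht : t ∈ V) {x : X} (hx : cov.p x = K t) :
    ∃ L : ℂ → X, LI (RegX hS cov) L V ∧ L t = x ∧ ∀ z ∈ V, cov.p (L z) = K z := by
  classical
  have : ContractibleSpace V := hVc.contractibleSpace ⟨t, ht⟩
  have : LocallyPathConnectedSpace V := hVo.locallyPathConnectedSpace
  obtain ⟨F, ⟨hF0, hF⟩, -⟩ := cov.covering.existsUnique_continuousMap_lifts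
    (⟨V.domRestrict K, hK.continuousOn.domRestrict⟩ : C(V, S)) ⟨t, ht⟩ x hx
  set L : ℂ → X := fun z => if h : z ∈ V then F ⟨z, h⟩ else x with hL
  have hLF : ∀ z (h : z ∈ V), L z = F ⟨z, h⟩ := fun z h => by simp [hL, h]
  have hLp : ∀ z ∈ V, cov.p (L z) = K z := fun z h => by
    rw [hLF z h]; exact congrFun hF ⟨z, h⟩
  have hLc : ContinuousOn L V := by
    rw [continuousOn_iff_continuous_domRestrict]
    convert F.continuous using 1
    ext z
    exact hLF z z.2
  refine ⟨L, fun u hu => ⟨?_, ?_⟩, (hLF t ht).trans hF0, hLp⟩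
  · change cov.p (L u) ∈ Reg hS
    rw [hLp u hu]; exact (hK u hu).1
  · obtain ⟨_, r, hr, hKr⟩ := hK u hu
    obtain ⟨ε, hε, hp⟩ := cov.localIsom (L u)
    have h1 : ∀ᶠ z in 𝓝 u, L z ∈ ball (L u) ε :=
      (hLc.continuousAt (hVo.mem_nhds hu)).eventually (ball_mem_nhds _ hε)
    obtain ⟨s, hs, h2⟩ := Metric.eventually_nhds_iff_ball.1
      (h1.and ((show ∀ᶠ z in 𝓝 u, z ∈ V from hVo.mem_nhds hu).and
        (show ∀ᶠ z in 𝓝 u, z ∈ ball u r from ball_mem_nhds u hr)))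
    refine ⟨s, hs, fun a ha b hb => ?_⟩
    obtain ⟨a1, a2, a3⟩ := h2 a ha
    obtain ⟨b1, b2, b3⟩ := h2 b hb
    rw [← hp _ a1 _ b1, hLp a a2, hLp b b2, hKr a a3 b b3]

/-- The germ of a local isometry into the cover is determined by its value and projection. -/
lemma lift_germ {M : Type*} [TopologicalSpace M] {L G : M → X} {t : M} (hL : ContinuousAt L t)
    (hG : ContinuousAt G t) (h0 : L t = G t) (h : ∀ᶠ z in 𝓝 t, cov.p (L z) = cov.p (G z)) :
    L =ᶠ[𝓝 t] G := by
  obtain ⟨ε, hε, hp⟩ := cov.localIsom (L t)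
  filter_upwards [h, hL.eventually (ball_mem_nhds _ hε),
    hG.eventually (show ball (L t) ε ∈ 𝓝 (G t) by rw [← h0]; exact ball_mem_nhds _ hε)]
    with z h1 h2 h3
  rw [← dist_eq_zero, ← hp _ h2 _ h3, h1, dist_self]

/-- An extension of the projected germ `p ∘ G` lifts to an extension of `G`. -/
lemma extend_lift {V : Set ℂ} (hVo : IsOpen V) (hVc : Convex ℝ V) {K : ℂ → S}
    (hK : LI (Reg hS) K V) {t : ℂ} (ht : t ∈ V) {G : ℂ → X} (hG : LI (RegX hS cov) G {t})
    (h : K =ᶠ[𝓝 t] fun z => cov.p (G z)) :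
    ∃ L : ℂ → X, LI (RegX hS cov) L V ∧ L =ᶠ[𝓝 t] G ∧ ∀ z ∈ V, cov.p (L z) = K z := by
  obtain ⟨L, hL, hLt, hLp⟩ := exists_lift (cov := cov) hVo hVc hK ht h.eq_of_nhds.symm
  refine ⟨L, hL, lift_germ (cov := cov) (hL.continuousAt ht) (hG.continuousAt rfl) hLt ?_, hLp⟩
  filter_upwards [h, hVo.mem_nhds ht] with z h1 h2
  rw [hLp z h2, h1]

/-- The standing assumptions on the geodesic `g`, restricted to the part of its domain `D` after
the parameter `a`. -/
structure Geo (hS : ESCS S) (cov : UnivCover S X) (g : ℝ → X) (D : Set ℝ) (a : ℝ) : Prop where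
  sub : Ioi a ⊆ D
  geo : ∀ s ∈ D, ∀ t ∈ D, dist (g s) (g t) = |s - t|
  reg : ∀ t ∈ D, cov.p (g t) ∉ hS.conical

variable {g : ℝ → X} {D : Set ℝ} {a : ℝ}

lemma Geo.li (hg : Geo hS cov g D a) : LI (RegX hS cov) g (Ioi a) := by
  intro t ht
  obtain ⟨r, hr, h⟩ := Metric.isOpen_iff.1 isOpen_Ioi t ht
  exact ⟨hg.reg t (hg.sub ht), r, hr, fun s hs u hu => hg.geo s (hg.sub (h hs)) u (hg.sub (h hu))⟩

lemma convex_real_trace {V : Set ℂ} (hV : Convex ℝ V) : Convex ℝ {s : ℝ | (s : ℂ) ∈ V} :=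
  hV.linear_preimage Complex.ofRealCLM.toLinearMap

/-- A local isometry that agrees with `g` near one real parameter does so on the real trace of
its convex domain. -/
lemma Geo.agree (hg : Geo hS cov g D a) {V : Set ℂ} (hV : Convex ℝ V) {K : ℂ → X}
    (hK : LI (RegX hS cov) K V) (hVa : ∀ s : ℝ, (s : ℂ) ∈ V → a < s) {t : ℝ} (ht : (t : ℂ) ∈ V)
    (h : ∀ᶠ s : ℝ in 𝓝 t, K s = g s) : ∀ s : ℝ, (s : ℂ) ∈ V → K s = g s := by
  have h1 : LI (RegX hS cov) (K ∘ ((↑) : ℝ → ℂ)) {s : ℝ | (s : ℂ) ∈ V} :=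
    hK.comp_isometry Complex.isometry_ofReal (fun s hs => hs)
  have := LI.uniq rigid_real flat_RegX (convex_real_trace hV).isPreconnected h1
    (hg.li.mono (fun s hs => hVa s hs)) (z := t) ht h
  exact fun s hs => this hs

/-- Near `g t`, a local isometry developing `g` along the real axis meets `g` only there. -/
lemma Geo.avoid (hg : Geo hS cov g D a) {G : ℂ → X} {t : ℝ} (ht : a < t)
    (hG : LI (RegX hS cov) G {(t : ℂ)}) (h : ∀ᶠ s : ℝ in 𝓝 t, G s = g s) :
    ∃ ρ > 0, ∀ z ∈ ball (t : ℂ) ρ, z.im ≠ 0 → G z ∉ g '' D := by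
  obtain ⟨r, hr, -, hGr⟩ := hG.nhds isOpen_RegX
  obtain ⟨δ, hδ, hs⟩ := Metric.eventually_nhds_iff_ball.1 h
  refine ⟨min r δ, lt_min hr hδ, ?_⟩
  rintro z hz hzi ⟨s, hsD, hsz⟩
  have hzr := ball_subset_ball (min_le_left _ _) hz
  have e1 : dist s t = dist z (t:ℂ) := by
    rw [Real.dist_eq, ← hg.geo s hsD t (hg.sub ht), hsz, ← h.self_of_nhds,
      hGr z hzr _ (mem_ball_self hr)]
  have hsb : s ∈ ball t (min r δ) := by rw [mem_ball, e1]; exact hz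
  have hsb' : (s : ℂ) ∈ ball (t : ℂ) r := by
    rw [mem_ball, Complex.isometry_ofReal.dist_eq]
    exact ball_subset_ball (min_le_left _ _) hsb
  have : z = s := hGr.injOn hzr hsb' (by
    rw [← hsz, hs s (ball_subset_ball (min_le_right _ _) hsb)])
  exact hzi (by rw [this]; simp)

/-- The open upper half-plane. -/
def UH : Set ℂ := {z | 0 < z.im}

lemma convex_UH : Convex ℝ UH := convex_halfSpace_im_gt 0

lemma real_mem_closure_UH {t : ℝ} {ρ : ℝ} (hρ : 0 < ρ) : (ball (t : ℂ) ρ ∩ UH).Nonempty := by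
  refine ⟨t + ((ρ / 2 : ℝ) : ℂ) * Complex.I, ?_, ?_⟩
  · rw [mem_ball, dist_eq_norm, add_sub_cancel_left, norm_mul, Complex.norm_I, mul_one,
      Complex.norm_real, Real.norm_of_nonneg (by positivity)]
    linarith
  · change 0 < Complex.im _
    simp; exact hρ

instance UH_neBot (t : ℝ) : (𝓝[UH] (t : ℂ)).NeBot := by
  rw [← mem_closure_iff_nhdsWithin_neBot, Metric.mem_closure_iff]
  intro ε hε
  obtain ⟨z, h1, h2⟩ := real_mem_closure_UH (t := t) hε
  exact ⟨z, h2, by rw [dist_comm]; exact h1⟩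

/-- The upper side of `G` at the real point `t` lies in `Ω`. -/
def UG (G : ℂ → X) (Ω : Set X) (t : ℝ) : Prop := ∀ᶠ z in 𝓝[UH] (t : ℂ), G z ∈ Ω

lemma UG.congr {G H : ℂ → X} {Ω : Set X} {t : ℝ} (h : UG G Ω t) (hGH : H =ᶠ[𝓝 (t : ℂ)] G) :
    UG H Ω t := by
  filter_upwards [h, hGH.filter_mono nhdsWithin_le_nhds] with z h1 h2
  rw [h2]; exact h1

/-- A connected set off `g` that meets a component of the complement lies in it. -/
lemma component_subset {A : Set X} {x : X} {B : Set X} (hB : IsPreconnected B) (hBA : B ⊆ A)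
    {y : X} (hy : y ∈ B) (hyx : y ∈ connectedComponentIn A x) : B ⊆ connectedComponentIn A x := by
  rw [connectedComponentIn_eq hyx]
  exact hB.subset_connectedComponentIn hy hBA

/-- A connected piece of the upper half-plane adherent to `t`, whose image avoids `g`, is mapped
to the side `Ω` as soon as the upper germ at `t` is. -/
lemma UG.spread {G : ℂ → X} {x : X} {t : ℝ} {A : Set X} (h : UG G (connectedComponentIn A x) t)
    {W : Set ℂ} (hW : IsPreconnected W) (hc : ContinuousOn G W) (hA : MapsTo G W A)
    (ht : ∃ᶠ z in 𝓝[UH] (t : ℂ), z ∈ W) : MapsTo G W (connectedComponentIn A x) := by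
  obtain ⟨z, hz, hz'⟩ := (ht.and_eventually h).exists
  exact fun w hw => component_subset (hW.image G hc) (image_subset_iff.2 hA)
    (mem_image_of_mem G hz) hz' (mem_image_of_mem G hw)

/-- The side of `g` above the development is the same along the whole development. -/
lemma Geo.ug_prop (hg : Geo hS cov g D a) {V : Set ℂ} (hVo : IsOpen V) (hV : Convex ℝ V)
    {G : ℂ → X} (hG : LI (RegX hS cov) G V) (hVa : ∀ s : ℝ, (s : ℂ) ∈ V → a < s)
    (hGg : ∀ s : ℝ, (s : ℂ) ∈ V → G s = g s) {x : X} {t : ℝ} (ht : (t : ℂ) ∈ V)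
    (h : UG G (connectedComponentIn (g '' D)ᶜ x) t) {s : ℝ} (hs : (s : ℂ) ∈ V) :
    UG G (connectedComponentIn (g '' D)ᶜ x) s := by
  set Ω := connectedComponentIn (g '' D)ᶜ x with hΩ
  have hTo : IsOpen {s : ℝ | (s : ℂ) ∈ V} := hVo.preimage Complex.continuous_ofReal
  have key : ∀ s : ℝ, (s : ℂ) ∈ V → ∃ ρ > 0, ∀ s' ∈ ball s ρ,
      (UG G Ω s' ↔ MapsTo G (ball (s : ℂ) ρ ∩ UH) Ω) := by
    intro s hs
    obtain ⟨ρ, hρ, hav⟩ := hg.avoid (hVa s hs) (hG.mono (singleton_subset_iff.2 hs))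
      (by filter_upwards [hTo.mem_nhds hs] with u hu using hGg u hu)
    obtain ⟨δ, hδ, hδV⟩ := Metric.isOpen_iff.1 hVo _ hs
    refine ⟨min ρ δ, lt_min hρ hδ, fun s' hs' => ?_⟩
    have hs'' : ball (s : ℂ) (min ρ δ) ∈ 𝓝 (s' : ℂ) := isOpen_ball.mem_nhds (by
      rw [mem_ball, Complex.isometry_ofReal.dist_eq]; exact hs')
    have hmem : ball (s : ℂ) (min ρ δ) ∩ UH ∈ 𝓝[UH] (s' : ℂ) :=
      inter_mem (mem_nhdsWithin_of_mem_nhds hs'') self_mem_nhdsWithin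
    constructor
    · intro hu
      refine hu.spread ((convex_ball _ _).inter convex_UH).isPreconnected
        (hG.continuousOn.mono (inter_subset_left.trans
          ((ball_subset_ball (min_le_right _ _)).trans hδV))) ?_ ?_
      · exact fun z hz => hav z (ball_subset_ball (min_le_left _ _) hz.1) (ne_of_gt hz.2)
      · exact Filter.Eventually.frequently hmem
    · intro hm
      filter_upwards [hmem] with z hz using hm hz
  have hpre := (convex_real_trace hV).isPreconnected
  have := hpre.subset_left_of_subset_union (u := {s : ℝ | (s : ℂ) ∈ V ∧ UG G Ω s})
    (v := {s : ℝ | (s : ℂ) ∈ V ∧ ¬ UG G Ω s}) ?_ ?_ ?_ ?_ ?_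
  · exact (this hs).2
  · rw [Metric.isOpen_iff]
    rintro s ⟨hs, hu⟩
    obtain ⟨ρ, hρ, hk⟩ := key s hs
    obtain ⟨δ, hδ, hδV⟩ := Metric.isOpen_iff.1 hTo _ hs
    refine ⟨min ρ δ, lt_min hρ hδ, fun s' hs' => ⟨hδV (ball_subset_ball (min_le_right _ _) hs'), ?_⟩⟩
    rw [hk s' (ball_subset_ball (min_le_left _ _) hs'), ← hk s (mem_ball_self hρ)]
    exact hu
  · rw [Metric.isOpen_iff]
    rintro s ⟨hs, hu⟩
    obtain ⟨ρ, hρ, hk⟩ := key s hs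
    obtain ⟨δ, hδ, hδV⟩ := Metric.isOpen_iff.1 hTo _ hs
    refine ⟨min ρ δ, lt_min hρ hδ, fun s' hs' => ⟨hδV (ball_subset_ball (min_le_right _ _) hs'), ?_⟩⟩
    rw [hk s' (ball_subset_ball (min_le_left _ _) hs'), ← hk s (mem_ball_self hρ)]
    exact hu
  · rw [Set.disjoint_left]
    rintro s ⟨_, h1⟩ ⟨_, h2⟩
    exact h2 h1
  · intro s hs
    by_cases hu : UG G Ω s
    · exact Or.inl ⟨hs, hu⟩
    · exact Or.inr ⟨hs, hu⟩
  · exact ⟨t, ht, ht, h⟩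

end

/-! ### Extension of a development by a definite amount -/

section

/-- The open rectangle `(a, b) × (c, d)` of the plane. -/
def rect (a b c d : ℝ) : Set ℂ := {z | (a < z.re ∧ z.re < b) ∧ c < z.im ∧ z.im < d}

lemma convex_rect (a b c d : ℝ) : Convex ℝ (rect a b c d) :=
  ((convex_halfSpace_re_gt a).inter (convex_halfSpace_re_lt b)).inter
    ((convex_halfSpace_im_gt c).inter (convex_halfSpace_im_lt d))

lemma isOpen_rect (a b c d : ℝ) : IsOpen (rect a b c d) :=
  ((isOpen_lt continuous_const Complex.continuous_re).inter
    (isOpen_lt Complex.continuous_re continuous_const)).inter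
    ((isOpen_lt continuous_const Complex.continuous_im).inter
    (isOpen_lt Complex.continuous_im continuous_const))

lemma real_mem_rect {a b c d s : ℝ} (hc : c < 0) (hd : 0 < d) :
    (s : ℂ) ∈ rect a b c d ↔ a < s ∧ s < b := by
  simp [rect, hc, hd]

lemma rect_subset_ball {t κ r : ℝ} (hκ : κ ≤ r) :
    rect (t - κ) (t + r) (-κ) r ⊆ ball (t : ℂ) (2 * r) := by
  rintro z ⟨⟨h1, h2⟩, h3, h4⟩
  rw [mem_ball, dist_eq_norm]
  have := Complex.norm_le_abs_re_add_abs_im (z - t)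
  have h5 : |(z - t).re| < r := by simp [abs_lt]; constructor <;> linarith
  have h6 : |(z - t).im| < r := by simp [abs_lt]; constructor <;> linarith
  linarith

variable {S X : Type} [MetricSpace S] [MetricSpace X] {hS : ESCS S} {cov : UnivCover S X}
variable {g : ℝ → X} {D : Set ℝ} {a : ℝ}

/-- A geodesic without conical points does not run into the point `z₀ = x₀` of its real axis that
develops a conical point. -/
lemma Geo.no_hit (hg : Geo hS cov g D a) {c : S} (hc : c ∈ hS.conical) {t x₀ : ℝ} (ht : a < t)
    (htx : t < x₀) (h : ∀ s ∈ Ioo t x₀, dist (cov.p (g s)) c = x₀ - s) : False := by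
  have hx : a < x₀ := ht.trans htx
  have h1 : ContinuousAt (fun s => dist (cov.p (g s)) c) x₀ :=
    (cov.covering.continuous.continuousAt.comp (hg.li.continuousAt (u := x₀) hx)).dist
      continuousAt_const
  have h2 : Tendsto (fun s => dist (cov.p (g s)) c) (𝓝[<] x₀) (𝓝 0) := by
    have h3 : Tendsto (fun s => x₀ - s) (𝓝[<] x₀) (𝓝 0) := by
      have : ContinuousAt (fun s : ℝ => x₀ - s) x₀ := by fun_prop
      have := this.tendsto.mono_left (nhdsWithin_le_nhds (s := Iio x₀))
      simpa using this
    refine h3.congr' ?_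
    filter_upwards [Ioo_mem_nhdsLT htx] with s hs using (h s hs).symm
  have := tendsto_nhds_unique (h1.tendsto.mono_left nhdsWithin_le_nhds) h2
  exact hg.reg x₀ (hg.sub hx) (by rw [dist_eq_zero.1 this]; exact hc)

/-- The segment from `t` to the point `z₀` developing a conical point `c` lifts to a path of the
universal cover that ends at a lift of `c`. -/
lemma exists_cone_end {V : Set ℂ} (hVc : Convex ℝ V) {L : ℂ → X}
    (hL : LI (RegX hS cov) L V) {c : S} {t z₀ : ℂ} (ht : t ∈ V)
    (hseg : ∀ s ∈ Ico (0:ℝ) 1, AffineMap.lineMap t z₀ s ∈ V)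
    (hd : ∀ z ∈ V, dist (cov.p (L z)) c = dist z z₀) {W : Set ℂ}
    (hW : ∀ s ∈ Ioo (0:ℝ) 1, AffineMap.lineMap t z₀ s ∈ W) :
    ∃ z : X, cov.p z = c ∧ z ∈ closure (L '' W) ∧ dist (L t) z ≤ dist t z₀ := by
  classical
  set w : unitInterval → ℂ := fun s => AffineMap.lineMap t z₀ (s : ℝ) with hw
  have hwc : Continuous w := AffineMap.lineMap_continuous.comp continuous_subtype_val
  have hw1 : w 1 = z₀ := by simp [hw]
  have hw0 : w 0 = t := by simp [hw]
  have hwV : ∀ s : unitInterval, s < 1 → w s ∈ V := fun s hs => hseg s ⟨s.2.1, hs⟩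
  set γ : unitInterval → S := fun s => if s < 1 then cov.p (L (w s)) else c with hγ
  have hγd : ∀ s, dist (γ s) c = dist (w s) z₀ := by
    intro s
    by_cases hs : s < 1
    · simp only [hγ, if_pos hs]; exact hd _ (hwV s hs)
    · have : s = 1 := le_antisymm s.2.2 (not_lt.1 hs)
      simp [hγ, this, hw1]
  have hγc : Continuous γ := by
    rw [continuous_iff_continuousAt]
    intro s
    by_cases hs : s < 1
    · have h1 : ContinuousAt (fun s => cov.p (L (w s))) s :=
        cov.covering.continuous.continuousAt.comp
          ((hL.continuousAt (hwV s hs)).comp hwc.continuousAt)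
      refine h1.congr ?_
      filter_upwards [isOpen_Iio.mem_nhds hs] with u hu
      exact (if_pos hu).symm
    · have hs1 : s = 1 := le_antisymm s.2.2 (not_lt.1 hs)
      subst hs1
      have : γ 1 = c := by simp [hγ]
      rw [ContinuousAt, this, tendsto_iff_dist_tendsto_zero]
      simp only [hγd]
      have : ContinuousAt (fun s => dist (w s) z₀) 1 := (hwc.dist continuous_const).continuousAt
      simpa [ContinuousAt, hw1] using this
  obtain ⟨Γ, hΓ, hΓ0⟩ := cov.covering.exists_path_lifts ⟨γ, hγc⟩ (L t) (by
    change γ 0 = _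
    simp [hγ, hw0])
  have hp : ∀ s, cov.p (Γ s) = γ s := fun s => congrFun hΓ s
  have hEq : EqOn Γ (fun s => L (w s)) (Iio 1) := by
    refine cov.covering.eqOn_of_comp_eqOn isPreconnected_Iio Γ.continuous.continuousOn ?_ ?_
      (a := 0) (by simp) (by rw [hΓ0, hw0])
    · intro s hs
      exact ((hL.continuousAt (hwV s hs)).comp hwc.continuousAt).continuousWithinAt
    · intro s hs
      simp only [Function.comp_apply, hp, hγ]
      exact if_pos hs
  have hne : (𝓝[Ioo (0 : unitInterval) 1] 1).NeBot := by
    rw [← mem_closure_iff_nhdsWithin_neBot, closure_Ioo (by simp)]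
    simp
  have ht1 : Tendsto Γ (𝓝[Ioo (0 : unitInterval) 1] 1) (𝓝 (Γ 1)) :=
    Γ.continuous.continuousAt.tendsto.mono_left nhdsWithin_le_nhds
  refine ⟨Γ 1, ?_, ?_, ?_⟩
  · rw [hp]; simp [hγ]
  · refine mem_closure_of_tendsto ht1 ?_
    filter_upwards [self_mem_nhdsWithin] with s hs
    rw [hEq hs.2]
    exact mem_image_of_mem L (hW s ⟨hs.1, hs.2⟩)
  · refine le_of_tendsto (tendsto_const_nhds.dist ht1) ?_
    filter_upwards [self_mem_nhdsWithin] with s hs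
    rw [hEq hs.2]
    refine (hL.lip hVc ht (hwV s hs.2)).trans ?_
    rw [hw]
    simp only
    rw [dist_left_lineMap, Real.norm_of_nonneg s.2.1]
    nlinarith [s.2.2, dist_nonneg (x := t) (y := z₀)]

/-- If the point developing a conical point lies above the real axis, that conical point has a
lift on the upper side of `g`. -/
lemma Geo.cone_above (hg : Geo hS cov g D a) {x : X} {V : Set ℂ}
    (hVc : Convex ℝ V) {L : ℂ → X} (hL : LI (RegX hS cov) L V) {c : S} (hc : c ∈ hS.conical)
    {t σ : ℝ} {z₀ : ℂ} (hat : a < t) (hdt : dist (t : ℂ) z₀ < σ) (hz0 : 0 < z₀.im)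
    (hV : V = ball z₀ (8 * σ) ∩ {z | z.im < z₀.im})
    (hinj : InjOn L V) (hd : ∀ z ∈ V, dist (cov.p (L z)) c = dist z z₀)
    (hLg : ∀ s : ℝ, (s : ℂ) ∈ V → L s = g s)
    (hu : UG L (connectedComponentIn (g '' D)ᶜ x) t) :
    ∃ z ∈ connectedComponentIn (g '' D)ᶜ x, cov.p z ∈ hS.conical ∧ dist (g t) z ≤ σ := by
  have hσ : 0 < σ := dist_nonneg.trans_lt hdt
  have htV : (t : ℂ) ∈ V := by
    rw [hV]; exact ⟨by rw [mem_ball]; linarith, by simpa using hz0⟩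
  set W : Set ℂ := ball z₀ (2 * σ) ∩ {z | z.im < z₀.im} ∩ UH with hWdef
  have hWc : Convex ℝ W := ((convex_ball _ _).inter (convex_halfSpace_im_lt _)).inter convex_UH
  have hWV : W ⊆ V := by
    rw [hV]
    exact fun z hz => ⟨ball_subset_ball (by linarith) hz.1.1, hz.1.2⟩
  have hav : MapsTo L W (g '' D)ᶜ := by
    rintro z hz ⟨s, hsD, hsz⟩
    have h1 : |s - t| ≤ dist z t := by
      rw [← hg.geo s hsD t (hg.sub hat), hsz, ← hLg t htV]
      exact hL.lip hVc (hWV hz) htV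
    have h2 : dist z t < 3 * σ := by
      have := dist_triangle_right z t z₀
      have := mem_ball.1 hz.1.1
      linarith
    have h3 : (s : ℂ) ∈ V := by
      rw [hV]
      refine ⟨?_, by simpa using hz0⟩
      have := dist_triangle (s : ℂ) t z₀
      rw [Complex.isometry_ofReal.dist_eq, Real.dist_eq] at this
      rw [mem_ball]; linarith
    have : z = s := hinj (hWV hz) h3 (by rw [← hsz, hLg s h3])
    have h4 : 0 < z.im := hz.2
    rw [this] at h4
    simp at h4
  have hWΩ := hu.spread hWc.isPreconnected (hL.continuousOn.mono hWV) hav (by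
    apply Filter.Eventually.frequently
    refine inter_mem (mem_nhdsWithin_of_mem_nhds (IsOpen.mem_nhds ?_ ?_)) self_mem_nhdsWithin
    · exact isOpen_ball.inter (isOpen_lt Complex.continuous_im continuous_const)
    · exact ⟨by rw [mem_ball]; linarith, by simpa using hz0⟩)
  have him : ∀ s : ℝ, (AffineMap.lineMap (t : ℂ) z₀ s : ℂ).im = s * z₀.im := by
    intro s; simp [AffineMap.lineMap_apply]
  have hds : ∀ s ∈ Icc (0:ℝ) 1, dist (AffineMap.lineMap (t : ℂ) z₀ s : ℂ) z₀ < σ := by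
    intro s hs
    rw [dist_lineMap_right, Real.norm_of_nonneg (by linarith [hs.2])]
    nlinarith [hs.1, dist_nonneg (x := (t:ℂ)) (y := z₀)]
  obtain ⟨z, hz1, hz2, hz3⟩ := exists_cone_end hVc hL (c := c) (z₀ := z₀) htV (by
      intro s hs
      rw [hV]
      refine ⟨?_, ?_⟩
      · rw [mem_ball]; linarith [hds s ⟨hs.1, hs.2.le⟩]
      · change Complex.im _ < _
        rw [him]; nlinarith [hs.2]) hd (W := W) (by
      intro s hs
      refine ⟨⟨?_, ?_⟩, ?_⟩
      · rw [mem_ball]; linarith [hds s ⟨hs.1.le, hs.2.le⟩]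
      · change Complex.im _ < _
        rw [him]; nlinarith [hs.2]
      · change 0 < Complex.im _
        rw [him]; exact mul_pos hs.1 hz0)
  obtain ⟨w, hw⟩ : W.Nonempty := by
    refine ⟨AffineMap.lineMap (t : ℂ) z₀ (1 / 2 : ℝ), ⟨?_, ?_⟩, ?_⟩
    · rw [mem_ball]; linarith [hds (1 / 2) ⟨by norm_num, by norm_num⟩]
    · change Complex.im _ < _
      rw [him]; linarith
    · change 0 < Complex.im _
      rw [him]; linarith
  refine ⟨z, ?_, by rw [hz1]; exact hc, by rw [← hLg t htV]; exact hz3.trans hdt.le⟩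
  have hpre : IsPreconnected (insert z (L '' W)) :=
    (hWc.isPreconnected.image L (hL.continuousOn.mono hWV)).subset_closure (subset_insert _ _)
      (insert_subset hz2 subset_closure)
  refine component_subset hpre ?_ (mem_insert_of_mem z (mem_image_of_mem L hw)) (hWΩ hw)
    (mem_insert _ _)
  refine insert_subset ?_ (image_subset_iff.2 hav)
  rintro ⟨s, hs, rfl⟩
  exact hg.reg s hs (by rw [hz1]; exact hc)

/-- The development of `g` together with its upper side extends by a definite amount to the right
and upwards, unless a conical point on that side is close to `g`. -/
theorem Geo.extend (hg : Geo hS cov g D a) {x : X} {ε r₀ : ℝ} (hε : 0 < ε) (hr₀ : 0 < r₀)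
    (hcon : ∀ t ∈ D, ∀ z ∈ connectedComponentIn (g '' D)ᶜ x, cov.p z ∈ hS.conical →
      ε ≤ dist (g t) z) :
    ∃ r > 0, ∀ (t : ℝ) (G : ℂ → X), a + r₀ ≤ t → LI (RegX hS cov) G {(t : ℂ)} →
      (∀ᶠ s : ℝ in 𝓝 t, G s = g s) → UG G (connectedComponentIn (g '' D)ᶜ x) t →
      ∃ κ > 0, κ ≤ r₀ ∧ ∃ K : ℂ → X, LI (RegX hS cov) K (rect (t - κ) (t + r) (-κ) r) ∧
        K =ᶠ[𝓝 (t : ℂ)] G := by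
  choose! rc hrc hdev using fun c (hc : c ∈ hS.conical) => cone_develop hc
  obtain ⟨σ, hσ, hσε, hσr, hσc⟩ : ∃ σ > 0, σ < ε ∧ 16 * σ < r₀ ∧
      ∀ c ∈ hS.conical, 8 * σ < rc c := by
    have h1 : ∀ b > (0:ℝ), ∀ᶠ σ : ℝ in 𝓝[>] 0, 8 * σ < b := by
      intro b hb
      have : ContinuousAt (fun σ : ℝ => 8 * σ) 0 := by fun_prop
      exact (this.eventually_lt_const (by simpa using hb)).filter_mono nhdsWithin_le_nhds
    obtain ⟨σ, h2, h3, h4, h5⟩ := ((h1 ε hε).and ((h1 (r₀ / 2) (by linarith)).and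
      (((Filter.eventually_all_finset hS.conical).2 fun c hc => h1 _ (hrc c hc)).and
        self_mem_nhdsWithin))).exists
    have h5' : 0 < σ := h5
    exact ⟨σ, h5', by linarith, by linarith, h4⟩
  obtain ⟨ρ, hρ, hch⟩ := uniform_chart hS hσ
  set r := min σ (ρ / 2) with hr
  have hr0 : 0 < r := lt_min hσ (by linarith)
  have hrσ : r ≤ σ := min_le_left _ _
  have hrρ : 2 * r ≤ ρ := by linarith [min_le_right σ (ρ / 2)]
  refine ⟨r, hr0, fun t G hat hG hGg hu => ?_⟩
  have hat' : a < t := by linarith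
  have hpG := hG.proj
  -- It suffices to extend the projection; the lift then extends `G`.
  have fin : ∀ κ > 0, κ ≤ r → ∀ K : ℂ → S, LI (Reg hS) K (rect (t - κ) (t + r) (-κ) r) →
      (K =ᶠ[𝓝 (t : ℂ)] fun z => cov.p (G z)) →
      ∃ κ > 0, κ ≤ r₀ ∧ ∃ K : ℂ → X, LI (RegX hS cov) K (rect (t - κ) (t + r) (-κ) r) ∧
        K =ᶠ[𝓝 (t : ℂ)] G := by
    intro κ hκ hκr K hK hKG
    obtain ⟨L, h1, h2, -⟩ := extend_lift (isOpen_rect _ _ _ _) (convex_rect _ _ _ _) hK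
      ((real_mem_rect (by linarith) hr0).2 ⟨by linarith, by linarith⟩) hG hKG
    exact ⟨κ, hκ, by linarith, L, h1, h2⟩
  by_cases hfar : ∀ c ∈ hS.conical, σ ≤ dist (cov.p (G t)) c
  · obtain ⟨K, hK⟩ := hch _ hfar
    obtain ⟨s, hs, hGs, -⟩ := hpG.nhds isOpen_Reg
    obtain ⟨Φ, hΦ, hΦG⟩ := hGs.chart hs hK
    refine fin r hr0 le_rfl (fun z => K (Φ z)) (hK.li.comp_motion Φ ?_) ?_
    · exact (motion_mapsTo_ball Φ hΦ ρ).mono_left ((rect_subset_ball le_rfl).trans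
        (ball_subset_ball hrρ))
    · filter_upwards [ball_mem_nhds _ (lt_min hs hK.pos)] with z hz
      exact (hΦG z hz).symm
  push Not at hfar
  obtain ⟨c, hc, hcd⟩ := hfar
  have hrcσ := hσc c hc
  obtain ⟨z₀, K, hz0, hKG, hKV⟩ := hdev c hc _ _ hpG (by linarith)
  have hdt : dist (t : ℂ) z₀ < σ := by rw [hz0]; exact hcd
  have hne : (t : ℂ) ≠ z₀ := by
    intro h
    rw [← h, dist_self] at hz0
    exact (hG t rfl).1 (by rw [dist_eq_zero.1 hz0.symm]; exact hc)
  -- The rectangles are small enough to stay within the developed cone.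
  have hrect : ∀ κ > 0, κ ≤ r → z₀ ∉ rect (t - κ) (t + r) (-κ) r →
      LI (Reg hS) K (rect (t - κ) (t + r) (-κ) r) := by
    intro κ hκ hκr hz
    refine (hKV _ (convex_rect _ _ _ _) ((rect_subset_ball hκr).trans ?_)
      ((real_mem_rect (by linarith) hr0).2 ⟨by linarith, by linarith⟩) hz).1
    exact ball_subset_ball' (by linarith)
  have hball : ∀ s : ℝ, (s : ℂ) ∈ ball z₀ (8 * σ) → a < s := by
    intro s hs
    have h1 := dist_triangle_right (s : ℂ) t z₀
    rw [Complex.isometry_ofReal.dist_eq, Real.dist_eq] at h1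
    have := mem_ball.1 hs
    have := neg_abs_le (s - t)
    linarith
  rcases lt_trichotomy z₀.im 0 with him | him | him
  · refine fin (min r (-z₀.im)) (lt_min hr0 (by linarith)) (min_le_left _ _) K
      (hrect _ (lt_min hr0 (by linarith)) (min_le_left _ _) ?_) hKG
    rintro ⟨-, h, -⟩
    linarith [min_le_right r (-z₀.im)]
  · have hz0r : z₀ = (z₀.re : ℂ) := Complex.ext (by simp) (by simpa using him)
    rcases lt_trichotomy z₀.re t with hre | hre | hre
    · refine fin (min r (t - z₀.re)) (lt_min hr0 (by linarith)) (min_le_left _ _) K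
        (hrect _ (lt_min hr0 (by linarith)) (min_le_left _ _) ?_) hKG
      rintro ⟨⟨h, -⟩, -⟩
      linarith [min_le_right r (t - z₀.re)]
    · exact (hne (by rw [hz0r, hre])).elim
    · exfalso
      set V : Set ℂ := ball z₀ (7 * σ) ∩ {z | z.re < z₀.re} with hV
      have hVc : Convex ℝ V := (convex_ball _ _).inter (convex_halfSpace_re_lt _)
      have hVo : IsOpen V := isOpen_ball.inter (isOpen_lt Complex.continuous_re continuous_const)
      have htV : (t : ℂ) ∈ V := ⟨by rw [mem_ball]; linarith, by simpa using hre⟩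
      obtain ⟨hK1, -, hK3⟩ := hKV V hVc (inter_subset_left.trans (ball_subset_ball (by linarith)))
        htV (fun h => lt_irrefl z₀.re (show z₀.re < z₀.re from h.2))
      obtain ⟨L, hL, hLG, hLp⟩ := extend_lift hVo hVc hK1 htV hG hKG
      have hLg := hg.agree hVc hL (fun s hs => hball s
        (ball_subset_ball (by linarith) hs.1)) htV (by
          filter_upwards [hGg, Complex.continuous_ofReal.continuousAt.eventually hLG] with s h1 h2
          rw [h2, h1])
      refine hg.no_hit hc hat' hre fun s hs => ?_
      have hd : dist (s : ℂ) z₀ = z₀.re - s := by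
        rw [hz0r, Complex.isometry_ofReal.dist_eq, Real.dist_eq, abs_sub_comm, abs_of_pos]
        · simp
        · simpa using hs.2
      have hd' : dist (t : ℂ) z₀ = z₀.re - t := by
        rw [hz0r, Complex.isometry_ofReal.dist_eq, Real.dist_eq, abs_sub_comm, abs_of_pos]
        · simp
        · simpa using hre
      have hsV : (s : ℂ) ∈ V := ⟨by rw [mem_ball, hd]; linarith [hs.1], by simpa using hs.2⟩
      rw [← hLg s hsV, hLp _ hsV, hK3 _ hsV, hd]
  · exfalso
    set V : Set ℂ := ball z₀ (8 * σ) ∩ {z | z.im < z₀.im} with hV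
    have hVc : Convex ℝ V := (convex_ball _ _).inter (convex_halfSpace_im_lt _)
    have hVo : IsOpen V := isOpen_ball.inter (isOpen_lt Complex.continuous_im continuous_const)
    have htV : (t : ℂ) ∈ V := ⟨by rw [mem_ball]; linarith, by simpa using him⟩
    obtain ⟨hK1, hK2, hK3⟩ := hKV V hVc (inter_subset_left.trans (ball_subset_ball (by linarith)))
      htV (fun h => lt_irrefl z₀.im (show z₀.im < z₀.im from h.2))
    obtain ⟨L, hL, hLG, hLp⟩ := extend_lift hVo hVc hK1 htV hG hKG
    have hLg := hg.agree hVc hL (fun s hs => hball s hs.1) htV (by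
      filter_upwards [hGg, Complex.continuous_ofReal.continuousAt.eventually hLG] with s h1 h2
      rw [h2, h1])
    obtain ⟨z, hz, hzc, hzd⟩ := hg.cone_above hVc hL hc hat' hdt him hV
      (fun u hu v hv h => hK2 hu hv (by rw [← hLp u hu, ← hLp v hv]; exact congrArg cov.p h))
      (fun u hu => by rw [hLp u hu, hK3 u hu]) hLg (hu.congr hLG)
    have := hcon t (hg.sub hat') z hz hzc
    linarith

end

/-! ### The half-strip along the geodesic -/

section

variable {S X : Type} [MetricSpace S] [MetricSpace X] {hS : ESCS S} {cov : UnivCover S X}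
variable {g : ℝ → X} {D : Set ℝ} {a : ℝ}

/-- If the conical points on one side of `g` stay away from `g`, then that side contains an
isometrically immersed flat half-strip along `g`. -/
theorem Geo.half_strip (hg : Geo hS cov g D a) {x : X} {ε r₀ t₁ : ℝ} (hε : 0 < ε) (hr₀ : 0 < r₀)
    (ht₁ : t₁ = a + r₀)
    (hcon : ∀ t ∈ D, ∀ z ∈ connectedComponentIn (g '' D)ᶜ x, cov.p z ∈ hS.conical →
      ε ≤ dist (g t) z) {G₀ : ℂ → X} (hG : LI (RegX hS cov) G₀ {(t₁ : ℂ)})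
    (hGg : ∀ᶠ s : ℝ in 𝓝 t₁, G₀ s = g s) (hu : UG G₀ (connectedComponentIn (g '' D)ᶜ x) t₁) :
    ∃ r > 0, ∃ H : ℂ → X, LI (RegX hS cov) H {z | t₁ < z.re ∧ 0 ≤ z.im ∧ z.im < r} ∧
      ∀ s : ℝ, t₁ < s → H s = g s := by
  obtain ⟨r, hr, hext⟩ := hg.extend hε hr₀ hcon
  have hmem : ∀ κ > 0, ∀ n : ℕ, (t₁ : ℂ) ∈ rect (t₁ - κ) (t₁ + n * (r / 2) + r) (-κ) r := by
    intro κ hκ n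
    have : 0 ≤ n * (r / 2) := by positivity
    exact (real_mem_rect (by linarith) hr).2 ⟨by linarith, by linarith⟩
  have hag : ∀ κ > 0, κ ≤ r₀ → ∀ (b : ℝ) (G : ℂ → X), (t₁ : ℂ) ∈ rect (t₁ - κ) b (-κ) r →
      LI (RegX hS cov) G (rect (t₁ - κ) b (-κ) r) → G =ᶠ[𝓝 (t₁ : ℂ)] G₀ →
      (∀ s : ℝ, (s : ℂ) ∈ rect (t₁ - κ) b (-κ) r → a < s) ∧
      ∀ s : ℝ, (s : ℂ) ∈ rect (t₁ - κ) b (-κ) r → G s = g s := by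
    intro κ hκ hκr b G hm hGL hGG
    have h1 : ∀ s : ℝ, (s : ℂ) ∈ rect (t₁ - κ) b (-κ) r → a < s := by
      intro s hs
      have := ((real_mem_rect (by linarith) hr).1 hs).1
      linarith
    refine ⟨h1, hg.agree (convex_rect _ _ _ _) hGL h1 hm ?_⟩
    filter_upwards [hGg, Complex.continuous_ofReal.continuousAt.eventually hGG] with s h1 h2
    rw [h2, h1]
  have P : ∀ n : ℕ, ∃ κ, 0 < κ ∧ κ ≤ r₀ ∧ ∃ G : ℂ → X,
      LI (RegX hS cov) G (rect (t₁ - κ) (t₁ + n * (r / 2) + r) (-κ) r) ∧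
        G =ᶠ[𝓝 (t₁ : ℂ)] G₀ := by
    intro n
    induction n with
    | zero =>
      obtain ⟨κ, hκ, hκr, K, hK, hKG⟩ := hext t₁ G₀ ht₁.ge hG hGg hu
      exact ⟨κ, hκ, hκr, K, by simpa using hK, hKG⟩
    | succ n ih =>
      obtain ⟨κ, hκ, hκr, G, hGL, hGG⟩ := ih
      obtain ⟨hVa, hGg'⟩ := hag κ hκ hκr _ G (hmem κ hκ n) hGL hGG
      set t : ℝ := t₁ + n * (r / 2) + r / 2 with ht
      have hn : 0 ≤ n * (r / 2) := by positivity
      have htm : (t : ℂ) ∈ rect (t₁ - κ) (t₁ + n * (r / 2) + r) (-κ) r :=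
        (real_mem_rect (by linarith) hr).2 ⟨by linarith, by linarith⟩
      have hTo : ∀ᶠ s : ℝ in 𝓝 t, (s : ℂ) ∈ rect (t₁ - κ) (t₁ + n * (r / 2) + r) (-κ) r :=
        Complex.continuous_ofReal.continuousAt.eventually ((isOpen_rect _ _ _ _).mem_nhds htm)
      obtain ⟨κ', hκ', hκr', K, hK, hKG⟩ := hext t G (by linarith)
        (hGL.mono (singleton_subset_iff.2 htm)) (hTo.mono hGg')
        (hg.ug_prop (isOpen_rect _ _ _ _) (convex_rect _ _ _ _) hGL hVa hGg' (hmem κ hκ n)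
          (hu.congr hGG) htm)
      have htm' : (t : ℂ) ∈ rect (t - κ') (t + r) (-κ') r :=
        (real_mem_rect (by linarith) hr).2 ⟨by linarith, by linarith⟩
      obtain ⟨H, hH, hHe⟩ := LI.glue (ι := Bool) (flat_RegX (hS := hS) (cov := cov))
        (U := fun i => if i then rect (t₁ - κ) (t₁ + n * (r / 2) + r) (-κ) r else
          rect (t - κ') (t + r) (-κ') r) (G := fun i => if i then G else K)
        (by rintro (_ | _) <;> simp [isOpen_rect]) (by rintro (_ | _) <;> simp [convex_rect])
        (by rintro (_ | _) <;> simp [hGL, hK])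
        (by
          rintro (_ | _) (_ | _) - <;> refine ⟨t, by simp [htm, htm'], ?_⟩ <;>
          simp [hKG, hKG.symm])
      refine ⟨min κ κ', lt_min hκ hκ', (min_le_left _ _).trans hκr, H, hH.mono ?_, ?_⟩
      · intro z hz
        obtain ⟨⟨h1, h2⟩, h3, h4⟩ := hz
        have := min_le_left κ κ'
        have := min_le_right κ κ'
        push_cast at h2
        rw [mem_iUnion]
        rcases lt_or_ge z.re (t₁ + n * (r / 2) + r) with h | h
        · refine ⟨true, ?_⟩
          simp only [if_true]
          exact ⟨⟨by linarith, h⟩, by linarith, h4⟩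
        · refine ⟨false, ?_⟩
          simp only [Bool.false_eq_true, if_false]
          exact ⟨⟨by linarith, by linarith⟩, by linarith, h4⟩
      · have h1 := hHe true
        simp only [if_true] at h1
        exact (h1.eventuallyEq_of_mem ((isOpen_rect _ _ _ _).mem_nhds (hmem κ hκ n))).trans hGG
  choose κ hκ hκr G hGL hGG using P
  obtain ⟨H, hH, hHe⟩ := LI.glue flat_RegX (fun n => isOpen_rect _ _ _ _)
    (fun n => convex_rect _ _ _ _) hGL
    (fun i j _ => ⟨t₁, ⟨hmem _ (hκ i) i, hmem _ (hκ j) j⟩, (hGG i).trans (hGG j).symm⟩)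
  have hcov : ∀ b : ℝ, ∃ n : ℕ, b < t₁ + n * (r / 2) + r := by
    intro b
    obtain ⟨n, hn⟩ := exists_nat_gt ((b - t₁) / (r / 2))
    rw [div_lt_iff₀ (by positivity)] at hn
    exact ⟨n, by linarith⟩
  refine ⟨r, hr, H, hH.mono ?_, fun s hs => ?_⟩
  · rintro z ⟨h1, h2, h3⟩
    obtain ⟨n, hn⟩ := hcov z.re
    have := hκ n
    exact mem_iUnion.2 ⟨n, ⟨by linarith, hn⟩, by linarith, h3⟩
  · obtain ⟨n, hn⟩ := hcov s
    have := hκ n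
    have hs' : (s : ℂ) ∈ rect (t₁ - κ n) (t₁ + n * (r / 2) + r) (-κ n) r :=
      (real_mem_rect (by linarith) hr).2 ⟨by linarith, hn⟩
    rw [hHe n hs']
    exact (hag _ (hκ n) (hκr n) _ (G n) (hmem _ (hκ n) n) (hGL n) (hGG n)).2 s hs'

/-- If the conical points on one side of `g` stay away from `g`, then the projection of `g` is
eventually periodic. -/
theorem Geo.periodic (hg : Geo hS cov g D a) {x : X} {ε r₀ t₁ : ℝ} (hε : 0 < ε) (hr₀ : 0 < r₀)
    (ht₁ : t₁ = a + r₀)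
    (hcon : ∀ t ∈ D, ∀ z ∈ connectedComponentIn (g '' D)ᶜ x, cov.p z ∈ hS.conical →
      ε ≤ dist (g t) z) {G₀ : ℂ → X} (hG : LI (RegX hS cov) G₀ {(t₁ : ℂ)})
    (hGg : ∀ᶠ s : ℝ in 𝓝 t₁, G₀ s = g s) (hu : UG G₀ (connectedComponentIn (g '' D)ᶜ x) t₁) :
    ∃ T > 0, ∀ s : ℝ, t₁ < s → cov.p (g (s + T)) = cov.p (g s) := by
  obtain ⟨r, hr, H, hH, hHg⟩ := hg.half_strip hε hr₀ ht₁ hcon hG hGg hu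
  have hF : LI (Reg hS) (fun z => cov.p (H (rotMotion 1 (t₁ + ((r / 2 : ℝ) : ℂ) * Complex.I)
      (by simp) z))) (hstrip (r / 2)) := by
    refine hH.proj.comp_motion _ ?_
    rintro z ⟨h1, h2, h3⟩
    refine ⟨?_, ?_, ?_⟩ <;> simp <;> linarith
  obtain ⟨T, hT, hper⟩ := strip_periodic (conical_nonempty hS) (by positivity) hF
  have hper' : ∀ z : ℂ, t₁ < z.re → 0 < z.im → z.im < r →
      cov.p (H (z + (T : ℝ))) = cov.p (H z) := by
    intro z h1 h2 h3
    have := hper (z - (t₁ + ((r / 2 : ℝ) : ℂ) * Complex.I)) (by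
      refine ⟨?_, ?_, ?_⟩ <;> simp <;> linarith)
    simp only [rotMotion_apply, one_mul] at this
    convert this using 3 <;> ring
  refine ⟨T, hT, fun s hs => ?_⟩
  have hcont : ∀ u : ℝ, t₁ < u → ContinuousAt (fun z => cov.p (H z)) (u : ℂ) := fun u hu =>
    hH.proj.continuousAt ⟨by simpa using hu, by simp, by simpa using hr⟩
  have c1 : Tendsto (fun z : ℂ => cov.p (H z)) (𝓝[UH] (s : ℂ)) (𝓝 (cov.p (H s))) :=
    (hcont s hs).tendsto.mono_left nhdsWithin_le_nhds
  have c2 : Tendsto (fun z : ℂ => cov.p (H (z + (T : ℝ)))) (𝓝[UH] (s : ℂ))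
      (𝓝 (cov.p (H ((s + T : ℝ) : ℂ)))) := by
    have h1 : Tendsto (fun z : ℂ => z + (T : ℝ)) (𝓝[UH] (s : ℂ)) (𝓝 ((s + T : ℝ) : ℂ)) := by
      rw [Complex.ofReal_add]
      exact (Continuous.tendsto (by fun_prop) _).mono_left nhdsWithin_le_nhds
    exact (hcont (s + T) (by linarith)).tendsto.comp h1
  rw [← hHg s hs, ← hHg (s + T) (by linarith)]
  refine tendsto_nhds_unique c2 (c1.congr' ?_)
  have e1 : ∀ᶠ z : ℂ in 𝓝 (s : ℂ), t₁ < z.re :=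
    Complex.continuous_re.continuousAt.eventually_const_lt (by simpa using hs)
  have e2 : ∀ᶠ z : ℂ in 𝓝 (s : ℂ), z.im < r :=
    Complex.continuous_im.continuousAt.eventually_lt_const (by simpa using hr)
  filter_upwards [e1.filter_mono nhdsWithin_le_nhds, e2.filter_mono nhdsWithin_le_nhds,
    self_mem_nhdsWithin] with z h1 h2 h3
  exact (hper' z h1 h3 h2).symm

end

/-! ### The initial development and the periodicity of the whole geodesic -/

section

variable {S X : Type} [MetricSpace S] [MetricSpace X] {hS : ESCS S} {cov : UnivCover S X}
variable {g : ℝ → X} {D : Set ℝ} {a : ℝ}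

/-- Around a point `g t` there is a chart of the universal cover in which `g` is the real axis. -/
lemma exists_germ (hgeo : ∀ s ∈ D, ∀ t ∈ D, dist (g s) (g t) = |s - t|)
    (hreg : ∀ t ∈ D, cov.p (g t) ∉ hS.conical) {t : ℝ} (ht : Ici t ⊆ D) :
    ∃ ρ > 0, ∃ G : ℂ → X, LI (RegX hS cov) G (ball (t : ℂ) ρ) ∧ IsoOn G (ball (t : ℂ) ρ) ∧
      ball (g t) ρ ⊆ G '' ball (t : ℂ) ρ ∧ ∀ s ∈ D, |s - t| < ρ → G s = g s := by
  have htD : t ∈ D := ht (mem_Ici.2 le_rfl)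
  obtain ⟨ρ₀, K, hK₀⟩ := exists_chart (hS := hS) (q := cov.p (g t)) (hreg t htD)
  obtain ⟨ε, hε, hp⟩ := cov.localIsom (g t)
  set ρ := min ρ₀ ε with hρ
  have hρ0 : 0 < ρ := lt_min hK₀.pos hε
  have hK := hK₀.mono hρ0 (min_le_left _ _)
  have h0 : (0:ℂ) ∈ ball (0:ℂ) ρ := mem_ball_self hρ0
  obtain ⟨L, hL, hL0, hLp⟩ := exists_lift (cov := cov) isOpen_ball (convex_ball _ _) hK.li h0
    (x := g t) hK.zero.symm
  have hgε : ball (g t) ρ ⊆ ball (g t) ε := ball_subset_ball (min_le_right _ _)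
  have hLm : MapsTo L (ball 0 ρ) (ball (g t) ρ) := fun z hz => by
    rw [mem_ball, ← hL0]
    exact (hL.lip (convex_ball _ _) hz h0).trans_lt hz
  have hLi : IsoOn L (ball 0 ρ) := fun u hu v hv => by
    rw [← hp _ (hgε (hLm hu)) _ (hgε (hLm hv)), hLp u hu, hLp v hv, hK.iso u hu v hv]
  have hLs : ∀ y ∈ ball (g t) ρ, ∃ w ∈ ball (0:ℂ) ρ, L w = y := by
    intro y hy
    obtain ⟨w, hw, hwy⟩ := hK.surj (show cov.p y ∈ ball (cov.p (g t)) ρ by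
      rw [mem_ball, hp y (hgε hy) (g t) (mem_ball_self hε)]; exact hy)
    refine ⟨w, hw, ?_⟩
    rw [← dist_eq_zero, ← hp _ (hgε (hLm hw)) _ (hgε hy), hLp w hw, hwy, dist_self]
  have hgs : ∀ s ∈ D, |s - t| < ρ → ∃ w ∈ ball (0:ℂ) ρ, L w = g s := fun s hs hst =>
    hLs _ (by rw [mem_ball, hgeo s hs t htD]; exact hst)
  set b : ℝ := t + ρ / 2 with hb
  have hbD : b ∈ D := ht (mem_Ici.2 (by linarith))
  have hbt : |b - t| = ρ / 2 := by rw [hb, add_sub_cancel_left, abs_of_pos (by positivity)]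
  obtain ⟨B, hB, hLB⟩ := hgs b hbD (by rw [hbt]; linarith)
  have hBn : ‖B‖ = ρ / 2 := by
    rw [← dist_zero_right, ← hLi B hB 0 h0, hLB, hL0, hgeo b hbD t htD, hbt]
  have hρ2 : ((ρ / 2 : ℝ) : ℂ) ≠ 0 := by exact_mod_cast (by positivity : ρ / 2 ≠ 0)
  set α : ℂ := B / ((ρ / 2 : ℝ) : ℂ) with hα
  have hα1 : ‖α‖ = 1 := by
    rw [hα, norm_div, hBn, Complex.norm_real, Real.norm_of_nonneg (by positivity)]
    exact div_self (by positivity)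
  set Φ := rotMotion α (-(α * t)) hα1 with hΦ
  have hΦt : Φ t = 0 := by rw [hΦ, rotMotion_apply]; ring
  have hΦm := motion_mapsTo_ball Φ hΦt ρ
  refine ⟨ρ, hρ0, fun z => L (Φ z), hL.comp_motion Φ hΦm, fun u hu v hv => ?_, fun y hy => ?_,
    fun s hs hst => ?_⟩
  · change dist (L (Φ u)) (L (Φ v)) = _
    rw [hLi _ (hΦm hu) _ (hΦm hv), Φ.dist_eq]
  · obtain ⟨w, hw, hwy⟩ := hLs y hy
    refine ⟨Φ.symm w, ?_, by change L (Φ (Φ.symm w)) = y; rw [Φ.apply_symm_apply, hwy]⟩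
    refine motion_mapsTo_ball Φ.symm ?_ ρ hw
    rw [← hΦt, Φ.symm_apply_apply]
  · obtain ⟨w, hw, hwy⟩ := hgs s hs hst
    have h1 := iso_line_formula (a := t) (b := b) (s := s) (A := 0) (B := B) (w := w)
      (by rw [hb]; linarith) (by
        rw [dist_comm, dist_zero_right, hBn, dist_comm, Real.dist_eq, hbt])
      (by rw [← hLi w hw 0 h0, hwy, hL0, hgeo s hs t htD, Real.dist_eq])
      (by rw [← hLi w hw B hB, hwy, hLB, hgeo s hs b hbD, Real.dist_eq])
    have h2 : Φ s = w := by
      rw [h1, hΦ, rotMotion_apply, hα, show b - t = ρ / 2 by rw [hb]; ring]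
      push_cast
      push_cast at hρ2
      field_simp
      ring
    change L (Φ s) = g s
    rw [h2, hwy]

/-- The component of `x` in the complement of `g` adheres to `g`. -/
lemma exists_adherent (cov : UnivCover S X) (hD : IsClosed D) (hne : D.Nonempty)
    (hgeo : ∀ s ∈ D, ∀ t ∈ D, dist (g s) (g t) = |s - t|) {x : X} (hx : x ∈ (g '' D)ᶜ) :
    ∃ t ∈ D, g t ∈ closure (connectedComponentIn (g '' D)ᶜ x) := by
  have := cov.simplyConnected
  have hC : IsClosed (g '' D) := by
    have hi : Isometry (fun s : D => g s) := Isometry.of_dist_eq fun s t => by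
      rw [hgeo s s.2 t t.2]; rfl
    have : CompleteSpace D := hD.completeSpace_coe
    have h := hi.isClosedEmbedding.isClosed_range
    rwa [image_eq_range]
  obtain ⟨d, hd⟩ := hne
  obtain ⟨γ⟩ : Joined x (g d) := PathConnectedSpace.joined x (g d)
  set A : Set unitInterval := γ ⁻¹' (g '' D) with hA
  have hAc : IsCompact A := (hC.preimage γ.continuous).isCompact
  obtain ⟨s, hsA, hs⟩ := hAc.exists_isLeast ⟨1, by simp only [hA, mem_preimage, γ.target]; exact ⟨d, hd, rfl⟩⟩
  have hs0 : 0 < s := by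
    rw [unitInterval.pos_iff_ne_zero]
    rintro rfl
    rw [hA, mem_preimage, γ.source] at hsA
    exact hx hsA
  have hsub : γ '' Iio s ⊆ connectedComponentIn (g '' D)ᶜ x := by
    refine (isPreconnected_Iio.image γ γ.continuous.continuousOn).subset_connectedComponentIn
      ⟨0, hs0, γ.source⟩ ?_
    rintro _ ⟨u, hu, rfl⟩ h
    exact not_le.2 hu (hs h)
  obtain ⟨t, ht, hts⟩ := hsA
  refine ⟨t, ht, ?_⟩
  rw [hts]
  refine closure_mono hsub (image_closure_subset_closure_image γ.continuous ⟨s, ?_, rfl⟩)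
  rw [closure_Iio' (show (Iio s).Nonempty from ⟨0, hs0⟩)]
  exact mem_Iic.2 le_rfl

/-- Germ of a development of `g` whose upper side lies in the component of `x`. -/
theorem exists_initial_germ (hD : D = univ ∨ D = Ici (0:ℝ))
    (hgeo : ∀ s ∈ D, ∀ t ∈ D, dist (g s) (g t) = |s - t|)
    (hreg : ∀ t ∈ D, cov.p (g t) ∉ hS.conical) {x : X} (hx : x ∈ (g '' D)ᶜ) :
    ∃ a r₀ t₁ : ℝ, 0 < r₀ ∧ t₁ = a + r₀ ∧ Ioi a ⊆ D ∧ ∃ G : ℂ → X,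
      LI (RegX hS cov) G {(t₁ : ℂ)} ∧ (∀ᶠ s : ℝ in 𝓝 t₁, G s = g s) ∧
      UG G (connectedComponentIn (g '' D)ᶜ x) t₁ := by
  have hDc : IsClosed D := by rcases hD with rfl | rfl; exacts [isClosed_univ, isClosed_Ici]
  have h0D : (0:ℝ) ∈ D := by rcases hD with rfl | rfl <;> simp
  have hDi : ∀ t ∈ D, Ici t ⊆ D := by
    rcases hD with rfl | rfl
    · simp
    · exact fun t ht s hs => le_trans (mem_Ici.1 ht) hs
  obtain ⟨t, htD, htc⟩ := exists_adherent cov hDc ⟨0, h0D⟩ hgeo hx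
  obtain ⟨ρ, hρ, G, hG, hGi, hGs, hGg⟩ := exists_germ hgeo hreg (hDi t htD)
  set Ω := connectedComponentIn (g '' D)ᶜ x with hΩ
  have hΩD : ∀ y ∈ Ω, y ∉ g '' D := fun y hy => connectedComponentIn_subset _ _ hy
  have htb : (t : ℂ) ∈ ball (t : ℂ) ρ := mem_ball_self hρ
  have hGt : G t = g t := hGg t htD (by simpa using hρ)
  have hexw : ∀ σ > 0, ∃ w ∈ ball (t : ℂ) ρ, dist w t < σ ∧ G w ∈ Ω := by
    intro σ hσ
    obtain ⟨y, hy, hyd⟩ := Metric.mem_closure_iff.1 htc (min ρ σ) (lt_min hρ hσ)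
    rw [dist_comm] at hyd
    obtain ⟨w, hw, rfl⟩ := hGs (mem_ball.2 (hyd.trans_le (min_le_left _ _)))
    refine ⟨w, hw, ?_, hy⟩
    rw [← hGi w hw _ htb, hGt]
    exact hyd.trans_le (min_le_right _ _)
  have havoid : ∀ z ∈ ball (t : ℂ) ρ, G z ∈ g '' D → ∃ s ∈ D, z = (s : ℂ) := by
    rintro z hz ⟨s, hs, hsz⟩
    have h1 : |s - t| = dist z (t : ℂ) := by
      rw [← hgeo s hs t htD, hsz, ← hGt, hGi z hz _ htb]
    have h2 : |s - t| < ρ := by rw [h1]; exact hz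
    refine ⟨s, hs, hGi.injOn hz ?_ ?_⟩
    · rw [mem_ball, Complex.isometry_ofReal.dist_eq]; exact h2
    · rw [hGg s hs h2, hsz]
  have hwD : ∀ w ∈ ball (t : ℂ) ρ, G w ∈ Ω → ∀ s ∈ D, w ≠ (s : ℂ) := by
    rintro w hw hwΩ s hs rfl
    rw [mem_ball, Complex.isometry_ofReal.dist_eq] at hw
    exact hΩD _ hwΩ (by rw [hGg s hs hw]; exact ⟨s, hs, rfl⟩)
  by_cases hin : ∃ a < t, Ioi a ⊆ D
  · obtain ⟨a, hat, haD⟩ := hin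
    obtain ⟨w, hw, hwa, hwΩ⟩ := hexw (t - a) (by linarith)
    have hev : ∀ᶠ s : ℝ in 𝓝 t, G s = g s := by
      filter_upwards [lt_mem_nhds hat, ball_mem_nhds t hρ] with s h1 h2
      exact hGg s (haD h1) h2
    -- One of the two half-discs is mapped to `Ω`.
    have half : ∀ H : Set ℂ, Convex ℝ H → (∀ z ∈ H, z.im ≠ 0) → w ∈ H →
        MapsTo G (ball (t : ℂ) ρ ∩ H) Ω := by
      intro H hH him hwH z hz
      refine component_subset (B := G '' (ball (t : ℂ) ρ ∩ H))
        ((((convex_ball _ _).inter hH).isPreconnected).image G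
          (hG.continuousOn.mono inter_subset_left)) ?_ ⟨w, ⟨hw, hwH⟩, rfl⟩ hwΩ ⟨z, hz, rfl⟩
      rintro _ ⟨u, hu, rfl⟩ hug
      obtain ⟨s, -, rfl⟩ := havoid u hu.1 hug
      exact him _ hu.2 (by simp)
    have hwi : w.im ≠ 0 := by
      intro h
      have hwr : w = (w.re : ℂ) := Complex.ext (by simp) (by simpa using h)
      refine hwD w hw hwΩ _ (haD ?_) hwr
      rw [hwr, Complex.isometry_ofReal.dist_eq, Real.dist_eq] at hwa
      exact mem_Ioi.2 (by linarith [neg_abs_le (w.re - t)])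
    refine ⟨a, t - a, t, by linarith, by ring, haD, ?_⟩
    rcases lt_or_gt_of_ne hwi with h | h
    · have hm := half {z | z.im < 0} (convex_halfSpace_im_lt 0) (fun z hz => ne_of_lt hz) h
      have hcj : cj (t : ℂ) = t := by rw [cj_apply, Complex.conj_ofReal]
      refine ⟨fun z => G (cj z), hG.comp_motion cj ?_, ?_, ?_⟩
      · rintro _ rfl
        rw [hcj]; exact htb
      · filter_upwards [hev] with s hs
        rw [cj_apply, Complex.conj_ofReal, hs]
      · filter_upwards [mem_nhdsWithin_of_mem_nhds (ball_mem_nhds _ hρ), self_mem_nhdsWithin]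
          with z h1 h2
        refine hm ⟨motion_mapsTo_ball cj hcj ρ h1, ?_⟩
        change (cj z).im < 0
        rw [cj_apply, Complex.conj_im]
        exact neg_lt_zero.2 h2
    · have hm := half UH convex_UH (fun z hz => ne_of_gt hz) h
      refine ⟨G, hG.mono (singleton_subset_iff.2 htb), hev, ?_⟩
      filter_upwards [mem_nhdsWithin_of_mem_nhds (ball_mem_nhds _ hρ), self_mem_nhdsWithin]
          with z h1 h2
      exact hm ⟨h1, h2⟩
  · -- `t` is the origin of a ray, and the disc slit along the ray is mapped to `Ω`.
    have hD0 : D = Ici 0 := by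
      refine hD.resolve_left ?_
      rintro rfl
      exact hin ⟨t - 1, by linarith, subset_univ _⟩
    have ht0 : t = 0 := by
      subst hD0
      by_contra h
      exact hin ⟨0, lt_of_le_of_ne (mem_Ici.1 htD) (Ne.symm h), Ioi_subset_Ici_self⟩
    subst hD0 ht0
    obtain ⟨w, hw, -, hwΩ⟩ := hexw 1 one_pos
    set Q : Set ℂ := {z | z ∈ ball ((0:ℝ) : ℂ) ρ ∧ ¬ (z.im = 0 ∧ 0 ≤ z.re)} with hQ
    have hQb : ((-(ρ / 2) : ℝ) : ℂ) ∈ ball ((0:ℝ) : ℂ) ρ := by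
      rw [mem_ball, Complex.isometry_ofReal.dist_eq, Real.dist_eq, sub_zero, abs_neg,
        abs_of_pos (by positivity)]
      linarith
    have hQs : StarConvex ℝ (((-(ρ / 2) : ℝ)) : ℂ) Q := by
      intro z hz α β hα hβ hαβ
      refine ⟨(convex_ball _ _) hQb hz.1 hα hβ hαβ, ?_⟩
      rintro ⟨h1, h2⟩
      simp at h1 h2
      rcases h1 with rfl | h1
      · have : α = 1 := by linarith
        subst this
        linarith
      · have h3 : z.re < 0 := by
          by_contra h
          exact hz.2 ⟨h1, not_lt.1 h⟩
        rcases hβ.eq_or_lt with rfl | hβ'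
        · have : α = 1 := by linarith
          subst this
          linarith
        · nlinarith [mul_pos hβ' (neg_pos.2 h3), mul_nonneg hα hρ.le]
    have hwQ : w ∈ Q := by
      refine ⟨hw, fun h => hwD w hw hwΩ w.re h.2 (Complex.ext (by simp) (by simpa using h.1))⟩
    have hQm : ((-(ρ / 2) : ℝ) : ℂ) ∈ Q := by
      refine ⟨hQb, fun h => ?_⟩
      have := h.2
      rw [Complex.ofReal_re] at this
      linarith
    have hm : MapsTo G Q Ω := by
      intro z hz
      refine component_subset (B := G '' Q)
        ((hQs.isPathConnected hQm).isConnected.isPreconnected.image G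
          (hG.continuousOn.mono fun u hu => hu.1)) ?_ ⟨w, hwQ, rfl⟩ hwΩ ⟨z, hz, rfl⟩
      rintro _ ⟨u, hu, rfl⟩ hug
      obtain ⟨s, hs, rfl⟩ := havoid u hu.1 hug
      exact hu.2 ⟨by simp, by simpa using hs⟩
    have hρ2 : ((ρ / 2 : ℝ) : ℂ) ∈ ball ((0:ℝ) : ℂ) ρ := by
      rw [mem_ball, Complex.isometry_ofReal.dist_eq, Real.dist_eq, sub_zero,
        abs_of_pos (by positivity)]
      linarith
    refine ⟨0, ρ / 2, ρ / 2, by positivity, by ring, Ioi_subset_Ici_self, G,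
      hG.mono (singleton_subset_iff.2 hρ2), ?_, ?_⟩
    · filter_upwards [Ioo_mem_nhds (show 0 < ρ / 2 by positivity) (show ρ / 2 < ρ by linarith)]
        with s hs
      exact hGg s hs.1.le (by rw [sub_zero, abs_of_pos hs.1]; exact hs.2)
    · filter_upwards [mem_nhdsWithin_of_mem_nhds (isOpen_ball.mem_nhds hρ2), self_mem_nhdsWithin]
          with z h1 h2
      exact hm ⟨h1, fun h => (ne_of_gt h2) h.1⟩

/-- An eventually periodic projection is periodic on the whole domain of the geodesic. -/
lemma periodic_of_eventually (hDi : ∀ t ∈ D, Ici t ⊆ D)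
    (hgeo : ∀ s ∈ D, ∀ t ∈ D, dist (g s) (g t) = |s - t|)
    (hreg : ∀ t ∈ D, cov.p (g t) ∉ hS.conical) {T t₁ : ℝ} (hT : 0 < T)
    (hper : ∀ s, t₁ < s → cov.p (g (s + T)) = cov.p (g s)) :
    ∀ t ∈ D, cov.p (g (t + T)) = cov.p (g t) := by
  intro t ht
  have hsub : Ioi t ⊆ D := Ioi_subset_Ici_self.trans (hDi t ht)
  have hg : Geo hS cov g D t := ⟨hsub, hgeo, hreg⟩
  have h1 : LI (Reg hS) (fun s => cov.p (g s)) (Ioi t) := hg.li.proj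
  have h2 : LI (Reg hS) ((fun s => cov.p (g s)) ∘ fun s => s + T) (Ioi t) :=
    h1.comp_isometry (IsometryEquiv.addRight T).isometry fun s hs => by
      have : t < s := hs
      exact mem_Ioi.2 (by change t < s + T; linarith)
  have he := LI.uniq rigid_real flat_Reg isPreconnected_Ioi h2 h1 (z := max t t₁ + 1)
    (mem_Ioi.2 (by linarith [le_max_left t t₁])) (by
      filter_upwards [lt_mem_nhds (show t₁ < max t t₁ + 1 by linarith [le_max_right t t₁])]
        with s hs using hper s hs)
  have hc : ContinuousOn g D := by
    have : LipschitzOnWith 1 g D := LipschitzOnWith.of_dist_le_mul fun s hs u hu => by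
      rw [hgeo s hs u hu, Real.dist_eq]; simp
    exact this.continuousOn
  have hpc := cov.covering.continuous
  have c1 : Tendsto (fun s => cov.p (g s)) (𝓝[>] t) (𝓝 (cov.p (g t))) :=
    (hpc.tendsto _).comp ((hc t ht).mono hsub)
  have c2 : Tendsto (fun s => cov.p (g (s + T))) (𝓝[>] t) (𝓝 (cov.p (g (t + T)))) := by
    refine (hpc.tendsto _).comp ((hc (t + T) (hDi t ht (mem_Ici.2 (by linarith)))).tendsto.comp ?_)
    refine tendsto_nhdsWithin_iff.2 ⟨(Continuous.tendsto (by fun_prop) _).mono_left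
      nhdsWithin_le_nhds, ?_⟩
    filter_upwards [self_mem_nhdsWithin] with s hs
    exact hDi t ht (mem_Ici.2 (by linarith [mem_Ioi.1 hs]))
  exact tendsto_nhds_unique c2 (c1.congr' (by
    filter_upwards [self_mem_nhdsWithin] with s hs using (he hs).symm))

end

/-- Let `g` be a geodesic line (`D = ℝ`) or a geodesic ray
(`D = [0, ∞)`) in the universal cover `S̃` of an e.s.c.s. `S` which contains no conical
point and projects to a non-closed geodesic of `S`. Then for each of the two sides of
`g` (i.e. for every connected component of the complement of the image of `g`), the
distance between the image of `g` and the conical points on that side is `0`: there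
are points of the image and conical points in that component at arbitrarily small
distance. -/
theorem conical_points_approach_nonclosed_geodesic (S X : Type)
    [MetricSpace S] [MetricSpace X]
    (hS : ESCS S) (cov : UnivCover S X) (g : ℝ → X) (D : Set ℝ)
    (hD : D = Set.univ ∨ D = Set.Ici (0:ℝ))
    (hgeo : ∀ s ∈ D, ∀ t ∈ D, dist (g s) (g t) = |s - t|)
    (hnocone : ∀ t ∈ D, cov.p (g t) ∉ hS.conical)
    (hnonclosed : ¬ ∃ T > (0:ℝ), ∀ t ∈ D, cov.p (g (t + T)) = cov.p (g t)) :
    ∀ x ∈ (g '' D)ᶜ, ∀ ε > (0:ℝ),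
      ∃ y ∈ g '' D, ∃ z ∈ connectedComponentIn ((g '' D)ᶜ) x,
        cov.p z ∈ hS.conical ∧ dist y z < ε := by
  intro x hx ε hε
  by_contra! hcon
  obtain ⟨a, r₀, t₁, hr₀, ht₁, haD, G, hG, hGg, hu⟩ := exists_initial_germ hD hgeo hnocone hx
  have hg : Geo hS cov g D a := ⟨haD, hgeo, hnocone⟩
  obtain ⟨T, hT, hper⟩ := hg.periodic hε hr₀ ht₁
    (fun t ht z hz hzc => hcon (g t) ⟨t, ht, rfl⟩ z hz hzc) hG hGg hu
  refine hnonclosed ⟨T, hT, periodic_of_eventually ?_ hgeo hnocone hT hper⟩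
  rcases hD with rfl | rfl
  · simp
  · exact fun t ht s hs => le_trans (mem_Ici.1 ht) hs

end ESCSPaper
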